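/- Let i ≠ j in I and let β be a formal nonnegative combination of the α_l whose coefficient of α_i is at least 1. Then for every left R(β)-module M there are isomorphisms E_i F_j M ≅ F_j E_i M and E_i F̄_j M ≅ F̄_j E_i M of R(β+α_j−α_i)-modules, natural in M; on the left-hand sides F_j (resp. F̄_j) is applied over β followed by E_i over β+α_j−α_i, and on the right-hand sides E_i is applied over β−α_i followed by F_j (resp. F̄_j) over β−α_i. -/

import Mathlib

/- ## Scaffold: Khovanov–Lauda–Rouquier algebras -/

open scoped TensorProduct

/-- A symmetrizable Cartan datum together with the structure constants of the
family of polynomials `Q`. -/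
structure CartanDatum (k : Type) [Field k] (I : Type) [Fintype I] [DecidableEq I] : Type where
  a : I → I → ℤ
  d : I → ℤ
  t : I → I → ℕ → ℕ → k
  a_diag : ∀ i, a i i = 2
  a_nonpos : ∀ i j, i ≠ j → a i j ≤ 0
  a_zero_iff : ∀ i j, a i j = 0 ↔ a j i = 0
  d_pos : ∀ i, 0 < d i
  symmetrize : ∀ i j, d i * a i j = d j * a j i
  t_symm : ∀ i j p q, t i j p q = t j i q p
  t_lead : ∀ i j, i ≠ j → t i j (-(a i j)).toNat 0 ≠ 0

namespace KLR

variable {k : Type} [Field k] {I : Type} [Fintype I] [DecidableEq I]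

/-- The symmetric bilinear form `(α_i, α_j) = d_i a_{ij}`. -/
def B (C : CartanDatum k I) (i j : I) : ℤ := C.d i * C.a i j

/-- Generators of the KLR algebra `R(n)`. -/
inductive Gen (I : Type) (n : ℕ) : Type
  | e (ν : Fin n → I) : Gen I n
  | x (a : Fin n) : Gen I n
  | tau (l : ℕ) (h : l + 1 < n) : Gen I n

variable (k) in
/-- The free algebra on the generators. -/
abbrev FA (I : Type) (n : ℕ) : Type := FreeAlgebra k (Gen I n)

variable (k) in
def ge {n : ℕ} (ν : Fin n → I) : FA k I n := FreeAlgebra.ι k (Gen.e ν)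

variable (k) in
def gx {n : ℕ} (a : Fin n) : FA k I n := FreeAlgebra.ι k (Gen.x a)

variable (k) in
def gt {n : ℕ} (l : ℕ) (h : l + 1 < n) : FA k I n := FreeAlgebra.ι k (Gen.tau l h)

/-- The polynomial `Q_{ij}(u,v)` evaluated on two elements of an algebra. -/
def Qel (C : CartanDatum k I) {A : Type} [Ring A] [Algebra k A] (i j : I) (u v : A) : A :=
  if i = j then 0 else
    ∑ p ∈ Finset.range ((-(C.a i j)).toNat + 1), ∑ q ∈ Finset.range ((-(C.a j i)).toNat + 1),
      if C.d i * (p : ℤ) + C.d j * (q : ℤ) = -(C.d i * C.a i j) then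
        C.t i j p q • (u ^ p * v ^ q) else 0

/-- The divided difference `(Q_{ij}(u,v) - Q_{ij}(w,v))/(u - w)` evaluated on elements. -/
def Qdiff (C : CartanDatum k I) {A : Type} [Ring A] [Algebra k A] (i j : I) (u v w : A) : A :=
  if i = j then 0 else
    ∑ p ∈ Finset.range ((-(C.a i j)).toNat + 1), ∑ q ∈ Finset.range ((-(C.a j i)).toNat + 1),
      if C.d i * (p : ℤ) + C.d j * (q : ℤ) = -(C.d i * C.a i j) then
        C.t i j p q • ((∑ c ∈ Finset.range p, u ^ c * w ^ (p - 1 - c)) * v ^ q) else 0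

/-- The defining relations of the KLR algebra `R(n)`. -/
inductive Rel (C : CartanDatum k I) (n : ℕ) : FA k I n → FA k I n → Prop
  | ee : ∀ ν ν' : Fin n → I, Rel C n (ge k ν * ge k ν') (if ν = ν' then ge k ν else 0)
  | esum : Rel C n (∑ ν : Fin n → I, ge k ν) 1
  | xx : ∀ a b : Fin n, Rel C n (gx k a * gx k b) (gx k b * gx k a)
  | xe : ∀ (a : Fin n) (ν : Fin n → I), Rel C n (gx k a * ge k ν) (ge k ν * gx k a)
  | taue : ∀ (l : ℕ) (h : l + 1 < n) (ν : Fin n → I),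
      Rel C n (gt k l h * ge k ν)
        (ge k (ν ∘ Equiv.swap (⟨l, Nat.lt_of_succ_lt h⟩ : Fin n) ⟨l + 1, h⟩) * gt k l h)
  | tautau : ∀ (l : ℕ) (h : l + 1 < n) (l' : ℕ) (h' : l' + 1 < n),
      (l + 1 < l' ∨ l' + 1 < l) →
      Rel C n (gt k l h * gt k l' h') (gt k l' h' * gt k l h)
  | tausq : ∀ (l : ℕ) (h : l + 1 < n) (ν : Fin n → I),
      Rel C n (gt k l h ^ 2 * ge k ν)
        (Qel C (ν ⟨l, Nat.lt_of_succ_lt h⟩) (ν ⟨l + 1, h⟩)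
          (gx k ⟨l, Nat.lt_of_succ_lt h⟩) (gx k ⟨l + 1, h⟩) * ge k ν)
  | taux : ∀ (l : ℕ) (h : l + 1 < n) (m : Fin n) (ν : Fin n → I),
      Rel C n ((gt k l h * gx k m
          - gx k (Equiv.swap (⟨l, Nat.lt_of_succ_lt h⟩ : Fin n) ⟨l + 1, h⟩ m) * gt k l h) * ge k ν)
        (if m = ⟨l, Nat.lt_of_succ_lt h⟩ ∧ ν ⟨l, Nat.lt_of_succ_lt h⟩ = ν ⟨l + 1, h⟩ then
            -(ge k ν)
          else if m = (⟨l + 1, h⟩ : Fin n) ∧ ν ⟨l, Nat.lt_of_succ_lt h⟩ = ν ⟨l + 1, h⟩ then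
            ge k ν
          else 0)
  | braid : ∀ (l : ℕ) (h2 : l + 2 < n) (ν : Fin n → I),
      Rel C n ((gt k (l + 1) h2 * gt k l (Nat.lt_of_succ_lt h2) * gt k (l + 1) h2
          - gt k l (Nat.lt_of_succ_lt h2) * gt k (l + 1) h2 * gt k l (Nat.lt_of_succ_lt h2))
          * ge k ν)
        (if ν ⟨l, Nat.lt_of_succ_lt (Nat.lt_of_succ_lt h2)⟩ = ν ⟨l + 2, h2⟩ then
            Qdiff C (ν ⟨l, Nat.lt_of_succ_lt (Nat.lt_of_succ_lt h2)⟩)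
              (ν ⟨l + 1, Nat.lt_of_succ_lt h2⟩)
              (gx k ⟨l, Nat.lt_of_succ_lt (Nat.lt_of_succ_lt h2)⟩)
              (gx k ⟨l + 1, Nat.lt_of_succ_lt h2⟩)
              (gx k ⟨l + 2, h2⟩) * ge k ν
          else 0)

/-- The Khovanov–Lauda–Rouquier algebra `R(n)`. -/
abbrev Alg (C : CartanDatum k I) (n : ℕ) : Type := RingQuot (Rel C n)

variable (C : CartanDatum k I)

/-- The generator `e(ν)` of `R(n)`. -/
noncomputable def Ee {n : ℕ} (ν : Fin n → I) : Alg C n :=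
  RingQuot.mkAlgHom k (Rel C n) (ge k ν)

/-- The generator `x_a` of `R(n)`. -/
noncomputable def Xx {n : ℕ} (a : Fin n) : Alg C n :=
  RingQuot.mkAlgHom k (Rel C n) (gx k a)

/-- The generator `τ_l` of `R(n)`. -/
noncomputable def Tt {n : ℕ} (l : ℕ) (h : l + 1 < n) : Alg C n :=
  RingQuot.mkAlgHom k (Rel C n) (gt k l h)

variable (I) in
/-- The height of `β = Σ k_i α_i`. -/
def ht (β : I → ℕ) : ℕ := ∑ i, β i

/-- The content of a sequence `ν`. -/
def content {m : ℕ} (ν : Fin m → I) : I → ℕ :=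
  fun i => (Finset.univ.filter (fun a => ν a = i)).card

/-- The set `I^β` of sequences of length `m` with content `β`. -/
def seqs (β : I → ℕ) (m : ℕ) : Finset (Fin m → I) :=
  Finset.univ.filter (fun ν => content ν = β)

/-- The central idempotent `e(β)` in `R(n)`. -/
noncomputable def eIdem (n : ℕ) (β : I → ℕ) : Alg C n := ∑ ν ∈ seqs β n, Ee C ν

/-- `β + α_i`. -/
def addA (β : I → ℕ) (i : I) : I → ℕ := fun j => β j + if j = i then 1 else 0

/-- The idempotent `e(β, α_i)` of `R(n+1)` (sum over `ν ∈ I^{β+α_i}` with `ν_{n+1} = i`). -/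
noncomputable def eR (n : ℕ) (β : I → ℕ) (i : I) : Alg C (n + 1) :=
  ∑ ν ∈ (seqs (addA β i) (n + 1)).filter (fun ν => ν (Fin.last n) = i), Ee C ν

/-- The idempotent `e(α_i, β)` of `R(n+1)` (sum over `ν ∈ I^{β+α_i}` with `ν_1 = i`). -/
noncomputable def eL (n : ℕ) (β : I → ℕ) (i : I) : Alg C (n + 1) :=
  ∑ ν ∈ (seqs (addA β i) (n + 1)).filter (fun ν => ν 0 = i), Ee C ν

/-- The idempotent `e(β - α_i, α_i)` of `R(n)`: sum over `ν ∈ I^β` with last entry `i`;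
this is `0` when the coefficient of `α_i` in `β` is `0` or `n = 0`. -/
noncomputable def eD (n : ℕ) (β : I → ℕ) (i : I) : Alg C n :=
  ∑ ν ∈ (seqs β n).filter (fun ν => if h : 0 < n then ν ⟨n - 1, Nat.sub_lt h one_pos⟩ = i
      else False), Ee C ν

/-- The relations defining `R(β) = R(n)e(β)` (a unital ring with unit the image of
`e(β)`): the KLR relations together with the relation `e(β) = 1`. -/
inductive URel (n : ℕ) (β : I → ℕ) : FA k I n → FA k I n → Prop
  | base : ∀ {x y : FA k I n}, Rel C n x y → URel n β x y
  | unit : URel n β (∑ ν ∈ seqs β n, ge k ν) 1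

/-- The algebra `R(β)`, realized as the quotient of `R(n)` identifying `e(β)` with `1`. -/
abbrev bAlg (n : ℕ) (β : I → ℕ) : Type := RingQuot (URel C n β)

/-- The canonical projection `R(n) → R(β)`. -/
noncomputable def toB {n : ℕ} {β : I → ℕ} : Alg C n →ₐ[k] bAlg C n β :=
  RingQuot.liftAlgHom (S := k)
    ⟨RingQuot.mkAlgHom k (URel C n β),
      fun _ _ h => RingQuot.mkAlgHom_rel k (URel.base h)⟩

/-- The element `a^Λ(x_1)` at the level of the free algebra. -/
noncomputable def aLamF (Λ : I → ℕ) (n : ℕ) (β : I → ℕ) : FA k I n :=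
  if h : 0 < n then
    ∑ ν ∈ seqs β n, (gx k (⟨0, h⟩ : Fin n)) ^ (Λ (ν ⟨0, h⟩)) * ge k ν
  else 0

/-- The element `a^Λ(x_1)` of `R(β)`. -/
noncomputable def aLam (Λ : I → ℕ) (n : ℕ) (β : I → ℕ) : bAlg C n β :=
  RingQuot.mkAlgHom k (URel C n β) (aLamF Λ n β)

/-- The relations defining the cyclotomic quotient `R^Λ(β)`. -/
inductive CRel (Λ : I → ℕ) (n : ℕ) (β : I → ℕ) : FA k I n → FA k I n → Prop
  | base : ∀ {x y : FA k I n}, Rel C n x y → CRel Λ n β x y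
  | unit : CRel Λ n β (∑ ν ∈ seqs β n, ge k ν) 1
  | cyc : CRel Λ n β (aLamF Λ n β) 0

/-- The cyclotomic KLR algebra `R^Λ(β)`. -/
abbrev cAlg (Λ : I → ℕ) (n : ℕ) (β : I → ℕ) : Type := RingQuot (CRel C Λ n β)

/-- The canonical projection `R(β) → R^Λ(β)`. -/
noncomputable def toC {Λ : I → ℕ} {n : ℕ} {β : I → ℕ} : bAlg C n β →ₐ[k] cAlg C Λ n β :=
  RingQuot.liftAlgHom (S := k)
    ⟨RingQuot.mkAlgHom k (CRel C Λ n β),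
      fun _ _ h => by
        cases h with
        | base hb => exact RingQuot.mkAlgHom_rel k (CRel.base hb)
        | unit => exact RingQuot.mkAlgHom_rel k CRel.unit⟩

/-- The canonical projection `R(n) → R^Λ(β)`. -/
noncomputable def toCB (Λ : I → ℕ) {n : ℕ} {β : I → ℕ} : Alg C n →ₐ[k] cAlg C Λ n β :=
  (toC C).comp (toB C)

end KLR
namespace KLR

variable {k : Type} [Field k] {I : Type} [Fintype I] [DecidableEq I] (C : CartanDatum k I)

section Homs

/-- Characterization of the non-unital algebra homomorphism `R(n) → R(n+1)` adding `i`
on the right: `e(ν) ↦ e(ν∗(i))`, `x_a ↦ x_a e(…,α_i)`, `τ_l ↦ τ_l e(…,α_i)`,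
where the relevant idempotent is supplied as `e`. -/
def IsUpR {n : ℕ} (i : I) (e : Alg C (n + 1)) (φ : Alg C n →ₙₐ[k] Alg C (n + 1)) : Prop :=
  (∀ ν : Fin n → I, φ (Ee C ν) = Ee C (Fin.snoc ν i)) ∧
  (∀ a : Fin n, φ (Xx C a) = Xx C a.castSucc * e) ∧
  (∀ (l : ℕ) (h : l + 1 < n), φ (Tt C l h) = Tt C l (Nat.lt_succ_of_lt h) * e)

/-- Characterization of the non-unital algebra homomorphism `R(n) → R(n+1)` adding `i`
on the left: `e(ν) ↦ e((i)∗ν)`, `x_a ↦ x_{a+1} e(α_i,…)`, `τ_l ↦ τ_{l+1} e(α_i,…)`. -/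
def IsUpL {n : ℕ} (i : I) (e : Alg C (n + 1)) (φ : Alg C n →ₙₐ[k] Alg C (n + 1)) : Prop :=
  (∀ ν : Fin n → I, φ (Ee C ν) = Ee C (Fin.cons i ν)) ∧
  (∀ a : Fin n, φ (Xx C a) = Xx C a.succ * e) ∧
  (∀ (l : ℕ) (h : l + 1 < n), φ (Tt C l h) = Tt C (l + 1) (Nat.succ_lt_succ h) * e)

/-- Characterization of the non-unital homomorphism `R(β) → R(β+α_i)` (right version). -/
def IsUpRb {n : ℕ} {β γ' : I → ℕ} (i : I)
    (φ : bAlg C n β →ₙₐ[k] bAlg C (n + 1) γ') : Prop :=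
  (∀ ν : Fin n → I, φ (toB C (Ee C ν)) = toB C (Ee C (Fin.snoc ν i))) ∧
  (∀ a : Fin n, φ (toB C (Xx C a)) = toB C (Xx C a.castSucc * eR C n β i)) ∧
  (∀ (l : ℕ) (h : l + 1 < n),
    φ (toB C (Tt C l h)) = toB C (Tt C l (Nat.lt_succ_of_lt h) * eR C n β i))

/-- Characterization of the non-unital homomorphism `R(β) → R(β+α_i)` (left version). -/
def IsUpLb {n : ℕ} {β γ' : I → ℕ} (i : I)
    (φ : bAlg C n β →ₙₐ[k] bAlg C (n + 1) γ') : Prop :=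
  (∀ ν : Fin n → I, φ (toB C (Ee C ν)) = toB C (Ee C (Fin.cons i ν))) ∧
  (∀ a : Fin n, φ (toB C (Xx C a)) = toB C (Xx C a.succ * eL C n β i)) ∧
  (∀ (l : ℕ) (h : l + 1 < n),
    φ (toB C (Tt C l h)) = toB C (Tt C (l + 1) (Nat.succ_lt_succ h) * eL C n β i))

/-- Characterization of the non-unital homomorphism `R^Λ(β) → R^Λ(β+α_i)` (right version). -/
def IsUpRc (Λ : I → ℕ) {n : ℕ} {β γ' : I → ℕ} (i : I)
    (φ : cAlg C Λ n β →ₙₐ[k] cAlg C Λ (n + 1) γ') : Prop :=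
  (∀ ν : Fin n → I, φ (toCB C Λ (Ee C ν)) = toCB C Λ (Ee C (Fin.snoc ν i))) ∧
  (∀ a : Fin n, φ (toCB C Λ (Xx C a)) = toCB C Λ (Xx C a.castSucc * eR C n β i)) ∧
  (∀ (l : ℕ) (h : l + 1 < n),
    φ (toCB C Λ (Tt C l h)) = toCB C Λ (Tt C l (Nat.lt_succ_of_lt h) * eR C n β i))

end Homs

section Tensor

open scoped TensorProduct

variable (S B M : Type) [Ring S] [Algebra k S] [Ring B] [Algebra k B]
  [AddCommGroup M] [Module k M] [Module S M] [IsScalarTower k S M]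

variable (k) in
/-- The relation submodule defining the balanced tensor product `B ⊗_S M` where `S`
acts on `B` on the right through the (non-unital) homomorphism `φ : S → B`. -/
def TRel (φ : S →ₙₐ[k] B) : Submodule B (B ⊗[k] M) :=
  Submodule.span B {z | ∃ (b : B) (r : S) (m : M), z = (b * φ r) ⊗ₜ[k] m - b ⊗ₜ[k] (r • m)}

variable (k) in
/-- The balanced tensor product `B ⊗_S M` (over the homomorphism `φ : S → B`). -/
abbrev OT (φ : S →ₙₐ[k] B) : Type := (B ⊗[k] M) ⧸ TRel k S B M φ

variable (k) in
/-- The canonical projection onto the balanced tensor product. -/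
def OTmk (φ : S →ₙₐ[k] B) (z : B ⊗[k] M) : OT k S B M φ := Submodule.Quotient.mk z

end Tensor

section ESub

variable (A : Type) [Ring A] [Algebra k A] (N : Type) [AddCommGroup N] [Module k N]
  [Module A N] [IsScalarTower k A N]

variable (k) in
/-- Multiplication by `e` as a `k`-linear endomorphism of an `A`-module. -/
def eMap (e : A) : N →ₗ[k] N where
  toFun x := e • x
  map_add' x y := smul_add e x y
  map_smul' c x := by
    simp only [RingHom.id_apply]
    rw [← algebraMap_smul A c x, ← mul_smul, ← Algebra.commutes, mul_smul, algebraMap_smul]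

variable (k) in
/-- The `k`-submodule `eN` of an `A`-module `N`. -/
def eSub (e : A) : Submodule k N := LinearMap.range (eMap k A N e)

end ESub

section Grading

variable {A M : Type}

variable (k) in
/-- `𝒜` is an algebra grading of `A`. -/
def IsAlgGrading [Ring A] [Algebra k A] (𝒜 : ℤ → Submodule k A) : Prop :=
  (1 : A) ∈ 𝒜 0 ∧ (∀ {c₁ c₂ : ℤ} {a b : A}, a ∈ 𝒜 c₁ → b ∈ 𝒜 c₂ → a * b ∈ 𝒜 (c₁ + c₂)) ∧
    DirectSum.IsInternal 𝒜

variable (k) in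
/-- `gr` is a grading of the `A`-module `M` compatible with the algebra grading `𝒜`. -/
def IsModGrading [Ring A] [Algebra k A] [AddCommGroup M] [Module k M] [Module A M]
    (𝒜 : ℤ → Submodule k A) (gr : ℤ → Submodule k M) : Prop :=
  DirectSum.IsInternal gr ∧
    ∀ {c m : ℤ} {a : A} {x : M}, a ∈ 𝒜 c → x ∈ gr m → a • x ∈ gr (c + m)

end Grading

section KLRGrading

/-- The canonical grading property for `R(n)`-type quotients: images of `e(ν)` have degree 0,
`x_a e(ν)` has degree `(α_{ν_a}, α_{ν_a})`, and `τ_l e(ν)` has degree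
`-(α_{ν_l}, α_{ν_{l+1}})`.  Here `p : R(n) → A` is the canonical projection onto the
quotient under consideration. -/
def IsKLRGrading {n : ℕ} {A : Type} [Ring A] [Algebra k A] (p : Alg C n →ₐ[k] A)
    (𝒜 : ℤ → Submodule k A) : Prop :=
  IsAlgGrading k 𝒜 ∧
  (∀ ν : Fin n → I, p (Ee C ν) ∈ 𝒜 0) ∧
  (∀ (a : Fin n) (ν : Fin n → I), p (Xx C a * Ee C ν) ∈ 𝒜 (B C (ν a) (ν a))) ∧
  (∀ (l : ℕ) (h : l + 1 < n) (ν : Fin n → I),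
    p (Tt C l h * Ee C ν) ∈ 𝒜 (-(B C (ν ⟨l, Nat.lt_of_succ_lt h⟩) (ν ⟨l + 1, h⟩))))

end KLRGrading

end KLR
namespace KLR

open scoped TensorProduct

variable {k : Type} [Field k] {I : Type} [Fintype I] [DecidableEq I] (C : CartanDatum k I)

section IndGrading

variable (S B M : Type) [Ring S] [Algebra k S] [Ring B] [Algebra k B]
  [AddCommGroup M] [Module k M] [Module S M] [IsScalarTower k S M]

variable (k) in
/-- The induced grading on the balanced tensor product `B ⊗_S M`. -/
def otGr (φ : S →ₙₐ[k] B) (𝒜 : ℤ → Submodule k B) (gr : ℤ → Submodule k M)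
    (c : ℤ) : Submodule k (OT k S B M φ) :=
  Submodule.span k {z | ∃ (c₁ c₂ : ℤ) (b : B) (m : M),
    c₁ + c₂ = c ∧ b ∈ 𝒜 c₁ ∧ m ∈ gr c₂ ∧ z = OTmk k S B M φ (b ⊗ₜ[k] m)}

end IndGrading

section ESubGrading

variable (A N : Type) [Ring A] [Algebra k A] [AddCommGroup N] [Module k N]
  [Module A N] [IsScalarTower k A N]

variable (k) in
/-- The induced grading on the submodule `eN ⊆ N`. -/
def eSubGr (e : A) (gr : ℤ → Submodule k N) (c : ℤ) : Submodule k ↥(eSub k A N e) :=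
  (gr c).comap (eSub k A N e).subtype

end ESubGrading

section Instances

variable (n : ℕ) (β : I → ℕ) (Λ : I → ℕ)

noncomputable instance : Module (bAlg C n β) (cAlg C Λ n β) :=
  Module.compHom _ (toC C (Λ := Λ) (n := n) (β := β)).toRingHom

instance : IsScalarTower k (bAlg C n β) (cAlg C Λ n β) := by
  constructor
  intro c s m
  show (toC C (c • s)) * m = c • (toC C s * m)
  rw [map_smul, Algebra.smul_mul_assoc]

end Instances


end KLR
namespace KLR

open scoped TensorProduct

variable {k : Type} [Field k] {I : Type} [Fintype I] [DecidableEq I] (C : CartanDatum k I)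

/-- `⟨h_i, β⟩ = Σ_j k_j a_{ij}`. -/
def pairH (i : I) (β : I → ℕ) : ℤ := ∑ j, (β j : ℤ) * C.a i j

/-- `(α_i, β) = Σ_j k_j (α_i, α_j)`. -/
def pairB (i : I) (β : I → ℕ) : ℤ := ∑ j, (β j : ℤ) * B C i j

/-- The ordered product `τ_1 τ_2 ⋯ τ_n` in `R(β+α_i)`-type quotients. -/
noncomputable def tauProd (n : ℕ) (γ : I → ℕ) : bAlg C (n + 1) γ :=
  (List.ofFn (fun l : Fin n => toB C (Tt C l.val (Nat.succ_lt_succ l.isLt)))).prod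

/-- The right ideal `Ae` as a `k`-submodule. -/
noncomputable def rId {A : Type} [Ring A] [Algebra k A] (e : A) : Submodule k A :=
  LinearMap.range (LinearMap.mulRight k e)

/-- The left ideal `eA` as a `k`-submodule. -/
noncomputable def lId {A : Type} [Ring A] [Algebra k A] (e : A) : Submodule k A :=
  LinearMap.range (LinearMap.mulLeft k e)

variable (k) in
/-- Characterization of the module structure on `eN` over `S'` acting through
the (non-unital) homomorphism `φ : S' → A`. -/
def IsEAction {A N S' : Type} [Ring A] [Algebra k A] [AddCommGroup N] [Module k N]
    [Module A N] [IsScalarTower k A N] [Ring S'] [Algebra k S']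
    (e : A) (φ : S' →ₙₐ[k] A) (inst : Module S' ↥(eSub k A N e)) : Prop :=
  letI := inst
  ∀ (r : S') (x : ↥(eSub k A N e)), ((r • x : ↥(eSub k A N e)) : N) = φ r • (x : N)

end KLR

namespace KLR

variable {k : Type} [Field k] {I : Type} [Fintype I] [DecidableEq I] (C : CartanDatum k I)

/-- The image of `e(β,α_i)` in `R(β+α_i)`. -/
noncomputable def eRb (n : ℕ) (β : I → ℕ) (i : I) : bAlg C (n + 1) (addA β i) :=
  toB C (eR C n β i)

/-- The image of `e(α_i,β)` in `R(β+α_i)`. -/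
noncomputable def eLb (n : ℕ) (β : I → ℕ) (i : I) : bAlg C (n + 1) (addA β i) :=
  toB C (eL C n β i)

/-- The image of `e(β-α_i,α_i)` in `R(β)`. -/
noncomputable def eDb (n : ℕ) (β : I → ℕ) (i : I) : bAlg C n β :=
  toB C (eD C n β i)

/-- The image of `e(β,α_i)` in `R^Λ(β+α_i)`. -/
noncomputable def eRc (Λ : I → ℕ) (n : ℕ) (β : I → ℕ) (i : I) :
    cAlg C Λ (n + 1) (addA β i) :=
  toCB C Λ (eR C n β i)

/-- The image of `e(β-α_i,α_i)` in `R^Λ(β)`. -/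
noncomputable def eDc (Λ : I → ℕ) (n : ℕ) (β : I → ℕ) (i : I) : cAlg C Λ n β :=
  toCB C Λ (eD C n β i)

end KLR

namespace KLR

variable {k : Type} [Field k] {I : Type} [Fintype I] [DecidableEq I]

variable (k) in
/-- Bundled data of the canonical module structure on `eN` over `S'`, acting through
the non-unital homomorphism `φ : S' → A`, together with its scalar-tower property. -/
structure EData {A S' : Type} (N : Type) [Ring A] [Algebra k A] [AddCommGroup N]
    [Module k N] [Module A N] [IsScalarTower k A N] [Ring S'] [Algebra k S']
    (e : A) (φ : S' →ₙₐ[k] A) : Type where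
  inst : Module S' ↥(eSub k A N e)
  compat : IsEAction k e φ inst
  tower : letI := inst; IsScalarTower k S' ↥(eSub k A N e)

end KLR

namespace KLR
/-- `β - α_i` (truncated subtraction). -/
def subA {I : Type} [DecidableEq I] (β : I → ℕ) (i : I) : I → ℕ :=
  fun j => β j - if j = i then 1 else 0
end KLR

/-!
Let `e(*, j)` and `e(j, *)` be the idempotents of the sequences ending, respectively starting, in
`j`, and count strands from `0`. As a right module over `R(n)`, the space `R(n + 1) e(*, j)` is
free on the elements `τ_a ⋯ τ_{n-1} x_n ^ b`. They span because their span, filtered by `a`, is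
stable under left multiplication by the generators. They are independent because `R(n)` acts
faithfully on vectors of rational functions, where `τ_a ⋯ τ_{n-1}` is triangular with respect to
the cycles `(a, a + 1, …, n)`. Reflecting diagrams gives the basis of `R(n + 1) e(j, *)`.

Hence `F_j M` is a direct sum of copies of `M` indexed by such a basis of `R(n + 2) e(*, j)`, and
`E_i` truncates it by `e(*, i)`. As `i ≠ j`, the truncation kills the elements with `a = n + 1`,
where the new strand `j` stays last. The other elements come from the basis of `R(n + 1) e(*, j)`,
multiplied on the right by the crossing `t` of the last two strands, so that
`b ⊗ x ↦ ψ(b) t ⊗ x` is an isomorphism `F_j E_i M ≅ E_i F_j M`. When the strand `j` is added on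
the left the same holds with `t = 1`.
-/

namespace KLR

variable {k : Type} [Field k] {I : Type} [Fintype I] [DecidableEq I] (C : CartanDatum k I)

/-! ### Balanced tensor products over a basis -/

section Balanced

variable {k S B M N Q : Type} [Field k] [Ring S] [Algebra k S] [Ring B] [Algebra k B]
  [AddCommGroup M] [Module k M] [Module S M] [AddCommGroup N] [Module k N]

/-- The right linear combinations `f ↦ ∑_q w_q φ(f_q)` of a family `w` in `B`, on which `S` acts
on the right through `φ`. -/
noncomputable def rightCombination (φ : S →ₙₐ[k] B) (w : Q → B) : (Q →₀ S) →ₗ[k] B :=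
  Finsupp.lsum k fun q => (LinearMap.mulLeft k (w q)).comp (φ : S →ₗ[k] B)

theorem rightCombination_apply (φ : S →ₙₐ[k] B) (w : Q → B) (f : Q →₀ S) :
    rightCombination φ w f = f.sum fun q s => w q * φ s := rfl

theorem rightCombination_mapRange_mul (φ : S →ₙₐ[k] B) (w : Q → B) (f : Q →₀ S) (r : S) :
    rightCombination φ w (f.mapRange (· * r) (zero_mul r)) = rightCombination φ w f * φ r := by
  rw [rightCombination_apply, rightCombination_apply,
    Finsupp.sum_mapRange_index fun q => by rw [map_zero, mul_zero], Finsupp.sum_mul]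
  simp only [map_mul, mul_assoc]

theorem rightCombination_eq_sum_fin [Fintype Q] (φ : S →ₙₐ[k] B) (w : Q × ℕ → B)
    {f : Q × ℕ →₀ S} {N : ℕ} (hN : ∀ q, N ≤ q.2 → f q = 0) :
    rightCombination φ w f = ∑ a, ∑ b : Fin N, w (a, b) * φ (f (a, b)) := by
  rw [rightCombination_apply, Finsupp.sum_of_support_subset f (s := Finset.univ ×ˢ Finset.range N)
    (fun q hq => ?_) _ (fun q _ => by rw [map_zero, mul_zero]), Finset.sum_product]
  · simp only [Finset.sum_range]
  · by_contra hq'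
    exact Finsupp.mem_support_iff.1 hq (hN q (by simpa using hq'))

/-- The canonical bilinear map `(b, m) ↦ b ⊗ m` into the balanced tensor product `B ⊗_S M`. -/
noncomputable def balancedMk (φ : S →ₙₐ[k] B) : B →ₗ[k] M →ₗ[k] OT k S B M φ :=
  (TensorProduct.mk k B M).compr₂ ((TRel k S B M φ).mkQ.restrictScalars k)

theorem OTmk_tmul (φ : S →ₙₐ[k] B) (b : B) (m : M) :
    OTmk k S B M φ (b ⊗ₜ[k] m) = balancedMk φ b m := rfl

theorem balancedMk_mul (φ : S →ₙₐ[k] B) (b : B) (r : S) (m : M) :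
    balancedMk φ (b * φ r) m = balancedMk φ b (r • m) :=
  (Submodule.Quotient.eq _).2 (Submodule.subset_span ⟨b, r, m, rfl⟩)

theorem balancedMk_mul_one (φ : S →ₙₐ[k] B) (b : B) (m : M) :
    balancedMk φ (b * φ 1) m = balancedMk φ b m := by
  rw [balancedMk_mul, one_smul]

theorem smul_balancedMk (φ : S →ₙₐ[k] B) (c b : B) (m : M) :
    c • balancedMk φ b m = balancedMk φ (c * b) m := rfl

theorem balanced_induction {φ : S →ₙₐ[k] B} {motive : OT k S B M φ → Prop}
    (balancedMk : ∀ b m, motive (balancedMk φ b m))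
    (add : ∀ y y', motive y → motive y' → motive (y + y')) (y : OT k S B M φ) : motive y := by
  obtain ⟨z, rfl⟩ := Submodule.Quotient.mk_surjective _ y
  induction z using TensorProduct.induction_on with
  | zero => simpa using balancedMk 0 0
  | tmul b m => exact balancedMk b m
  | add z z' hz hz' => exact add _ _ hz hz'

theorem lift_eq_zero_of_mem_TRel {φ : S →ₙₐ[k] B} (g : B →ₗ[k] M →ₗ[k] N)
    (hg : ∀ b r m, g (b * φ r) m = g b (r • m)) {z : B ⊗[k] M} (hz : z ∈ TRel k S B M φ) :
    TensorProduct.lift g z = 0 := by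
  suffices ∀ c : B, TensorProduct.lift g (c • z) = 0 by simpa only [one_smul] using this 1
  induction hz using Submodule.span_induction with
  | mem z hz =>
    obtain ⟨b, r, m, rfl⟩ := hz
    intro c
    rw [smul_sub, TensorProduct.smul_tmul', TensorProduct.smul_tmul', map_sub,
      TensorProduct.lift.tmul, TensorProduct.lift.tmul, smul_eq_mul, smul_eq_mul, ← mul_assoc, hg,
      sub_self]
  | zero => exact fun c => by rw [smul_zero, map_zero]
  | add z z' _ _ hz hz' => exact fun c => by rw [smul_add, map_add, hz, hz', add_zero]
  | smul b z _ hz => exact fun c => by rw [← mul_smul, hz]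

/-- The map out of the balanced tensor product induced by a balanced bilinear map. -/
noncomputable def balancedLift {φ : S →ₙₐ[k] B} (g : B →ₗ[k] M →ₗ[k] N)
    (hg : ∀ b r m, g (b * φ r) m = g b (r • m)) : OT k S B M φ →ₗ[k] N :=
  (Submodule.liftQ ((TRel k S B M φ).restrictScalars k) (TensorProduct.lift g)
    fun _ hz => lift_eq_zero_of_mem_TRel g hg hz).comp
  (Submodule.Quotient.restrictScalarsEquiv k (TRel k S B M φ)).symm.toLinearMap

variable (M) in
/-- The combinations `x ↦ ∑_q w_q ⊗ x_q` in `B ⊗_S M` of a family `w` in `B`. -/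
noncomputable def tensorCombination (φ : S →ₙₐ[k] B) (w : Q → B) :
    (Q →₀ M) →ₗ[k] OT k S B M φ :=
  Finsupp.lsum k fun q => balancedMk φ (w q)

theorem tensorCombination_single (φ : S →ₙₐ[k] B) (w : Q → B) (q : Q) (m : M) :
    tensorCombination M φ w (Finsupp.single q m) = balancedMk φ (w q) m :=
  Finsupp.lsum_single ..

theorem tensorCombination_surjective {φ : S →ₙₐ[k] B} {w : Q → B}
    (hw : ∀ b, ∃ f, rightCombination φ w f = b * φ 1) :
    Function.Surjective (tensorCombination M φ w) := by
  intro y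
  induction y using balanced_induction with
  | balancedMk b m =>
    obtain ⟨f, hf⟩ := hw b
    refine ⟨f.mapRange (· • m) (zero_smul S m), ?_⟩
    rw [← balancedMk_mul_one, ← hf, rightCombination_apply, Finsupp.sum, map_sum,
      LinearMap.sum_apply, tensorCombination, Finsupp.lsum_apply,
      Finsupp.sum_mapRange_index fun q => map_zero _]
    exact Finset.sum_congr rfl fun q _ => (balancedMk_mul ..).symm
  | add y y' hy hy' =>
    obtain ⟨⟨x, rfl⟩, ⟨x', rfl⟩⟩ := And.intro hy hy'
    exact ⟨x + x', map_add ..⟩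

/-- The family `w` projects to a basis `(w_q φ(1))_q` of the right `S`-module `B φ(1)`. -/
structure IsRightBasis (φ : S →ₙₐ[k] B) (w : Q → B) : Prop where
  exists_eq : ∀ b, ∃ f, rightCombination φ w f = b * φ 1
  injective : Function.Injective (rightCombination φ w)

namespace IsRightBasis

variable {φ : S →ₙₐ[k] B} {w : Q → B} (hw : IsRightBasis φ w)

/-- The coordinates of `b φ(1)` in a basis of `B φ(1)`. -/
noncomputable def repr : B →ₗ[k] Q →₀ S :=
  (LinearEquiv.ofInjective _ hw.injective).symm.toLinearMap.comp
    ((LinearMap.mulRight k (φ 1)).codRestrict _ hw.exists_eq)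

theorem rightCombination_repr (b : B) : rightCombination φ w (hw.repr b) = b * φ 1 :=
  congrArg Subtype.val ((LinearEquiv.ofInjective _ hw.injective).apply_symm_apply _)

theorem repr_self (q : Q) : hw.repr (w q) = Finsupp.single q 1 :=
  hw.injective (by
    rw [hw.rightCombination_repr, rightCombination_apply, Finsupp.sum_single_index]
    rw [map_zero, mul_zero])

theorem repr_mul (b : B) (r : S) (q : Q) : hw.repr (b * φ r) q = hw.repr b q * r := by
  suffices hw.repr (b * φ r) = (hw.repr b).mapRange (· * r) (zero_mul r) by
    rw [this, Finsupp.mapRange_apply]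
  apply hw.injective
  rw [rightCombination_mapRange_mul, hw.rightCombination_repr, hw.rightCombination_repr,
    mul_assoc, mul_assoc, ← map_mul, ← map_mul, mul_one, one_mul]

variable [IsScalarTower k S M]

variable (M) in
/-- The `q`-th coordinate `b ⊗ m ↦ b_q m` on `B ⊗_S M`. -/
noncomputable def coord (q : Q) : OT k S B M φ →ₗ[k] M :=
  balancedLift ((Algebra.lsmul k k M).toLinearMap.comp ((Finsupp.lapply q).comp hw.repr))
    fun b r m => by
      change hw.repr (b * φ r) q • m = hw.repr b q • r • m
      rw [hw.repr_mul, mul_smul]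

theorem coord_balancedMk (q : Q) (b : B) (m : M) :
    hw.coord M q (balancedMk φ b m) = hw.repr b q • m := rfl

theorem coord_tensorCombination (x : Q →₀ M) (q : Q) :
    hw.coord M q (tensorCombination M φ w x) = x q := by
  classical
  induction x using Finsupp.induction_linear with
  | zero => rw [map_zero, map_zero, Finsupp.zero_apply]
  | add x x' hx hx' => rw [map_add, map_add, hx, hx', Finsupp.add_apply]
  | single p m =>
    rw [tensorCombination_single, coord_balancedMk, repr_self, Finsupp.single_apply,
      Finsupp.single_apply, ite_smul, one_smul, zero_smul]

include hw in
theorem tensorCombination_injective : Function.Injective (tensorCombination M φ w) :=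
  fun x x' h => Finsupp.ext fun q => by
    rw [← hw.coord_tensorCombination x, h, hw.coord_tensorCombination]

end IsRightBasis

end Balanced

/-! ### The truncation of an induced module -/

section Mackey

variable {k S₀ B₁ S₁ B₂ P Q : Type} [Field k] [Ring S₀] [Algebra k S₀] [Ring B₁] [Algebra k B₁]
  [Ring S₁] [Algebra k S₁] [Ring B₂] [Algebra k B₂]

/-- A commutation datum for the square of non-unital algebra maps
`φ₁ : S₀ → B₁`, `φ₀ : S₀ → S₁`, `φ₂ : S₁ → B₂`, `ψ : B₁ → B₂` and the idempotents `e = ψ(1)` and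
`e₀ = φ₀(1)`. The element `t` intertwines the two composites `S₀ → B₂`, and right multiplication
by `t` carries a spanning family `v` of `B₁` onto those members of a basis `w` of `B₂` which
survive multiplication by `e`. -/
structure IsCommutationDatum (φ₁ : S₀ →ₙₐ[k] B₁) (φ₀ : S₀ →ₙₐ[k] S₁) (φ₂ : S₁ →ₙₐ[k] B₂)
    (ψ : B₁ →ₙₐ[k] B₂) (e : B₂) (e₀ : S₁) (t : B₂) (v : P → B₁) (w : Q → B₂) (σ : P → Q) :
    Prop where
  eq_map_one : e = ψ 1
  eq_map_one' : e₀ = φ₀ 1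
  injective : Function.Injective σ
  exists_eq : ∀ b, ∃ f, rightCombination φ₁ v f = b * φ₁ 1
  isRightBasis : IsRightBasis φ₂ w
  intertwines : ∀ r, ψ (φ₁ r) * t * φ₂ e₀ = t * φ₂ (φ₀ r)
  map_mul_eq : ∀ p, ψ (v p) * t * φ₂ e₀ = w (σ p) * φ₂ e₀
  mul_map_one : ∀ p, e * (w (σ p) * φ₂ 1) = w (σ p) * φ₂ e₀
  mul_map_one_eq_zero : ∀ q ∉ Set.range σ, e * (w q * φ₂ 1) = 0

theorem smul_coe_eSub {A N : Type} [Ring A] [Algebra k A] [AddCommGroup N] [Module k N]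
    [Module A N] [IsScalarTower k A N] {e : A} (he : IsIdempotentElem e) (x : ↥(eSub k A N e)) :
    e • (x : N) = x := by
  obtain ⟨_, y, rfl⟩ := x
  change e • e • y = e • y
  rw [← mul_smul, he.eq]

namespace IsCommutationDatum

variable {φ₁ : S₀ →ₙₐ[k] B₁} {φ₀ : S₀ →ₙₐ[k] S₁} {φ₂ : S₁ →ₙₐ[k] B₂} {ψ : B₁ →ₙₐ[k] B₂} {e : B₂}
  {e₀ : S₁} {t : B₂} {v : P → B₁} {w : Q → B₂} {σ : P → Q}
  (D : IsCommutationDatum φ₁ φ₀ φ₂ ψ e e₀ t v w σ)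
  {M : Type} [AddCommGroup M] [Module k M] [Module S₁ M] [IsScalarTower k S₁ M]

include D

theorem isIdempotentElem : IsIdempotentElem e := by
  rw [IsIdempotentElem, D.eq_map_one, ← map_mul, one_mul]

theorem isIdempotentElem' : IsIdempotentElem e₀ := by
  rw [IsIdempotentElem, D.eq_map_one', ← map_mul, one_mul]

theorem balancedMk_coe (b : B₂) (x : ↥(eSub k S₁ M e₀)) :
    balancedMk φ₂ (b * φ₂ e₀) (x : M) = balancedMk φ₂ b (x : M) := by
  rw [balancedMk_mul, smul_coe_eSub D.isIdempotentElem']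

variable [Module S₀ ↥(eSub k S₁ M e₀)] (h₀ : IsEAction (N := M) k e₀ φ₀ inferInstance)

/-- The `k`-linear map `B₁ ⊗ e₀M → B₂ ⊗ M`, `b ⊗ x ↦ ψ(b) t ⊗ x`. -/
noncomputable def toInduced : OT k S₀ B₁ ↥(eSub k S₁ M e₀) φ₁ →ₗ[k] OT k S₁ B₂ M φ₂ :=
  balancedLift ((balancedMk φ₂).compl₁₂ ((LinearMap.mulRight k t).comp (ψ : B₁ →ₗ[k] B₂))
    (eSub k S₁ M e₀).subtype) fun b r x => by
      change balancedMk φ₂ (ψ (b * φ₁ r) * t) (x : M) =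
        balancedMk φ₂ (ψ b * t) ((r • x : ↥(eSub k S₁ M e₀)) : M)
      rw [h₀, ← D.balancedMk_coe, ← balancedMk_mul, map_mul ψ, mul_assoc, mul_assoc,
        ← mul_assoc (ψ (φ₁ r)), D.intertwines, mul_assoc]

theorem toInduced_balancedMk (b : B₁) (x : ↥(eSub k S₁ M e₀)) :
    D.toInduced h₀ (balancedMk φ₁ b x) = balancedMk φ₂ (ψ b * t) (x : M) := rfl

theorem toInduced_smul (b : B₁) (y : OT k S₀ B₁ ↥(eSub k S₁ M e₀) φ₁) :
    D.toInduced h₀ (b • y) = ψ b • D.toInduced h₀ y := by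
  induction y using balanced_induction with
  | balancedMk c x =>
    rw [smul_balancedMk, toInduced_balancedMk, toInduced_balancedMk, smul_balancedMk,
      map_mul ψ, mul_assoc]
  | add y y' hy hy' => rw [smul_add, map_add, hy, hy', map_add, smul_add]

theorem toInduced_mem_eSub (y : OT k S₀ B₁ ↥(eSub k S₁ M e₀) φ₁) :
    D.toInduced h₀ y ∈ eSub k B₂ (OT k S₁ B₂ M φ₂) e := by
  refine ⟨D.toInduced h₀ y, ?_⟩
  have h := D.toInduced_smul h₀ 1 y
  rwa [one_smul, ← D.eq_map_one, eq_comm] at h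

theorem toInduced_tensorCombination (x : P →₀ ↥(eSub k S₁ M e₀)) :
    D.toInduced h₀ (tensorCombination _ φ₁ v x) =
      tensorCombination M φ₂ w ((x.mapRange Subtype.val rfl).mapDomain σ) := by
  suffices (D.toInduced h₀).comp (tensorCombination _ φ₁ v) =
      (tensorCombination M φ₂ w).comp ((Finsupp.lmapDomain M k σ).comp
        (Finsupp.mapRange.linearMap (eSub k S₁ M e₀).subtype)) from LinearMap.congr_fun this x
  refine Finsupp.lhom_ext fun p x => ?_
  change D.toInduced h₀ (tensorCombination _ φ₁ v (Finsupp.single p x)) =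
    tensorCombination M φ₂ w (((Finsupp.single p x).mapRange Subtype.val rfl).mapDomain σ)
  rw [Finsupp.mapRange_single, Finsupp.mapDomain_single, tensorCombination_single,
    tensorCombination_single, toInduced_balancedMk, ← D.balancedMk_coe, D.map_mul_eq,
    D.balancedMk_coe]

theorem toInduced_injective : Function.Injective (D.toInduced (M := M) h₀) := by
  rw [injective_iff_map_eq_zero]
  intro y hy
  obtain ⟨x, rfl⟩ := tensorCombination_surjective D.exists_eq y
  rw [toInduced_tensorCombination,
    map_eq_zero_iff _ D.isRightBasis.tensorCombination_injective,
    ← Finsupp.mapDomain_zero (f := σ)] at hy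
  have hx : x = 0 := Finsupp.ext fun p => Subtype.ext (by
    simpa using DFunLike.congr_fun (Finsupp.mapDomain_injective D.injective hy) p)
  rw [hx, map_zero]

theorem eSub_le_range_toInduced :
    eSub k B₂ (OT k S₁ B₂ M φ₂) e ≤ LinearMap.range (D.toInduced (M := M) h₀) := by
  rintro _ ⟨y, rfl⟩
  obtain ⟨x, rfl⟩ := tensorCombination_surjective D.isRightBasis.exists_eq y
  induction x using Finsupp.induction_linear with
  | zero => rw [map_zero, map_zero]; exact zero_mem _
  | add x x' hx hx' => rw [map_add, map_add]; exact add_mem hx hx'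
  | single q m =>
    have h : eMap k B₂ _ e (tensorCombination M φ₂ w (Finsupp.single q m)) =
        balancedMk φ₂ (e * (w q * φ₂ 1)) m := by
      rw [tensorCombination_single, ← balancedMk_mul_one, ← smul_balancedMk]; rfl
    rw [h]
    by_cases hq : q ∈ Set.range σ
    · obtain ⟨p, rfl⟩ := hq
      refine ⟨balancedMk φ₁ (v p) ⟨e₀ • m, m, rfl⟩, ?_⟩
      rw [toInduced_balancedMk, D.mul_map_one, ← D.map_mul_eq, ← balancedMk_mul]
    · rw [D.mul_map_one_eq_zero q hq, map_zero]
      exact zero_mem _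

variable [Module B₁ ↥(eSub k B₂ (OT k S₁ B₂ M φ₂) e)]
  (h : IsEAction (N := OT k S₁ B₂ M φ₂) k e ψ inferInstance)

/-- The isomorphism `B₁ ⊗ e₀M ≃ e(B₂ ⊗ M)`, `b ⊗ x ↦ ψ(b) t ⊗ x`. -/
noncomputable def inducedEquiv :
    OT k S₀ B₁ ↥(eSub k S₁ M e₀) φ₁ ≃ₗ[B₁] ↥(eSub k B₂ (OT k S₁ B₂ M φ₂) e) :=
  LinearEquiv.ofBijective
    { toFun y := ⟨D.toInduced h₀ y, D.toInduced_mem_eSub h₀ y⟩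
      map_add' _ _ := Subtype.ext (map_add ..)
      map_smul' b y := Subtype.ext ((D.toInduced_smul h₀ b y).trans
        (h b ⟨D.toInduced h₀ y, D.toInduced_mem_eSub h₀ y⟩).symm) }
    ⟨fun _ _ hy => D.toInduced_injective h₀ (congrArg Subtype.val hy), fun y =>
      (D.eSub_le_range_toInduced h₀ y.2).imp fun _ hy => Subtype.ext hy⟩

theorem coe_inducedEquiv_balancedMk (b : B₁) (x : ↥(eSub k S₁ M e₀)) :
    (D.inducedEquiv h₀ h (balancedMk φ₁ b x)).val = balancedMk φ₂ (ψ b * t) (x : M) := rfl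

omit [Module B₁ ↥(eSub k B₂ (OT k S₁ B₂ M φ₂) e)]

theorem exists_natural_equiv :
    ∃ Φ : ∀ (M : Type) [AddCommGroup M] [Module k M] [Module S₁ M] [IsScalarTower k S₁ M]
        (d1 : EData k M e₀ φ₀) (d2 : EData k (OT k S₁ B₂ M φ₂) e ψ),
        (letI := d1.inst; letI := d1.tower; letI := d2.inst;
          (↥(eSub k B₂ (OT k S₁ B₂ M φ₂) e) ≃ₗ[B₁] (OT k S₀ B₁ ↥(eSub k S₁ M e₀) φ₁))),
      ∀ (M M' : Type) (_ : AddCommGroup M) (_ : Module k M)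
        (_ : Module S₁ M) (_ : IsScalarTower k S₁ M)
        (_ : AddCommGroup M') (_ : Module k M')
        (_ : Module S₁ M') (_ : IsScalarTower k S₁ M')
        (d1 : EData k M e₀ φ₀) (d2 : EData k (OT k S₁ B₂ M φ₂) e ψ)
        (d1' : EData k M' e₀ φ₀) (d2' : EData k (OT k S₁ B₂ M' φ₂) e ψ),
        letI := d1.inst; letI := d1.tower; letI := d2.inst;
        letI := d1'.inst; letI := d1'.tower; letI := d2'.inst;
        ∀ (f : M →ₗ[S₁] M')
          (gF : OT k S₁ B₂ M φ₂ →ₗ[k] OT k S₁ B₂ M' φ₂),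
          (∀ (b : B₂) (m : M),
            gF (OTmk k S₁ B₂ M φ₂ (b ⊗ₜ[k] m)) = OTmk k S₁ B₂ M' φ₂ (b ⊗ₜ[k] f m)) →
        ∀ (gEF : ↥(eSub k B₂ (OT k S₁ B₂ M φ₂) e) →ₗ[k] ↥(eSub k B₂ (OT k S₁ B₂ M' φ₂) e)),
          (∀ x, (gEF x).val = gF x.val) →
        ∀ (gE : ↥(eSub k S₁ M e₀) →ₗ[k] ↥(eSub k S₁ M' e₀)),
          (∀ x, (gE x).val = f x.val) →
        ∀ (gFE : OT k S₀ B₁ ↥(eSub k S₁ M e₀) φ₁ →ₗ[k] OT k S₀ B₁ ↥(eSub k S₁ M' e₀) φ₁),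
          (∀ (b : B₁) (x : ↥(eSub k S₁ M e₀)),
            gFE (OTmk k S₀ B₁ ↥(eSub k S₁ M e₀) φ₁ (b ⊗ₜ[k] x))
              = OTmk k S₀ B₁ ↥(eSub k S₁ M' e₀) φ₁ (b ⊗ₜ[k] gE x)) →
          ∀ z, gFE (Φ M d1 d2 z) = Φ M' d1' d2' (gEF z) := by
  refine ⟨fun M _ _ _ _ d1 d2 =>
    letI := d1.inst; letI := d2.inst; (D.inducedEquiv d1.compat d2.compat).symm, ?_⟩
  intro M M' _ _ _ _ _ _ _ _ d1 d2 d1' d2'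
  let := d1.inst; let := d2.inst; let := d1'.inst; let := d2'.inst
  intro f gF hgF gEF hgEF gE hgE gFE hgFE z
  have key : ∀ y, D.inducedEquiv d1'.compat d2'.compat (gFE y) =
      gEF (D.inducedEquiv d1.compat d2.compat y) := by
    intro y
    induction y using balanced_induction with
    | balancedMk b x =>
      apply Subtype.ext
      simp only [OTmk_tmul] at hgF hgFE
      rw [hgFE, coe_inducedEquiv_balancedMk, hgEF, coe_inducedEquiv_balancedMk, hgF, hgE]
    | add y y' hy hy' => simp only [map_add, hy, hy']
  rw [LinearEquiv.eq_symm_apply, key, LinearEquiv.apply_symm_apply]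

end IsCommutationDatum

end Mackey

/-! ### KLR families -/

section Families

/-- The transposition of the strands `l` and `l + 1` (counted from `0`). -/
abbrev adjSwap {n : ℕ} (l : ℕ) (h : l + 1 < n) : Equiv.Perm (Fin n) :=
  Equiv.swap ⟨l, Nat.lt_of_succ_lt h⟩ ⟨l + 1, h⟩

/-- A family `(ε, ξ, θ)` in an algebra satisfying the relations that define `R(n)`; such families
are the same as algebra homomorphisms out of `R(n)`, see `IsKLRFamily.lift`. -/
structure IsKLRFamily {n : ℕ} {A : Type} [Ring A] [Algebra k A] (ε : (Fin n → I) → A)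
    (ξ : Fin n → A) (θ : ∀ l : ℕ, l + 1 < n → A) : Prop where
  ee : ∀ ν ν' : Fin n → I, ε ν * ε ν' = if ν = ν' then ε ν else 0
  esum : ∑ ν : Fin n → I, ε ν = 1
  xx : ∀ a b : Fin n, ξ a * ξ b = ξ b * ξ a
  xe : ∀ (a : Fin n) (ν : Fin n → I), ξ a * ε ν = ε ν * ξ a
  taue : ∀ (l : ℕ) (h : l + 1 < n) (ν : Fin n → I),
    θ l h * ε ν = ε (ν ∘ adjSwap l h) * θ l h
  tautau : ∀ (l : ℕ) (h : l + 1 < n) (l' : ℕ) (h' : l' + 1 < n),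
    (l + 1 < l' ∨ l' + 1 < l) → θ l h * θ l' h' = θ l' h' * θ l h
  tausq : ∀ (l : ℕ) (h : l + 1 < n) (ν : Fin n → I),
    θ l h ^ 2 * ε ν =
      Qel C (ν ⟨l, Nat.lt_of_succ_lt h⟩) (ν ⟨l + 1, h⟩)
        (ξ ⟨l, Nat.lt_of_succ_lt h⟩) (ξ ⟨l + 1, h⟩) * ε ν
  taux : ∀ (l : ℕ) (h : l + 1 < n) (m : Fin n) (ν : Fin n → I),
    (θ l h * ξ m - ξ (adjSwap l h m) * θ l h) * ε ν =
      if m = ⟨l, Nat.lt_of_succ_lt h⟩ ∧ ν ⟨l, Nat.lt_of_succ_lt h⟩ = ν ⟨l + 1, h⟩ then -ε ν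
      else if m = ⟨l + 1, h⟩ ∧ ν ⟨l, Nat.lt_of_succ_lt h⟩ = ν ⟨l + 1, h⟩ then ε ν
      else 0
  braid : ∀ (l : ℕ) (h : l + 2 < n) (ν : Fin n → I),
    (θ (l + 1) h * θ l (Nat.lt_of_succ_lt h) * θ (l + 1) h
        - θ l (Nat.lt_of_succ_lt h) * θ (l + 1) h * θ l (Nat.lt_of_succ_lt h)) * ε ν =
      if ν ⟨l, Nat.lt_of_succ_lt (Nat.lt_of_succ_lt h)⟩ = ν ⟨l + 2, h⟩ then
        Qdiff C (ν ⟨l, Nat.lt_of_succ_lt (Nat.lt_of_succ_lt h)⟩) (ν ⟨l + 1, Nat.lt_of_succ_lt h⟩)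
          (ξ ⟨l, Nat.lt_of_succ_lt (Nat.lt_of_succ_lt h)⟩) (ξ ⟨l + 1, Nat.lt_of_succ_lt h⟩)
          (ξ ⟨l + 2, h⟩) * ε ν
      else 0

section Evaluation

variable {A A' : Type} [Ring A] [Algebra k A] [Ring A'] [Algebra k A']

theorem map_Qel (f : A →ₐ[k] A') (i j : I) (u v : A) :
    f (Qel C i j u v) = Qel C i j (f u) (f v) := by
  simp [Qel, apply_ite f, map_sum]

theorem map_Qdiff (f : A →ₐ[k] A') (i j : I) (u v w : A) :
    f (Qdiff C i j u v w) = Qdiff C i j (f u) (f v) (f w) := by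
  simp [Qdiff, apply_ite f, map_sum]

end Evaluation

theorem isKLRFamily_generators (n : ℕ) : IsKLRFamily C (Ee C (n := n)) (Xx C) (Tt C) := by
  have rel {a b : FA k I n} (h : Rel C n a b) :
      RingQuot.mkAlgHom k (Rel C n) a = RingQuot.mkAlgHom k (Rel C n) b :=
    RingQuot.mkAlgHom_rel k h
  constructor
  · intro ν ν'
    simpa [Ee, apply_ite (RingQuot.mkAlgHom k (Rel C n))] using rel (.ee ν ν')
  · simpa [Ee] using rel .esum
  · intro a b
    simpa [Xx] using rel (.xx a b)
  · intro a ν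
    simpa [Ee, Xx] using rel (.xe a ν)
  · intro l h ν
    simpa [Ee, Tt] using rel (.taue l h ν)
  · intro l h l' h' far
    simpa [Tt] using rel (.tautau l h l' h' far)
  · intro l h ν
    simpa [Ee, Xx, Tt, map_Qel] using rel (.tausq l h ν)
  · intro l h m ν
    simpa [Ee, Xx, Tt, apply_ite (RingQuot.mkAlgHom k (Rel C n))] using rel (.taux l h m ν)
  · intro l h ν
    simpa [Ee, Xx, Tt, map_Qdiff, apply_ite (RingQuot.mkAlgHom k (Rel C n))]
      using rel (.braid l h ν)

/-- The map on generators determined by a family `(ε, ξ, θ)`. -/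
def onGenerators {n : ℕ} {A : Type} (ε : (Fin n → I) → A) (ξ : Fin n → A)
    (θ : ∀ l : ℕ, l + 1 < n → A) : Gen I n → A
  | .e ν => ε ν
  | .x a => ξ a
  | .tau l h => θ l h

namespace IsKLRFamily

variable {C}
variable {n : ℕ} {A : Type} [Ring A] [Algebra k A] {ε : (Fin n → I) → A} {ξ : Fin n → A}
  {θ : ∀ l : ℕ, l + 1 < n → A} (H : IsKLRFamily C ε ξ θ)

include H in
theorem lift_rel {a b : FA k I n} (h : Rel C n a b) :
    FreeAlgebra.lift k (onGenerators ε ξ θ) a = FreeAlgebra.lift k (onGenerators ε ξ θ) b := by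
  set F := FreeAlgebra.lift k (onGenerators ε ξ θ)
  have Fe ν : F (ge k ν) = ε ν := by simp [F, ge, onGenerators]
  have Fx a : F (gx k a) = ξ a := by simp [F, gx, onGenerators]
  have Ft l h : F (gt k l h) = θ l h := by simp [F, gt, onGenerators]
  cases h with
  | ee ν ν' => simp [apply_ite F, Fe, H.ee]
  | esum => simp [Fe, H.esum]
  | xx a b => simp [Fx, H.xx a b]
  | xe a b => simp [Fx, Fe, H.xe a b]
  | taue l h ν => simp [Ft, Fe, H.taue l h]
  | tautau l h l' h' far => simp [Ft, H.tautau l h l' h' far]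
  | tausq l h ν => simp [map_Qel, Ft, Fe, Fx, H.tausq l h]
  | taux l h m ν => simp [apply_ite F, Ft, Fe, Fx, H.taux l h]
  | braid l h ν => simp [apply_ite F, map_Qdiff, Ft, Fe, Fx, H.braid l h]

/-- The universal property of `R(n)`: the homomorphism determined by a KLR family. -/
noncomputable def lift : Alg C n →ₐ[k] A :=
  RingQuot.liftAlgHom (S := k) ⟨FreeAlgebra.lift k (onGenerators ε ξ θ), fun _ _ => H.lift_rel⟩

@[simp]
theorem lift_Ee (ν : Fin n → I) : H.lift (Ee C ν) = ε ν := by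
  simp [lift, Ee, ge, onGenerators]

@[simp]
theorem lift_Xx (a : Fin n) : H.lift (Xx C a) = ξ a := by
  simp [lift, Xx, gx, onGenerators]

@[simp]
theorem lift_Tt (l : ℕ) (h : l + 1 < n) : H.lift (Tt C l h) = θ l h := by
  simp [lift, Tt, gt, onGenerators]

end IsKLRFamily

@[elab_as_elim]
theorem Alg.induction {n : ℕ} {p : Alg C n → Prop} (r : Alg C n)
    (scalar : ∀ c : k, p (algebraMap k _ c)) (e : ∀ ν, p (Ee C ν)) (x : ∀ a, p (Xx C a))
    (tau : ∀ l h, p (Tt C l h)) (mul : ∀ a b, p a → p b → p (a * b))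
    (add : ∀ a b, p a → p b → p (a + b)) : p r := by
  obtain ⟨a, rfl⟩ := RingQuot.mkAlgHom_surjective k (Rel C n) r
  induction a using FreeAlgebra.induction with
  | grade0 c => simpa using scalar c
  | grade1 g =>
    cases g with
    | e ν => exact e ν
    | x a => exact x a
    | tau l h => exact tau l h
  | mul a b iha ihb => simpa using mul _ _ iha ihb
  | add a b iha ihb => simpa using add _ _ iha ihb

theorem Alg.hom_ext {n : ℕ} {A : Type} [Ring A] [Algebra k A] {f g : Alg C n →ₐ[k] A}
    (he : ∀ ν, f (Ee C ν) = g (Ee C ν)) (hx : ∀ a, f (Xx C a) = g (Xx C a))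
    (ht : ∀ l h, f (Tt C l h) = g (Tt C l h)) : f = g := by
  ext r
  cases r with
  | e ν => exact he ν
  | x a => exact hx a
  | tau l h => exact ht l h

end Families

/-! ### Adding strands and reflecting diagrams -/

section Sequences

variable {α : Type*} {n : ℕ}

theorem adjSwap_castSucc {l : ℕ} (h : l + 1 < n) (a : Fin n) :
    adjSwap l (Nat.lt_succ_of_lt h) a.castSucc = (adjSwap l h a).castSucc :=
  (Fin.castSucc_injective n).swap_apply (⟨l, Nat.lt_of_succ_lt h⟩ : Fin n) ⟨l + 1, h⟩ a

theorem adjSwap_apply_of_ne {l : ℕ} (h : l + 1 < n) {a : Fin n} (ha : a.val ≠ l)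
    (ha' : a.val ≠ l + 1) : adjSwap l h a = a :=
  Equiv.swap_apply_of_ne_of_ne (Fin.ne_of_val_ne ha) (Fin.ne_of_val_ne ha')

theorem snoc_comp_adjSwap {l : ℕ} (h : l + 1 < n) (ν : Fin n → α) (i : α) :
    (Fin.snoc (ν ∘ adjSwap l h) i : Fin (n + 1) → α) =
      (Fin.snoc ν i : Fin (n + 1) → α) ∘ adjSwap l (Nat.lt_succ_of_lt h) := by
  funext a
  refine Fin.lastCases ?_ (fun a => ?_) a
  · rw [Function.comp_apply, adjSwap_apply_of_ne _ (by simp; omega) (by simp; omega),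
      Fin.snoc_last, Fin.snoc_last]
  · rw [Function.comp_apply, adjSwap_castSucc h, Fin.snoc_castSucc, Fin.snoc_castSucc,
      Function.comp_apply]

theorem snoc_snoc_comp_adjSwap (ν : Fin n → α) (i j : α) :
    (Fin.snoc (Fin.snoc ν i : Fin (n + 1) → α) j : Fin (n + 2) → α) ∘
      adjSwap n (Nat.lt_succ_self _) = Fin.snoc (Fin.snoc ν j : Fin (n + 1) → α) i := by
  have swap_last : adjSwap n (Nat.lt_succ_self (n + 1)) (Fin.last (n + 1)) =
    (Fin.last n).castSucc := Equiv.swap_apply_right _ _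
  have swap_pred : adjSwap n (Nat.lt_succ_self (n + 1)) (Fin.last n).castSucc =
    Fin.last (n + 1) := Equiv.swap_apply_left _ _
  funext a
  refine Fin.lastCases ?_ (fun a => Fin.lastCases ?_ (fun a => ?_) a) a
  · simp [swap_last]
  · simp [swap_pred]
  · rw [Function.comp_apply, adjSwap_apply_of_ne _ (by simp; omega) (by simp; omega)]
    simp

theorem snoc_mk {l : ℕ} (h : l < n) (ν : Fin n → α) (i : α) (h' : l < n + 1) :
    (Fin.snoc ν i : Fin (n + 1) → α) ⟨l, h'⟩ = ν ⟨l, h⟩ :=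
  Fin.snoc_castSucc (α := fun _ => α) i ν ⟨l, h⟩

theorem sum_snoc [Fintype α] {A : Type*} [AddCommMonoid A] (f : (Fin (n + 1) → α) → A) :
    ∑ ν : Fin n → α, ∑ i, f (Fin.snoc ν i) = ∑ μ, f μ := by
  rw [← Finset.sum_product']
  exact Fintype.sum_equiv ((Equiv.prodComm _ _).trans (Fin.snocEquiv fun _ => α)) _ _
    fun _ => rfl

theorem rev_mk_eq {l m : ℕ} (h : l + m + 1 = n) :
    Fin.rev (⟨l, by omega⟩ : Fin n) = ⟨m, by omega⟩ :=
  Fin.ext (by simp [Fin.val_rev]; omega)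

theorem rev_adjSwap {l m : ℕ} (h : l + 2 + m = n) (a : Fin n) :
    (adjSwap l (by omega) a).rev = adjSwap m (by omega) a.rev := by
  rw [adjSwap, ← Fin.rev_injective.swap_apply, rev_mk_eq (m := m + 1) (by omega),
    rev_mk_eq (l := l + 1) (m := m) (by omega), Equiv.swap_comm]

theorem comp_adjSwap_comp_rev {l m : ℕ} (h : l + 2 + m = n) (ν : Fin n → α) :
    (ν ∘ adjSwap l (by omega)) ∘ Fin.rev = (ν ∘ Fin.rev) ∘ adjSwap m (by omega) := by
  funext a
  simp only [Function.comp_apply]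
  rw [← Fin.rev_rev (adjSwap l _ a.rev), rev_adjSwap h, Fin.rev_rev]

theorem snoc_rev (ν : Fin n → α) (j : α) :
    (Fin.snoc (ν ∘ Fin.rev) j : Fin (n + 1) → α) ∘ Fin.rev = Fin.cons j ν := by
  funext a
  refine Fin.cases ?_ (fun a => ?_) a
  · simp
  · simp only [Function.comp_apply, Fin.rev_succ, Fin.snoc_castSucc, Fin.cons_succ, Fin.rev_rev]

end Sequences

section Symmetry

variable {A : Type} [Ring A] [Algebra k A]

theorem Qel_symm (i j : I) {u v : A} (h : Commute u v) : Qel C i j u v = Qel C j i v u := by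
  unfold Qel
  by_cases hij : i = j
  · simp [hij]
  · rw [if_neg hij, if_neg (Ne.symm hij), Finset.sum_comm]
    refine Finset.sum_congr rfl fun q _ => Finset.sum_congr rfl fun p _ => ?_
    rw [C.symmetrize i j, C.t_symm i j, (h.pow_pow p q).eq, add_comm]

theorem Qdiff_symm (i j : I) {u v w : A} (h : Commute u w) :
    Qdiff C i j u v w = Qdiff C i j w v u := by
  simp only [Qdiff, h.geom_sum₂_comm]

end Symmetry

namespace IsKLRFamily

variable {C}
variable {n : ℕ} {A : Type} [Ring A] [Algebra k A] {ε : (Fin n → I) → A} {ξ : Fin n → A}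
  {θ : ∀ l : ℕ, l + 1 < n → A} (H : IsKLRFamily C ε ξ θ)

section Basic

include H

theorem eq_sum_mul (z : A) : z = ∑ ν, z * ε ν := by
  rw [← Finset.mul_sum, H.esum, mul_one]

theorem eq_of_mul_eq {z w : A} (h : ∀ ν, z * ε ν = w * ε ν) : z = w := by
  rw [H.eq_sum_mul z, H.eq_sum_mul w]
  exact Finset.sum_congr rfl fun ν _ => h ν

theorem commute_theta_xi {l : ℕ} (h : l + 1 < n) {a : Fin n} (ha : a.val ≠ l)
    (ha' : a.val ≠ l + 1) : Commute (θ l h) (ξ a) := by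
  refine H.eq_of_mul_eq fun ν => ?_
  have taux := H.taux l h a ν
  rwa [adjSwap_apply_of_ne h ha ha', if_neg fun c => ha (congrArg Fin.val c.1),
    if_neg fun c => ha' (congrArg Fin.val c.1), sub_mul, sub_eq_zero] at taux

end Basic

section Reflect

include H

theorem reflect_tausq {l m : ℕ} (h : l + 2 + m = n) (ν : Fin n → I) :
    (-θ m (by omega)) ^ 2 * ε (ν ∘ Fin.rev) =
      Qel C (ν ⟨l, by omega⟩) (ν ⟨l + 1, by omega⟩) (ξ (Fin.rev ⟨l, by omega⟩))
        (ξ (Fin.rev ⟨l + 1, by omega⟩)) * ε (ν ∘ Fin.rev) := by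
  rw [neg_sq, H.tausq, Qel_symm C _ _ (H.xx _ _)]
  simp only [Function.comp_apply, rev_mk_eq (show m + (l + 1) + 1 = n by omega),
    rev_mk_eq (show m + 1 + l + 1 = n by omega), rev_mk_eq (show l + (m + 1) + 1 = n by omega),
    rev_mk_eq (show l + 1 + m + 1 = n by omega)]

theorem reflect_taux {l m : ℕ} (h : l + 2 + m = n) (a : Fin n) (ν : Fin n → I) :
    (-θ m (by omega) * ξ a.rev - ξ (adjSwap l (by omega) a).rev * -θ m (by omega)) *
        ε (ν ∘ Fin.rev) =
      if a = ⟨l, by omega⟩ ∧ ν ⟨l, by omega⟩ = ν ⟨l + 1, by omega⟩ then -ε (ν ∘ Fin.rev)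
      else if a = ⟨l + 1, by omega⟩ ∧ ν ⟨l, by omega⟩ = ν ⟨l + 1, by omega⟩ then ε (ν ∘ Fin.rev)
      else 0 := by
  have rev_eq_m : a.rev = ⟨m, by omega⟩ ↔ a = ⟨l + 1, by omega⟩ := by
    rw [← rev_mk_eq (l := l + 1) (by omega), Fin.rev_inj]
  have rev_eq_m_succ : a.rev = ⟨m + 1, by omega⟩ ↔ a = ⟨l, by omega⟩ := by
    rw [← rev_mk_eq (l := l) (by omega), Fin.rev_inj]
  have taux := H.taux m (by omega) a.rev (ν ∘ Fin.rev)
  simp only [Function.comp_apply, rev_mk_eq (show m + (l + 1) + 1 = n by omega),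
    rev_mk_eq (show m + 1 + l + 1 = n by omega), rev_eq_m, rev_eq_m_succ, ← rev_adjSwap h,
    eq_comm (a := ν ⟨l + 1, _⟩)] at taux
  rw [neg_mul, mul_neg, sub_neg_eq_add, neg_add_eq_sub, ← neg_sub, neg_mul, taux]
  by_cases ha : a = ⟨l, by omega⟩ <;> by_cases ha' : a = ⟨l + 1, by omega⟩ <;>
    by_cases hν : ν ⟨l, by omega⟩ = ν ⟨l + 1, by omega⟩ <;> simp_all

theorem reflect_braid {l m : ℕ} (h : l + 3 + m = n) (ν : Fin n → I) :
    (-θ m (by omega) * -θ (m + 1) (by omega) * -θ m (by omega) -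
        -θ (m + 1) (by omega) * -θ m (by omega) * -θ (m + 1) (by omega)) * ε (ν ∘ Fin.rev) =
      if ν ⟨l, by omega⟩ = ν ⟨l + 2, by omega⟩ then
        Qdiff C (ν ⟨l, by omega⟩) (ν ⟨l + 1, by omega⟩) (ξ (Fin.rev ⟨l, by omega⟩))
          (ξ (Fin.rev ⟨l + 1, by omega⟩)) (ξ (Fin.rev ⟨l + 2, by omega⟩)) * ε (ν ∘ Fin.rev)
      else 0 := by
  have neg_braid (a b : A) : -a * -b * -a - -b * -a * -b = b * a * b - a * b * a := by
    noncomm_ring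
  rw [neg_braid, H.braid m (by omega)]
  simp only [Function.comp_apply, rev_mk_eq (show l + (m + 2) + 1 = n by omega),
    rev_mk_eq (show l + 1 + (m + 1) + 1 = n by omega),
    rev_mk_eq (show l + 2 + m + 1 = n by omega), rev_mk_eq (show m + (l + 2) + 1 = n by omega),
    rev_mk_eq (show m + 1 + (l + 1) + 1 = n by omega),
    rev_mk_eq (show m + 2 + l + 1 = n by omega), Qdiff_symm C _ _ (H.xx ⟨m + 2, _⟩ ⟨m, _⟩),
    eq_comm (a := ν ⟨l + 2, _⟩)]
  split_ifs with hν
  · rw [hν]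
  · rfl

theorem reflect : IsKLRFamily C (fun ν => ε (ν ∘ Fin.rev)) (fun a => ξ a.rev)
    (fun l h => -θ (n - 2 - l) (by omega)) := by
  have θ_congr {l l' : ℕ} (h : l + 1 < n) (h' : l' + 1 < n) (e : l = l') : θ l h = θ l' h' := by
    subst e; rfl
  constructor
  · intro ν ν'
    simp only [H.ee, Fin.rev_surjective.injective_comp_right.eq_iff]
  · rw [← H.esum]
    exact Fintype.sum_equiv (Equiv.arrowCongr Fin.revPerm (Equiv.refl I)) _ _ fun _ => rfl
  · exact fun a b => H.xx _ _
  · exact fun a ν => H.xe _ _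
  · intro l h ν
    rw [neg_mul, mul_neg, H.taue, comp_adjSwap_comp_rev (m := n - 2 - l) (by omega)]
  · intro l h l' h' far
    rw [neg_mul_neg, neg_mul_neg]
    exact H.tautau _ _ _ _ (by omega)
  · exact fun l h ν => H.reflect_tausq (by omega) ν
  · exact fun l h a ν => H.reflect_taux (by omega) a ν
  · intro l h ν
    rw [θ_congr (l := n - 2 - l) (l' := n - 2 - (l + 1) + 1) _ (by omega) (by omega)]
    exact H.reflect_braid (by omega) ν

end Reflect

end IsKLRFamily

section Embeddings

variable {n : ℕ}

theorem Tt_congr {l l' : ℕ} (h : l + 1 < n) (h' : l' + 1 < n) (e : l = l') :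
    Tt C l h = Tt C l' h' := by
  subst e; rfl

theorem isKLRFamily_snoc (n : ℕ) :
    IsKLRFamily C (fun ν : Fin n → I => ∑ i, Ee C (Fin.snoc ν i : Fin (n + 1) → I))
      (fun a => Xx C a.castSucc) (fun l h => Tt C l (Nat.lt_succ_of_lt h)) := by
  have H := isKLRFamily_generators C (n + 1)
  constructor
  · intro ν ν'
    by_cases h : ν = ν' <;> simp [Finset.sum_mul_sum, H.ee, h]
  · rw [sum_snoc, H.esum]
  · exact fun a b => H.xx _ _
  · exact fun a ν => by simp only [Finset.mul_sum, Finset.sum_mul, H.xe]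
  · exact fun l h ν => by simp only [Finset.mul_sum, Finset.sum_mul, H.taue, snoc_comp_adjSwap]
  · exact fun l h l' h' far => H.tautau _ _ _ _ far
  · intro l h ν
    simp only [Finset.mul_sum, H.tausq, snoc_mk (Nat.lt_of_succ_lt h), snoc_mk h]
    rfl
  · intro l h m ν
    have taux := H.taux l (Nat.lt_succ_of_lt h) m.castSucc
    have castSucc_eq (p : ℕ) (hp : p < n) :
        m.castSucc = ⟨p, Nat.lt_succ_of_lt hp⟩ ↔ m = ⟨p, hp⟩ := Fin.castSucc_inj (b := ⟨p, hp⟩)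
    rw [adjSwap_castSucc h] at taux
    simp only [Finset.mul_sum, taux, snoc_mk (Nat.lt_of_succ_lt h), snoc_mk h, castSucc_eq _ h,
      castSucc_eq _ (Nat.lt_of_succ_lt h)]
    split_ifs <;> simp
  · intro l h ν
    simp only [Finset.mul_sum, H.braid, snoc_mk h, snoc_mk (Nat.lt_of_succ_lt h),
      snoc_mk (Nat.lt_of_succ_lt (Nat.lt_of_succ_lt h))]
    split_ifs
    · rfl
    · exact Finset.sum_const_zero

/-- The unital embedding `R(n) → R(n + 1)` that adds a strand on the right. -/
noncomputable def appendRight (n : ℕ) : Alg C n →ₐ[k] Alg C (n + 1) :=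
  (isKLRFamily_snoc C n).lift

theorem appendRight_Ee (ν : Fin n → I) :
    appendRight C n (Ee C ν) = ∑ i, Ee C (Fin.snoc ν i : Fin (n + 1) → I) :=
  IsKLRFamily.lift_Ee _ _

@[simp]
theorem appendRight_Xx (a : Fin n) : appendRight C n (Xx C a) = Xx C a.castSucc :=
  IsKLRFamily.lift_Xx _ _

@[simp]
theorem appendRight_Tt (l : ℕ) (h : l + 1 < n) :
    appendRight C n (Tt C l h) = Tt C l (Nat.lt_succ_of_lt h) :=
  IsKLRFamily.lift_Tt _ _ _

/-- The involution of `R(n)` that reflects diagrams left to right, with the sign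
`τ_l ↦ -τ_{n-l}` forced by the asymmetry of the relation between `τ` and `x`. -/
noncomputable def reflect (n : ℕ) : Alg C n →ₐ[k] Alg C n :=
  (isKLRFamily_generators C n).reflect.lift

@[simp]
theorem reflect_Ee (ν : Fin n → I) : reflect C n (Ee C ν) = Ee C (ν ∘ Fin.rev) :=
  IsKLRFamily.lift_Ee _ _

@[simp]
theorem reflect_Xx (a : Fin n) : reflect C n (Xx C a) = Xx C a.rev :=
  IsKLRFamily.lift_Xx _ _

@[simp]
theorem reflect_Tt (l : ℕ) (h : l + 1 < n) :
    reflect C n (Tt C l h) = -Tt C (n - 2 - l) (by omega) :=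
  IsKLRFamily.lift_Tt _ _ _

@[simp]
theorem reflect_reflect (r : Alg C n) : reflect C n (reflect C n r) = r := by
  have key : (reflect C n).comp (reflect C n) = AlgHom.id k _ := by
    refine Alg.hom_ext C (fun ν => ?_) (fun a => ?_) fun l h => ?_
    · simp [Function.comp_assoc, Fin.rev_involutive.comp_self]
    · simp
    · simpa using Tt_congr C _ _ (by omega)
  exact DFunLike.congr_fun key r

/-- The unital embedding `R(n) → R(n + 1)` that adds a strand on the left. -/
noncomputable def appendLeft (n : ℕ) : Alg C n →ₐ[k] Alg C (n + 1) :=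
  (reflect C (n + 1)).comp ((appendRight C n).comp (reflect C n))

theorem appendLeft_reflect (r : Alg C n) :
    appendLeft C n (reflect C n r) = reflect C (n + 1) (appendRight C n r) := by
  simp [appendLeft]

theorem appendRight_reflect (r : Alg C n) :
    appendRight C n (reflect C n r) = reflect C (n + 1) (appendLeft C n r) := by
  simp [appendLeft]

theorem appendLeft_Ee (ν : Fin n → I) :
    appendLeft C n (Ee C ν) = ∑ i, Ee C (Fin.cons i ν : Fin (n + 1) → I) := by
  simp [appendLeft, appendRight_Ee, snoc_rev]

@[simp]
theorem appendLeft_Xx (a : Fin n) : appendLeft C n (Xx C a) = Xx C a.succ := by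
  simp [appendLeft, Fin.rev_castSucc]

@[simp]
theorem appendLeft_Tt (l : ℕ) (h : l + 1 < n) :
    appendLeft C n (Tt C l h) = Tt C (l + 1) (Nat.succ_lt_succ h) := by
  simpa [appendLeft] using Tt_congr C _ _ (by omega)

theorem appendRight_appendLeft (r : Alg C n) :
    appendRight C (n + 1) (appendLeft C n r) = appendLeft C (n + 1) (appendRight C n r) := by
  have key : (appendRight C (n + 1)).comp (appendLeft C n) =
      (appendLeft C (n + 1)).comp (appendRight C n) := by
    refine Alg.hom_ext C (fun ν => ?_) (fun a => ?_) fun l h => ?_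
    · simp only [AlgHom.comp_apply, appendLeft_Ee, appendRight_Ee, map_sum]
      rw [Finset.sum_comm]
      simp only [Fin.cons_snoc_eq_snoc_cons]
    · simp
    · simp
  exact DFunLike.congr_fun key r

end Embeddings

section Commutation

variable {n : ℕ}

theorem commute_of_generators {A : Type} [Ring A] [Algebra k A] (f : Alg C n →ₐ[k] A) {z : A}
    (he : ∀ ν, Commute z (f (Ee C ν))) (hx : ∀ a, Commute z (f (Xx C a)))
    (ht : ∀ l h, Commute z (f (Tt C l h))) (r : Alg C n) : Commute z (f r) := by
  induction r using Alg.induction with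
  | scalar c => exact f.commutes c ▸ Algebra.commute_algebraMap_right c z
  | e ν => exact he ν
  | x a => exact hx a
  | tau l h => exact ht l h
  | mul a b ha hb => exact map_mul f a b ▸ ha.mul_right hb
  | add a b ha hb => exact map_add f a b ▸ ha.add_right hb

/-- The idempotent of `R(n + 1)` of all sequences ending in `j`. -/
noncomputable def lastIdem (n : ℕ) (j : I) : Alg C (n + 1) :=
  ∑ ν : Fin n → I, Ee C (Fin.snoc ν j : Fin (n + 1) → I)

theorem lastIdem_mul_lastIdem (i j : I) :
    lastIdem C n i * lastIdem C n j = if i = j then lastIdem C n i else 0 := by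
  by_cases h : i = j <;>
    simp [lastIdem, Finset.sum_mul_sum, (isKLRFamily_generators C (n + 1)).ee, h]

theorem lastIdem_mul_self (i : I) : lastIdem C n i * lastIdem C n i = lastIdem C n i := by
  rw [lastIdem_mul_lastIdem, if_pos rfl]

theorem appendRight_Ee_mul_lastIdem (ν : Fin n → I) (j : I) :
    appendRight C n (Ee C ν) * lastIdem C n j = Ee C (Fin.snoc ν j) := by
  simp [appendRight_Ee, lastIdem, Finset.sum_mul_sum, (isKLRFamily_generators C (n + 1)).ee,
    ite_and]

theorem lastIdem_commute_Xx (j : I) (a : Fin (n + 1)) : Commute (lastIdem C n j) (Xx C a) :=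
  Commute.sum_left _ _ _ fun _ _ => ((isKLRFamily_generators C (n + 1)).xe a _).symm

theorem lastIdem_commute_appendRight (j : I) (r : Alg C n) :
    Commute (lastIdem C n j) (appendRight C n r) := by
  have H := isKLRFamily_generators C (n + 1)
  refine commute_of_generators C _ (fun ν => ?_) (fun a => ?_) (fun l h => ?_) r
  · rw [appendRight_Ee, lastIdem]
    refine Commute.sum_left _ _ _ fun μ _ => Commute.sum_right _ _ _ fun i _ => ?_
    simp only [Commute, SemiconjBy, H.ee]
    grind
  · rw [appendRight_Xx]
    exact lastIdem_commute_Xx C j _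
  · simp only [appendRight_Tt, lastIdem, Commute, SemiconjBy, Finset.sum_mul, Finset.mul_sum,
      H.taue]
    exact (Fintype.sum_equiv ((adjSwap l h).arrowCongr (Equiv.refl I)) _ _ fun ν => by
      simp [← snoc_comp_adjSwap h, Equiv.arrowCongr, Equiv.symm_swap]).symm

theorem Xx_last_commute_appendRight (r : Alg C n) :
    Commute (Xx C (Fin.last n)) (appendRight C n r) := by
  have H := isKLRFamily_generators C (n + 1)
  refine commute_of_generators C _ (fun ν => ?_) (fun a => ?_) (fun l h => ?_) r
  · rw [appendRight_Ee]
    exact Commute.sum_right _ _ _ fun i _ => H.xe _ _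
  · rw [appendRight_Xx]
    exact H.xx _ _
  · rw [appendRight_Tt]
    exact (H.commute_theta_xi (Nat.lt_succ_of_lt h) (by simp; omega) (by simp; omega)).symm

/-- The idempotent of `R(n + 1)` of all sequences starting with `j`. -/
noncomputable def firstIdem (n : ℕ) (j : I) : Alg C (n + 1) := reflect C (n + 1) (lastIdem C n j)

theorem firstIdem_eq_sum (n : ℕ) (j : I) :
    firstIdem C n j = ∑ ν : Fin n → I, Ee C (Fin.cons j ν : Fin (n + 1) → I) := by
  rw [firstIdem, lastIdem, map_sum]
  refine Fintype.sum_equiv (Equiv.arrowCongr Fin.revPerm (Equiv.refl I)) _ _ fun ν => ?_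
  have rev_twice : ν = (ν ∘ Fin.revPerm) ∘ Fin.rev := by funext a; simp
  rw [reflect_Ee]
  nth_rewrite 1 [rev_twice]
  rw [snoc_rev]
  rfl

theorem firstIdem_mul_firstIdem (i j : I) :
    firstIdem C n i * firstIdem C n j = if i = j then firstIdem C n i else 0 := by
  rw [firstIdem, firstIdem, ← map_mul, lastIdem_mul_lastIdem, apply_ite (reflect C _), map_zero]

theorem appendLeft_Ee_mul_firstIdem (ν : Fin n → I) (j : I) :
    appendLeft C n (Ee C ν) * firstIdem C n j = Ee C (Fin.cons j ν) := by
  simp [appendLeft, firstIdem, ← map_mul, appendRight_Ee_mul_lastIdem, snoc_rev]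

theorem firstIdem_commute_appendLeft (j : I) (r : Alg C n) :
    Commute (firstIdem C n j) (appendLeft C n r) :=
  (lastIdem_commute_appendRight C j _).map (reflect C (n + 1))

theorem appendLeft_lastIdem (n : ℕ) (i : I) :
    appendLeft C (n + 1) (lastIdem C n i) = lastIdem C (n + 1) i := by
  simp only [lastIdem, map_sum, appendLeft_Ee]
  rw [← Fintype.sum_prod_type' fun (ν : Fin n → I) (l : I) =>
    Ee C (Fin.cons l (Fin.snoc ν i : Fin (n + 1) → I) : Fin (n + 2) → I)]
  refine Fintype.sum_equiv ((Equiv.prodComm _ _).trans (Fin.consEquiv fun _ => I)) _ _ ?_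
  rintro ⟨ν, l⟩
  rw [Fin.cons_snoc_eq_snoc_cons]
  rfl

theorem appendRight_firstIdem (n : ℕ) (i : I) :
    appendRight C (n + 1) (firstIdem C n i) = firstIdem C (n + 1) i := by
  rw [firstIdem, appendRight_reflect, appendLeft_lastIdem, firstIdem]

theorem lastIdem_commute_firstIdem (i j : I) :
    Commute (lastIdem C (n + 1) i) (firstIdem C (n + 1) j) :=
  appendRight_firstIdem C n j ▸ lastIdem_commute_appendRight C i _

end Commutation

section AppendHoms

variable {A A' : Type} [Ring A] [Algebra k A] [Ring A'] [Algebra k A']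

/-- The non-unital homomorphism `r ↦ u(r) e`, for an idempotent `e` commuting with the image of the
homomorphism `u`. -/
def cornerHom (u : A →ₐ[k] A') (e : A') (he : IsIdempotentElem e) (hu : ∀ r, Commute e (u r)) :
    A →ₙₐ[k] A' where
  toFun r := u r * e
  map_smul' c r := by simp
  map_zero' := by simp
  map_add' r s := by simp [add_mul]
  map_mul' r s := by rw [map_mul, (hu s).mul_mul_mul_comm, he.eq]

variable (n : ℕ) (j : I)

/-- The homomorphism `R(n) → R(n + 1)` that adds a last strand labelled `j`. -/
noncomputable def appendRightHom : Alg C n →ₙₐ[k] Alg C (n + 1) :=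
  cornerHom (appendRight C n) (lastIdem C n j) (lastIdem_mul_self C j)
    (lastIdem_commute_appendRight C j)

/-- The homomorphism `R(n) → R(n + 1)` that adds a first strand labelled `j`. -/
noncomputable def appendLeftHom : Alg C n →ₙₐ[k] Alg C (n + 1) :=
  cornerHom (appendLeft C n) (firstIdem C n j)
    ((firstIdem_mul_firstIdem C j j).trans (if_pos rfl)) (firstIdem_commute_appendLeft C j)

variable {n}

theorem appendRightHom_apply (r : Alg C n) :
    appendRightHom C n j r = appendRight C n r * lastIdem C n j := rfl

theorem appendLeftHom_apply (r : Alg C n) :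
    appendLeftHom C n j r = appendLeft C n r * firstIdem C n j := rfl

variable (n) in
theorem appendRightHom_one : appendRightHom C n j 1 = lastIdem C n j := by
  rw [appendRightHom_apply, map_one, one_mul]

variable (n) in
theorem appendLeftHom_one : appendLeftHom C n j 1 = firstIdem C n j := by
  rw [appendLeftHom_apply, map_one, one_mul]

theorem appendLeftHom_reflect (r : Alg C n) :
    appendLeftHom C n j (reflect C n r) = reflect C (n + 1) (appendRightHom C n j r) := by
  rw [appendLeftHom_apply, appendLeft_reflect, firstIdem, appendRightHom_apply, map_mul]

end AppendHoms

/-! ### Spanning by coset elements -/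

section LeftStabilizer

variable {A : Type*} [Ring A] [Algebra k A]

/-- The subalgebra of all `z` with `z * V ⊆ V`. -/
def leftStabilizer (V : Submodule k A) : Subalgebra k A where
  carrier := {z | ∀ v ∈ V, z * v ∈ V}
  mul_mem' hx hy v hv := by
    rw [mul_assoc]
    exact hx _ (hy v hv)
  add_mem' hx hy v hv := by
    rw [add_mul]
    exact V.add_mem (hx v hv) (hy v hv)
  algebraMap_mem' c v hv := by
    rw [← Algebra.smul_def]
    exact V.smul_mem c hv

/-- The submodule `V + t * V`. -/
def extendBy (t : A) (V : Submodule k A) : Submodule k A := V ⊔ V.map (LinearMap.mulLeft k t)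

theorem le_extendBy (t : A) (V : Submodule k A) : V ≤ extendBy t V := le_sup_left

theorem mul_mem_extendBy (t : A) {V : Submodule k A} {v : A} (hv : v ∈ V) :
    t * v ∈ extendBy t V := le_sup_right (a := V) (Submodule.mem_map_of_mem hv)

theorem mem_extendBy {t : A} {V : Submodule k A} {w : A} :
    w ∈ extendBy t V ↔ ∃ v ∈ V, ∃ v' ∈ V, v + t * v' = w := by
  simp [extendBy, Submodule.mem_sup]

theorem mem_leftStabilizer_extendBy {t z : A} {V : Submodule k A}
    (h : ∀ v ∈ V, z * v ∈ extendBy t V) (h' : ∀ v ∈ V, z * (t * v) ∈ extendBy t V) :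
    z ∈ leftStabilizer (extendBy t V) := by
  intro w hw
  obtain ⟨v, hv, v', hv', rfl⟩ := mem_extendBy.1 hw
  rw [mul_add]
  exact add_mem (h v hv) (h' v' hv')

theorem mem_leftStabilizer_extendBy_of_commute {t z : A} {V : Submodule k A}
    (hc : Commute z t) (hz : z ∈ leftStabilizer V) : z ∈ leftStabilizer (extendBy t V) := by
  refine mem_leftStabilizer_extendBy (fun v hv => le_extendBy t V (hz v hv)) fun v hv => ?_
  rw [← mul_assoc, hc.eq, mul_assoc]
  exact mul_mem_extendBy t (hz v hv)

end LeftStabilizer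

section PolySubalgebra

variable {A : Type} [Ring A] [Algebra k A]

theorem Qel_mem (S : Subalgebra k A) (i j : I) {u v : A} (hu : u ∈ S) (hv : v ∈ S) :
    Qel C i j u v ∈ S := by
  unfold Qel
  split_ifs
  · exact S.zero_mem
  · refine sum_mem fun p _ => sum_mem fun q _ => ?_
    split_ifs
    · exact S.smul_mem (S.mul_mem (S.pow_mem hu p) (S.pow_mem hv q)) _
    · exact S.zero_mem

theorem Qdiff_mem (S : Subalgebra k A) (i j : I) {u v w : A} (hu : u ∈ S) (hv : v ∈ S)
    (hw : w ∈ S) : Qdiff C i j u v w ∈ S := by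
  unfold Qdiff
  split_ifs
  · exact S.zero_mem
  · refine sum_mem fun p _ => sum_mem fun q _ => ?_
    split_ifs
    · refine S.smul_mem (S.mul_mem (sum_mem fun c _ => ?_) (S.pow_mem hv q)) _
      exact S.mul_mem (S.pow_mem hu c) (S.pow_mem hw _)
    · exact S.zero_mem

/-- The subalgebra generated by the idempotents and the polynomial generators of a family. -/
def polySubalgebra {n : ℕ} (ε : (Fin n → I) → A) (ξ : Fin n → A) : Subalgebra k A :=
  Algebra.adjoin k (Set.range ε ∪ Set.range ξ)

end PolySubalgebra

namespace IsKLRFamily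

variable {C}
variable {n : ℕ} {A : Type} [Ring A] [Algebra k A] {ε : (Fin n → I) → A} {ξ : Fin n → A}
  {θ : ∀ l : ℕ, l + 1 < n → A} (H : IsKLRFamily C ε ξ θ)

omit [Fintype I] [DecidableEq I] in
theorem idem_mem_poly (ν : Fin n → I) : ε ν ∈ polySubalgebra (k := k) ε ξ :=
  Algebra.subset_adjoin (Or.inl ⟨ν, rfl⟩)

omit [Fintype I] [DecidableEq I] in
theorem xi_mem_poly (a : Fin n) : ξ a ∈ polySubalgebra (k := k) ε ξ :=
  Algebra.subset_adjoin (Or.inr ⟨a, rfl⟩)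

include H

theorem theta_sq_mem_poly (l : ℕ) (h : l + 1 < n) :
    θ l h * θ l h ∈ polySubalgebra (k := k) ε ξ := by
  rw [H.eq_sum_mul (θ l h * θ l h)]
  refine sum_mem fun ν _ => ?_
  rw [← pow_two, H.tausq]
  exact mul_mem (Qel_mem C _ _ _ (xi_mem_poly _) (xi_mem_poly _)) (idem_mem_poly ν)

theorem braid_mem_poly (l : ℕ) (h : l + 2 < n) :
    θ (l + 1) h * θ l (Nat.lt_of_succ_lt h) * θ (l + 1) h -
      θ l (Nat.lt_of_succ_lt h) * θ (l + 1) h * θ l (Nat.lt_of_succ_lt h) ∈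
        polySubalgebra (k := k) ε ξ := by
  rw [H.eq_sum_mul (θ (l + 1) h * _ * _ - _)]
  refine sum_mem fun ν _ => ?_
  rw [H.braid]
  split_ifs
  · exact mul_mem (Qdiff_mem C _ _ _ (xi_mem_poly _) (xi_mem_poly _) (xi_mem_poly _))
      (idem_mem_poly ν)
  · exact zero_mem _

theorem theta_mul_xi_sub_mem_poly (l : ℕ) (h : l + 1 < n) (a : Fin n) :
    θ l h * ξ a - ξ (adjSwap l h a) * θ l h ∈ polySubalgebra (k := k) ε ξ := by
  rw [H.eq_sum_mul (θ l h * _ - _)]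
  refine sum_mem fun ν _ => ?_
  rw [H.taux]
  split_ifs
  · exact neg_mem (idem_mem_poly ν)
  · exact idem_mem_poly ν
  · exact zero_mem _

theorem exists_mul_theta_eq (l : ℕ) (h : l + 1 < n) {p : A}
    (hp : p ∈ polySubalgebra (k := k) ε ξ) :
    ∃ p' ∈ polySubalgebra (k := k) ε ξ, ∃ q ∈ polySubalgebra (k := k) ε ξ,
      p * θ l h = θ l h * p' + q := by
  induction hp using Algebra.adjoin_induction with
  | mem p hp =>
    obtain ⟨ν, rfl⟩ | ⟨a, rfl⟩ := hp
    · refine ⟨_, idem_mem_poly (ν ∘ adjSwap l h), 0, zero_mem _, ?_⟩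
      rw [H.taue, add_zero]
      congr 2
      funext a
      simp
    · refine ⟨_, xi_mem_poly (adjSwap l h a), _,
        neg_mem (H.theta_mul_xi_sub_mem_poly l h (adjSwap l h a)), ?_⟩
      rw [Equiv.swap_apply_self]
      abel
  | algebraMap c =>
    exact ⟨_, algebraMap_mem _ c, 0, zero_mem _, by rw [add_zero, Algebra.commutes]⟩
  | add x y _ _ hx hy =>
    obtain ⟨x', hx', qx, hqx, ex⟩ := hx
    obtain ⟨y', hy', qy, hqy, ey⟩ := hy
    refine ⟨x' + y', add_mem hx' hy', qx + qy, add_mem hqx hqy, ?_⟩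
    rw [add_mul, ex, ey, mul_add]
    abel
  | mul x y hx_mem _ hx hy =>
    obtain ⟨x', hx', qx, hqx, ex⟩ := hx
    obtain ⟨y', hy', qy, hqy, ey⟩ := hy
    refine ⟨x' * y', mul_mem hx' hy', qx * y' + x * qy,
      add_mem (mul_mem hqx hy') (mul_mem hx_mem hqy), ?_⟩
    rw [mul_assoc, ey, mul_add, ← mul_assoc, ex, add_mul, mul_assoc, add_assoc]

theorem poly_le_leftStabilizer_extendBy (l : ℕ) (h : l + 1 < n) {V : Submodule k A}
    (hV : polySubalgebra ε ξ ≤ leftStabilizer V) :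
    polySubalgebra ε ξ ≤ leftStabilizer (extendBy (θ l h) V) := by
  intro p hp
  refine mem_leftStabilizer_extendBy (fun v hv => le_extendBy _ _ (hV hp v hv)) fun v hv => ?_
  obtain ⟨p', hp', q, hq, e⟩ := H.exists_mul_theta_eq l h hp
  rw [← mul_assoc, e, add_mul, mul_assoc]
  exact add_mem (mul_mem_extendBy _ (hV hp' v hv)) (le_extendBy _ _ (hV hq v hv))

theorem theta_mem_leftStabilizer_extendBy (l : ℕ) (h : l + 1 < n) {V : Submodule k A}
    (hV : polySubalgebra ε ξ ≤ leftStabilizer V) :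
    θ l h ∈ leftStabilizer (extendBy (θ l h) V) := by
  refine mem_leftStabilizer_extendBy (fun v hv => mul_mem_extendBy _ hv) fun v hv => ?_
  rw [← mul_assoc]
  exact le_extendBy _ _ (hV (H.theta_sq_mem_poly l h) v hv)

theorem theta_succ_mem_leftStabilizer_extendBy (l : ℕ) (h : l + 2 < n) {V : Submodule k A}
    (hV : polySubalgebra ε ξ ≤ leftStabilizer V)
    (hθ : θ l (Nat.lt_of_succ_lt h) ∈ leftStabilizer V) :
    θ (l + 1) h ∈
      leftStabilizer (extendBy (θ l (Nat.lt_of_succ_lt h)) (extendBy (θ (l + 1) h) V)) := by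
  set s := θ l (Nat.lt_of_succ_lt h)
  set t := θ (l + 1) h
  have t_mem : t ∈ leftStabilizer (extendBy t V) := H.theta_mem_leftStabilizer_extendBy _ h hV
  refine mem_leftStabilizer_extendBy (fun v hv => le_extendBy _ _ (t_mem v hv)) fun w hw => ?_
  obtain ⟨v, hv, v', hv', rfl⟩ := mem_extendBy.1 hw
  have braid : t * (s * (t * v')) = s * (t * (s * v')) + (t * s * t - s * t * s) * v' := by
    noncomm_ring
  rw [mul_add, mul_add, braid]
  refine add_mem (le_extendBy _ _ (mul_mem_extendBy t (hθ v hv))) (add_mem ?_ ?_)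
  · exact mul_mem_extendBy s (mul_mem_extendBy t (hθ v' hv'))
  · exact le_extendBy _ _ (le_extendBy _ _ (hV (H.braid_mem_poly l h) v' hv'))

end IsKLRFamily

section Filtration

variable {C}
variable {n : ℕ} {A : Type} [Ring A] [Algebra k A] {ε : (Fin (n + 1) → I) → A}
  {ξ : Fin (n + 1) → A} {θ : ∀ l : ℕ, l + 1 < n + 1 → A} (H : IsKLRFamily C ε ξ θ)
  {U : ℕ → Submodule k A} (hU : ∀ a (h : a + 1 < n + 1), U a = extendBy (θ a h) (U (a + 1)))
  (hpoly : polySubalgebra ε ξ ≤ leftStabilizer (U n))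

include H hU hpoly

theorem IsKLRFamily.poly_le_leftStabilizer_filtration {a : ℕ} (ha : a ≤ n) :
    polySubalgebra ε ξ ≤ leftStabilizer (U a) := by
  induction ha using Nat.decreasingInduction with
  | self => exact hpoly
  | of_succ a ha ih =>
    rw [hU a (Nat.succ_lt_succ ha)]
    exact H.poly_le_leftStabilizer_extendBy _ _ ih

theorem IsKLRFamily.theta_mem_leftStabilizer_filtration
    (hfar : ∀ a (h : a + 2 < n + 1), θ a (Nat.lt_of_succ_lt h) ∈ leftStabilizer (U (a + 2)))
    {a : ℕ} (ha : a ≤ n) (l : ℕ) (h : l + 1 < n + 1) (hal : a ≤ l) :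
    θ l h ∈ leftStabilizer (U a) := by
  have poly {a : ℕ} (ha : a ≤ n) := H.poly_le_leftStabilizer_filtration hU hpoly ha
  induction ha using Nat.decreasingInduction with
  | self => omega
  | of_succ a ha ih =>
    rw [hU a (Nat.succ_lt_succ ha)]
    obtain rfl | rfl | hlt : l = a ∨ l = a + 1 ∨ a + 1 < l := by omega
    · exact H.theta_mem_leftStabilizer_extendBy _ h (poly ha)
    · rw [hU (a + 1) h]
      exact H.theta_succ_mem_leftStabilizer_extendBy _ h (poly (by omega)) (hfar a h)
    · exact mem_leftStabilizer_extendBy_of_commute (H.tautau _ _ _ _ (Or.inr hlt)) (ih (by omega))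

end Filtration

section CosetElements

/-- The element `τ_a ⋯ τ_{n-1}` of `R(n + 1)` (strands counted from `0`), which moves the strand
in position `n` to position `a`; it is `1` for `a ≥ n`. -/
noncomputable def cosetElt : (n : ℕ) → ℕ → Alg C (n + 1)
  | 0, _ => 1
  | n + 1, a =>
    if a ≤ n then appendRight C (n + 1) (cosetElt n a) * Tt C n (Nat.lt_succ_self _) else 1

theorem cosetElt_of_ge {n a : ℕ} (h : n ≤ a) : cosetElt C n a = 1 := by
  cases n with
  | zero => rfl
  | succ n => rw [cosetElt, if_neg (by omega)]

theorem cosetElt_succ {n a : ℕ} (h : a ≤ n) :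
    cosetElt C (n + 1) a =
      appendRight C (n + 1) (cosetElt C n a) * Tt C n (Nat.lt_succ_self _) := by
  rw [cosetElt, if_pos h]

theorem Tt_mul_cosetElt {n a : ℕ} (h : a + 1 < n + 1) :
    Tt C a h * cosetElt C n (a + 1) = cosetElt C n a := by
  induction n with
  | zero => omega
  | succ n ih =>
    rw [cosetElt_succ C (a := a) (by omega)]
    obtain han | rfl : a < n ∨ a = n := by omega
    · rw [cosetElt_succ C han, ← ih (by omega), map_mul, appendRight_Tt, mul_assoc]
    · rw [cosetElt_of_ge C le_rfl, cosetElt_of_ge C le_rfl, map_one, one_mul, mul_one]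

theorem Tt_commute_cosetElt {n a b : ℕ} (h : a + 1 < n + 1) (hab : a + 1 < b) :
    Commute (Tt C a h) (cosetElt C n b) := by
  induction n with
  | zero => omega
  | succ n ih =>
    by_cases hb : b ≤ n
    · rw [cosetElt_succ C hb, ← appendRight_Tt C a (by omega)]
      refine ((ih (by omega)).map (appendRight C (n + 1))).mul_right ?_
      rw [appendRight_Tt]
      exact (isKLRFamily_generators C _).tautau _ _ _ _ (by omega)
    · rw [cosetElt_of_ge C (by omega)]
      exact Commute.one_right _

variable (n : ℕ) (j : I)

/-- The span `k[x_n] ⊗ R(n) e(*, j)` of the elements of `R(n + 1)` with a straight last strand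
labelled `j`. -/
noncomputable def straightSpan : Submodule k (Alg C (n + 1)) :=
  Submodule.span k (Set.range fun p : ℕ × Alg C n =>
    Xx C (Fin.last n) ^ p.1 * (appendRight C n p.2 * lastIdem C n j))

theorem mem_leftStabilizer_straightSpan {z : Alg C (n + 1)}
    (h : ∀ c r, z * (Xx C (Fin.last n) ^ c * (appendRight C n r * lastIdem C n j)) ∈
      straightSpan C n j) : z ∈ leftStabilizer (straightSpan C n j) := by
  have : straightSpan C n j ≤ (straightSpan C n j).comap (LinearMap.mulLeft k z) :=
    Submodule.span_le.2 (by rintro _ ⟨⟨c, r⟩, rfl⟩; exact h c r)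
  exact this

theorem mem_straightSpan (c : ℕ) (r : Alg C n) :
    Xx C (Fin.last n) ^ c * (appendRight C n r * lastIdem C n j) ∈ straightSpan C n j :=
  Submodule.subset_span ⟨(c, r), rfl⟩

theorem appendRight_mem_leftStabilizer (s : Alg C n) :
    appendRight C n s ∈ leftStabilizer (straightSpan C n j) := by
  refine mem_leftStabilizer_straightSpan C n j fun c r => ?_
  rw [← mul_assoc, ← ((Xx_last_commute_appendRight C s).pow_left c).eq, mul_assoc, ← mul_assoc _ _
    (lastIdem C n j), ← map_mul]
  exact mem_straightSpan C n j c (s * r)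

theorem lastIdem_mem_leftStabilizer (i : I) :
    lastIdem C n i ∈ leftStabilizer (straightSpan C n j) := by
  refine mem_leftStabilizer_straightSpan C n j fun c r => ?_
  rw [← mul_assoc, ((lastIdem_commute_Xx C i _).pow_right c).eq, mul_assoc, ← mul_assoc _ _
    (lastIdem C n j), (lastIdem_commute_appendRight C i r).eq, mul_assoc, lastIdem_mul_lastIdem]
  split_ifs with hij
  · exact hij ▸ mem_straightSpan C n j c r
  · simp only [mul_zero, zero_mem]

theorem poly_le_leftStabilizer_straightSpan :
    polySubalgebra (Ee C) (Xx C) ≤ leftStabilizer (straightSpan C n j) := by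
  refine Algebra.adjoin_le (Set.union_subset ?_ ?_)
  · rintro _ ⟨ν, rfl⟩
    rw [← Fin.snoc_init_self ν, ← appendRight_Ee_mul_lastIdem]
    exact mul_mem (appendRight_mem_leftStabilizer C n j _) (lastIdem_mem_leftStabilizer C n j _)
  · rintro _ ⟨a, rfl⟩
    refine Fin.lastCases ?_ (fun a => ?_) a
    · refine mem_leftStabilizer_straightSpan C n j fun c r => ?_
      rw [← mul_assoc, ← pow_succ']
      exact mem_straightSpan C n j (c + 1) r
    · rw [← appendRight_Xx]
      exact appendRight_mem_leftStabilizer C n j _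

/-- The filtration of `R(n + 1) e(*, j)` by the submodules `∑_{a ≤ b ≤ n} τ_b ⋯ τ_{n-1} N`,
where `N` is the span of the elements with a straight last strand. -/
noncomputable def cosetFiltration (a : ℕ) : Submodule k (Alg C (n + 1)) :=
  Submodule.span k {z | ∃ b ∈ Set.Icc a n, ∃ y ∈ straightSpan C n j, cosetElt C n b * y = z}

variable {n}

theorem mem_cosetFiltration {a b : ℕ} (hab : a ≤ b) (hbn : b ≤ n) {y : Alg C (n + 1)}
    (hy : y ∈ straightSpan C n j) : cosetElt C n b * y ∈ cosetFiltration C n j a :=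
  Submodule.subset_span ⟨b, ⟨hab, hbn⟩, y, hy, rfl⟩

theorem Tt_mul_cosetElt_mul {a b : ℕ} (h : a + 1 < n + 1) (hab : a + 2 ≤ b) (hb : b ≤ n)
    (y : Alg C (n + 1)) : Tt C a h * (cosetElt C n b * y) =
      cosetElt C n b * (appendRight C n (Tt C a (by omega)) * y) := by
  rw [appendRight_Tt, ← mul_assoc, (Tt_commute_cosetElt C h hab).eq, mul_assoc]

theorem Tt_mem_leftStabilizer_cosetFiltration (a : ℕ) (h : a + 1 < n + 1) :
    Tt C a h ∈ leftStabilizer (cosetFiltration C n j (a + 2)) := by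
  have : cosetFiltration C n j (a + 2) ≤
      (cosetFiltration C n j (a + 2)).comap (LinearMap.mulLeft k (Tt C a h)) := by
    refine Submodule.span_le.2 ?_
    rintro _ ⟨b, ⟨hab, hb⟩, y, hy, rfl⟩
    simp only [SetLike.mem_coe, Submodule.mem_comap, LinearMap.mulLeft_apply]
    rw [Tt_mul_cosetElt_mul C h hab hb]
    exact mem_cosetFiltration C j hab hb (appendRight_mem_leftStabilizer C n j _ y hy)
  exact this

theorem cosetFiltration_eq_extendBy (a : ℕ) (h : a + 1 < n + 1) :
    cosetFiltration C n j a = extendBy (Tt C a h) (cosetFiltration C n j (a + 1)) := by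
  apply le_antisymm
  · refine Submodule.span_le.2 ?_
    rintro _ ⟨b, ⟨hab, hb⟩, y, hy, rfl⟩
    obtain rfl | hlt := hab.eq_or_lt
    · rw [← Tt_mul_cosetElt C h, mul_assoc]
      exact mul_mem_extendBy _ (mem_cosetFiltration C j le_rfl (by omega) hy)
    · exact le_extendBy _ _ (mem_cosetFiltration C j hlt hb hy)
  · refine sup_le (Submodule.span_le.2 ?_) (Submodule.map_le_iff_le_comap.2
      (Submodule.span_le.2 ?_))
    · rintro _ ⟨b, ⟨hab, hb⟩, y, hy, rfl⟩
      exact mem_cosetFiltration C j (by omega) hb hy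
    · rintro _ ⟨b, ⟨hab, hb⟩, y, hy, rfl⟩
      simp only [SetLike.mem_coe, Submodule.mem_comap, LinearMap.mulLeft_apply]
      obtain rfl | hlt := hab.eq_or_lt
      · rw [← mul_assoc, Tt_mul_cosetElt]
        exact mem_cosetFiltration C j le_rfl (by omega) hy
      · rw [Tt_mul_cosetElt_mul C h hlt hb]
        exact mem_cosetFiltration C j (by omega) hb (appendRight_mem_leftStabilizer C n j _ y hy)

variable (n) in
theorem cosetFiltration_self : cosetFiltration C n j n = straightSpan C n j := by
  simp [cosetFiltration, cosetElt_of_ge]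

theorem leftStabilizer_cosetFiltration_zero :
    leftStabilizer (cosetFiltration C n j 0) = ⊤ := by
  have H := isKLRFamily_generators C (n + 1)
  have hU := cosetFiltration_eq_extendBy C (n := n) j
  have hpoly : polySubalgebra (Ee C) (Xx C) ≤ leftStabilizer (cosetFiltration C n j n) := by
    rw [cosetFiltration_self]
    exact poly_le_leftStabilizer_straightSpan C n j
  have poly_le := H.poly_le_leftStabilizer_filtration hU hpoly (Nat.zero_le n)
  refine eq_top_iff.2 fun z _ => ?_
  induction z using Alg.induction with
  | scalar c => exact algebraMap_mem _ c
  | e ν => exact poly_le (IsKLRFamily.idem_mem_poly ν)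
  | x a => exact poly_le (IsKLRFamily.xi_mem_poly a)
  | tau l h =>
    exact H.theta_mem_leftStabilizer_filtration hU hpoly
      (fun a h => Tt_mem_leftStabilizer_cosetFiltration C j a _) (Nat.zero_le n) l h l.zero_le
  | mul a b ha hb => exact mul_mem (ha trivial) (hb trivial)
  | add a b ha hb => exact add_mem (ha trivial) (hb trivial)

/-- The elements `τ_a ⋯ τ_{n-1} x_n ^ b`, which form a basis of `R(n + 1) e(*, j)` over
`R(n)`. -/
noncomputable def rightBasis (n : ℕ) (q : Fin (n + 1) × ℕ) : Alg C (n + 1) :=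
  cosetElt C n q.1 * Xx C (Fin.last n) ^ q.2

theorem cosetFiltration_le_range (a : ℕ) :
    cosetFiltration C n j a ≤
      LinearMap.range (rightCombination (appendRightHom C n j) (rightBasis C n)) := by
  refine Submodule.span_le.2 ?_
  rintro _ ⟨b, ⟨-, hb⟩, y, hy, rfl⟩
  have : straightSpan C n j ≤
      (LinearMap.range (rightCombination (appendRightHom C n j) (rightBasis C n))).comap
        (LinearMap.mulLeft k (cosetElt C n b)) := by
    refine Submodule.span_le.2 ?_
    rintro _ ⟨⟨c, r⟩, rfl⟩
    exact ⟨Finsupp.single (⟨b, by omega⟩, c) r, by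
      simp [rightCombination_apply, appendRightHom_apply, rightBasis, mul_assoc]⟩
  exact this hy

theorem exists_rightCombination_rightBasis_eq (z : Alg C (n + 1)) :
    ∃ f, rightCombination (appendRightHom C n j) (rightBasis C n) f = z * lastIdem C n j := by
  have idem_mem : lastIdem C n j ∈ cosetFiltration C n j 0 := by
    have := mem_cosetFiltration C j (Nat.zero_le n) le_rfl (mem_straightSpan C n j 0 1)
    simpa [cosetElt_of_ge] using this
  have z_mem : z ∈ leftStabilizer (cosetFiltration C n j 0) :=
    leftStabilizer_cosetFiltration_zero C (n := n) j ▸ Algebra.mem_top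
  exact cosetFiltration_le_range C j 0 (z_mem _ idem_mem)

end CosetElements

/-! ### The rational representation -/

section LocalForm

variable {K : Type} [Field K] [Algebra k K]

/-- A square root of `Q` up to the order of the arguments: one of `halfQ i j` and `halfQ j i` is
`1`, the other is the polynomial `Q_{ij}`. -/
noncomputable def halfQ (i j : I) (u v : K) : K :=
  if Fintype.equivFin I i < Fintype.equivFin I j then 1 else Qel C i j u v

theorem halfQ_mul_halfQ {i j : I} (hij : i ≠ j) (u v : K) :
    halfQ C i j u v * halfQ C j i v u = Qel C i j u v := by
  unfold halfQ
  rcases lt_or_gt_of_ne ((Fintype.equivFin I).injective.ne hij) with h | h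
  · rw [if_pos h, if_neg h.not_gt, one_mul, Qel_symm C _ _ (Commute.all _ _)]
  · rw [if_neg h.not_gt, if_pos h, mul_one]

theorem map_halfQ (s : K ≃ₐ[k] K) (i j : I) (u v : K) :
    s (halfQ C i j u v) = halfQ C i j (s u) (s v) := by
  unfold halfQ
  split_ifs
  · exact map_one s
  · exact map_Qel C s.toAlgHom i j u v

theorem Qdiff_mul_sub (i j : I) (u v w : K) :
    Qdiff C i j u v w * (u - w) = Qel C i j u v - Qel C i j w v := by
  unfold Qdiff Qel
  split_ifs
  · simp
  · simp only [Finset.sum_mul, ← Finset.sum_sub_distrib]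
    refine Finset.sum_congr rfl fun p _ => Finset.sum_congr rfl fun q _ => ?_
    split_ifs
    · rw [← smul_sub, ← sub_mul, ← geom_sum₂_mul, Algebra.smul_mul_assoc]
      simp only [← Finset.sum_mul]
      congr 1
      ring
    · simp

theorem Qel_one_zero {i j : I} (hij : i ≠ j) :
    Qel C i j (1 : k) (0 : k) = C.t i j (-(C.a i j)).toNat 0 := by
  have ha := C.a_nonpos i j hij
  have hd := C.d_pos i
  unfold Qel
  rw [if_neg hij, Finset.sum_eq_single (-(C.a i j)).toNat, Finset.sum_eq_single 0, if_pos]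
  · simp
  · rw [Int.toNat_of_nonneg (by omega)]
    simp
  · intro q _ hq
    simp [hq]
  · simp
  · intro p _ hp
    refine Finset.sum_eq_zero fun q _ => ?_
    by_cases hq : q = 0
    · subst hq
      refine if_neg fun h => hp ?_
      have : C.d i * ((p : ℤ) + C.a i j) = 0 := by push_cast at h; linarith
      rcases mul_eq_zero.1 this with h | h <;> omega
    · simp [hq]
  · simp

/-- The coefficient of the permuted term in the action of a crossing. -/
noncomputable def twistCoeff (u v : K) (i j : I) : K :=
  if i = j then (u - v)⁻¹ else halfQ C i j u v

/-- The coefficient of the unpermuted term in the action of a crossing. -/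
noncomputable def diagCoeff (u v : K) (i j : I) : K := if i = j then -(u - v)⁻¹ else 0

theorem map_twistCoeff (s : K ≃ₐ[k] K) (i j : I) (u v : K) :
    s (twistCoeff C u v i j) = twistCoeff C (s u) (s v) i j := by
  unfold twistCoeff
  split_ifs
  · simp
  · exact map_halfQ C s i j u v

omit [Fintype I] in
theorem map_diagCoeff (s : K ≃ₐ[k] K) (i j : I) (u v : K) :
    s (diagCoeff u v i j) = diagCoeff (s u) (s v) i j := by
  unfold diagCoeff
  split_ifs <;> simp

/-- The braid relation for crossings with neighbouring colours `a b c` and variables `x y z`, where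
`s` and `t` are the field automorphisms underlying the operators `S` and `T`. -/
theorem local_braid (s t : K ≃ₐ[k] K) {x y z : K} (hxy : x ≠ y) (hyz : y ≠ z) (hxz : x ≠ z)
    (sx : s x = y) (sy : s y = x) (sz : s z = z) (tx : t x = x) (ty : t y = z) (tz : t z = y)
    (ss : ∀ f, s (s f) = f) (tt : ∀ f, t (t f) = f) (st : ∀ f, t (s (t f)) = s (t (s f)))
    {S T : (I → I → I → K) → I → I → I → K}
    (hS : ∀ G a b c, S G a b c = twistCoeff C x y a b * s (G b a c) + diagCoeff x y a b * G a b c)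
    (hT : ∀ G a b c, T G a b c = twistCoeff C y z b c * t (G a c b) + diagCoeff y z b c * G a b c)
    (G : I → I → I → K) (a b c : I) :
    T (S (T G)) a b c - S (T (S G)) a b c = if a = c then Qdiff C a b x y z * G a b c else 0 := by
  have h1 : x - y ≠ 0 := sub_ne_zero.2 hxy
  have h2 : y - x ≠ 0 := sub_ne_zero.2 hxy.symm
  have h3 : y - z ≠ 0 := sub_ne_zero.2 hyz
  have h4 : z - y ≠ 0 := sub_ne_zero.2 hyz.symm
  have h5 : x - z ≠ 0 := sub_ne_zero.2 hxz
  simp only [hS, hT, map_add, map_mul, map_twistCoeff, map_diagCoeff, sx, sy, sz, tx, ty, tz, ss,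
    tt, st]
  by_cases hab : a = b
  · subst hab
    by_cases hac : a = c
    · subst hac
      simp only [twistCoeff, diagCoeff, if_true, Qdiff]
      field_simp
      ring
    · simp only [twistCoeff, diagCoeff, if_true, if_neg hac, if_neg (Ne.symm hac)]
      field_simp
      ring
  by_cases hbc : b = c
  · subst hbc
    simp only [twistCoeff, diagCoeff, if_true, if_neg hab, if_neg (Ne.symm hab)]
    field_simp
    ring
  by_cases hac : a = c
  · subst hac
    have hQ : Qdiff C a b x y z = (halfQ C a b x y * halfQ C b a y x
        - halfQ C a b z y * halfQ C b a y z) / (x - z) := by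
      rw [eq_div_iff h5, Qdiff_mul_sub, halfQ_mul_halfQ C hab, halfQ_mul_halfQ C hab]
    simp only [twistCoeff, diagCoeff, if_true, if_neg hab, if_neg hbc, hQ]
    field_simp
    ring
  · simp only [twistCoeff, diagCoeff, if_neg hac, if_neg hab, if_neg hbc, if_neg (Ne.symm hab),
      if_neg (Ne.symm hbc)]
    ring

end LocalForm

section RationalFunctions

variable (k) in
/-- Rational functions in variables `x₀, x₁, …`; infinitely many, so that one field serves
all `R(n)`. -/
abbrev RatFun : Type := FractionRing (MvPolynomial ℕ k)

variable (k) in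
/-- The variable `x_m`. -/
noncomputable def ratVar (m : ℕ) : RatFun k :=
  algebraMap (MvPolynomial ℕ k) (RatFun k) (MvPolynomial.X m)

omit [Fintype I] [DecidableEq I]

theorem ratVar_injective : Function.Injective (ratVar k) :=
  (IsFractionRing.injective (MvPolynomial ℕ k) (RatFun k)).comp MvPolynomial.X_injective

theorem RatFun.algHom_ext {f g : RatFun k →ₐ[k] RatFun k}
    (h : ∀ m, f (ratVar k m) = g (ratVar k m)) : f = g := by
  have hpoly : f.comp (IsScalarTower.toAlgHom k (MvPolynomial ℕ k) (RatFun k)) =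
      g.comp (IsScalarTower.toAlgHom k (MvPolynomial ℕ k) (RatFun k)) :=
    MvPolynomial.algHom_ext h
  have hring : f.toRingHom = g.toRingHom :=
    IsLocalization.ringHom_ext (nonZeroDivisors (MvPolynomial ℕ k))
      (RingHom.ext fun p => DFunLike.congr_fun hpoly p)
  exact AlgHom.ext fun x => DFunLike.congr_fun hring x

variable (k) in
/-- The action of a permutation of the variables on rational functions. -/
noncomputable def permVars (σ : Equiv.Perm ℕ) : RatFun k ≃ₐ[k] RatFun k :=
  IsFractionRing.algEquivOfAlgEquiv (MvPolynomial.renameEquiv k σ)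

@[simp]
theorem permVars_ratVar (σ : Equiv.Perm ℕ) (m : ℕ) :
    permVars k σ (ratVar k m) = ratVar k (σ m) := by
  simp [permVars, ratVar]

theorem permVars_permVars (σ π : Equiv.Perm ℕ) (f : RatFun k) :
    permVars k σ (permVars k π f) = permVars k (σ * π) f := by
  have : (permVars k σ).toAlgHom.comp (permVars k π).toAlgHom = (permVars k (σ * π)).toAlgHom :=
    RatFun.algHom_ext fun m => by simp
  exact DFunLike.congr_fun this f

theorem permVars_one (f : RatFun k) : permVars k 1 f = f := by
  have : (permVars k 1).toAlgHom = AlgHom.id k _ := RatFun.algHom_ext fun m => by simp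
  exact DFunLike.congr_fun this f

variable (k) in
/-- The transposition of the variables `x_l` and `x_{l + 1}`. -/
noncomputable abbrev swapVars (l : ℕ) : RatFun k ≃ₐ[k] RatFun k :=
  permVars k (Equiv.swap l (l + 1))

theorem swapVars_swapVars (l : ℕ) (f : RatFun k) : swapVars k l (swapVars k l f) = f := by
  rw [permVars_permVars, Equiv.swap_mul_self, permVars_one]

theorem swapVars_comm {l l' : ℕ} (far : l + 1 < l' ∨ l' + 1 < l) (f : RatFun k) :
    swapVars k l (swapVars k l' f) = swapVars k l' (swapVars k l f) := by
  rw [permVars_permVars, permVars_permVars]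
  congr 2
  exact (Equiv.Perm.disjoint_swap_swap (by grind)).commute

theorem swapVars_braid (l : ℕ) (f : RatFun k) :
    swapVars k (l + 1) (swapVars k l (swapVars k (l + 1) f)) =
      swapVars k l (swapVars k (l + 1) (swapVars k l f)) := by
  simp only [permVars_permVars]
  congr 2
  rw [← mul_assoc, ← mul_assoc, Equiv.swap_mul_swap_mul_swap (by omega) (by omega),
    Equiv.swap_comm l (l + 1), Equiv.swap_comm (l + 1) (l + 1 + 1),
    Equiv.swap_mul_swap_mul_swap (by omega) (by omega), Equiv.swap_comm]

theorem swapVars_ratVar_of_ne {l b : ℕ} (hb : b ≠ l) (hb' : b ≠ l + 1) :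
    swapVars k l (ratVar k b) = ratVar k b := by
  rw [permVars_ratVar, Equiv.swap_apply_of_ne_of_ne hb hb']

end RationalFunctions

theorem twistCoeff_ratVar_ne_zero {l m : ℕ} (hlm : l ≠ m) (i j : I) :
    twistCoeff C (ratVar k l) (ratVar k m) i j ≠ 0 := by
  unfold twistCoeff halfQ
  split_ifs with hij
  · exact inv_ne_zero (sub_ne_zero.2 (ratVar_injective.ne hlm))
  · exact one_ne_zero
  · intro h
    have hpoly : Qel C i j (MvPolynomial.X l) (MvPolynomial.X m) = (0 : MvPolynomial ℕ k) := by
      refine IsFractionRing.injective (MvPolynomial ℕ k) (RatFun k) ?_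
      rw [map_zero, ← h]
      exact map_Qel C (IsScalarTower.toAlgHom k (MvPolynomial ℕ k) (RatFun k)) i j _ _
    have heval := congrArg (MvPolynomial.aeval fun p => if p = l then (1 : k) else 0) hpoly
    rw [map_Qel, MvPolynomial.aeval_X, MvPolynomial.aeval_X, if_pos rfl, if_neg hlm.symm,
      Qel_one_zero C hij, map_zero] at heval
    exact C.t_lead i j hij heval

section RationalRepresentation

section Sequences

variable {α : Type*} {n l : ℕ}

theorem comp_adjSwap_comp_adjSwap (h : l + 1 < n) (μ : Fin n → α) :
    (μ ∘ adjSwap l h) ∘ adjSwap l h = μ := by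
  funext p
  simp

theorem comp_adjSwap_eq_iff (h : l + 1 < n) {μ ν : Fin n → α} :
    μ ∘ adjSwap l h = ν ↔ μ = ν ∘ adjSwap l h :=
  ⟨fun e => by rw [← e, comp_adjSwap_comp_adjSwap],
    fun e => by rw [e, comp_adjSwap_comp_adjSwap]⟩

theorem comp_adjSwap_of_eq (h : l + 1 < n) {μ : Fin n → α}
    (hμ : μ ⟨l, Nat.lt_of_succ_lt h⟩ = μ ⟨l + 1, h⟩) : μ ∘ adjSwap l h = μ := by
  rw [Equiv.comp_swap_eq_update, hμ, Function.update_eq_self, ← hμ, Function.update_eq_self]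

/-- The sequence `μ` with its entries at `l`, `l + 1`, `l + 2` replaced by `a`, `b`, `c`. -/
def replaceThree (l : ℕ) (μ : Fin n → α) (a b c : α) : Fin n → α := fun p =>
  if p.val = l then a else if p.val = l + 1 then b else if p.val = l + 2 then c else μ p

theorem replaceThree_comp_adjSwap (h : l + 2 < n) (μ : Fin n → α) (a b c : α) :
    replaceThree l μ a b c ∘ adjSwap l (Nat.lt_of_succ_lt h) = replaceThree l μ b a c := by
  funext p
  simp only [replaceThree, Function.comp_apply, Equiv.swap_apply_def, Fin.ext_iff]
  grind

theorem replaceThree_comp_adjSwap_succ (h : l + 2 < n) (μ : Fin n → α) (a b c : α) :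
    replaceThree l μ a b c ∘ adjSwap (l + 1) h = replaceThree l μ a c b := by
  funext p
  simp only [replaceThree, Function.comp_apply, Equiv.swap_apply_def, Fin.ext_iff]
  grind

theorem replaceThree_self (h : l + 2 < n) (μ : Fin n → α) :
    replaceThree l μ (μ ⟨l, by omega⟩) (μ ⟨l + 1, by omega⟩) (μ ⟨l + 2, h⟩) = μ := by
  funext p
  simp only [replaceThree]
  grind

end Sequences

variable (k I) in
/-- The space `⨁_ν k(x₀, x₁, …)` carrying the rational representation of `R(n)`. -/
abbrev RatSpace (n : ℕ) : Type := (Fin n → I) → RatFun k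

variable {n l : ℕ}

variable (k) in
/-- The action of `e(ν)`: the projection to the summand `ν`. -/
noncomputable def seqProj (ν : Fin n → I) : Module.End k (RatSpace k I n) :=
  LinearMap.single k _ ν ∘ₗ LinearMap.proj ν

omit [Fintype I] in
theorem seqProj_apply (ν : Fin n → I) (F : RatSpace k I n) (μ : Fin n → I) :
    seqProj k ν F μ = if μ = ν then F μ else 0 := by
  rcases eq_or_ne μ ν with rfl | h <;> simp [seqProj, *]

variable (k I) in
/-- Multiplication by a rational function. -/
noncomputable def ratMul (n : ℕ) : RatFun k →ₐ[k] Module.End k (RatSpace k I n) :=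
  Algebra.lsmul k k (RatSpace k I n)

omit [Fintype I] [DecidableEq I] in
@[simp]
theorem ratMul_apply (f : RatFun k) (F : RatSpace k I n) : ratMul k I n f F = f • F := rfl

/-- The part of the action of `τ_l` that permutes the variables. -/
noncomputable def twistOp (l : ℕ) (h : l + 1 < n) : Module.End k (RatSpace k I n) where
  toFun F μ := twistCoeff C (ratVar k l) (ratVar k (l + 1))
    (μ ⟨l, Nat.lt_of_succ_lt h⟩) (μ ⟨l + 1, h⟩) * swapVars k l (F (μ ∘ adjSwap l h))
  map_add' F G := by
    funext μ
    simp [mul_add]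
  map_smul' c F := by
    funext μ
    simp

/-- The part of the action of `τ_l` that fixes the variables. -/
noncomputable def diagOp (l : ℕ) (h : l + 1 < n) : Module.End k (RatSpace k I n) where
  toFun F μ := diagCoeff (ratVar k l) (ratVar k (l + 1))
    (μ ⟨l, Nat.lt_of_succ_lt h⟩) (μ ⟨l + 1, h⟩) * F μ
  map_add' F G := by
    funext μ
    simp [mul_add]
  map_smul' c F := by
    funext μ
    simp

/-- The action of `τ_l`: a divided difference between equal colours, and a permutation of variables
followed by multiplication with a factor of `Q` otherwise. -/
noncomputable def crossOp (l : ℕ) (h : l + 1 < n) : Module.End k (RatSpace k I n) :=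
  twistOp C l h + diagOp l h

theorem crossOp_apply (h : l + 1 < n) (F : RatSpace k I n) (μ : Fin n → I) :
    crossOp C l h F μ = twistCoeff C (ratVar k l) (ratVar k (l + 1))
        (μ ⟨l, Nat.lt_of_succ_lt h⟩) (μ ⟨l + 1, h⟩) * swapVars k l (F (μ ∘ adjSwap l h)) +
      diagCoeff (ratVar k l) (ratVar k (l + 1))
        (μ ⟨l, Nat.lt_of_succ_lt h⟩) (μ ⟨l + 1, h⟩) * F μ := rfl

theorem twistOp_smul (h : l + 1 < n) (f : RatFun k) (F : RatSpace k I n) :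
    twistOp C l h (f • F) = swapVars k l f • twistOp C l h F := by
  funext μ
  simp [twistOp, mul_left_comm]

omit [Fintype I] in
theorem diagOp_smul (h : l + 1 < n) (f : RatFun k) (F : RatSpace k I n) :
    diagOp l h (f • F) = f • diagOp l h F := by
  funext μ
  simp [diagOp, mul_left_comm]

theorem crossOp_smul (h : l + 1 < n) (f : RatFun k) (F : RatSpace k I n) :
    crossOp C l h (f • F) = swapVars k l f • crossOp C l h F +
      (f - swapVars k l f) • diagOp l h F := by
  simp only [crossOp, LinearMap.add_apply, twistOp_smul, diagOp_smul, smul_add, sub_smul]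
  abel

theorem crossOp_smul_of_fixed (h : l + 1 < n) {f : RatFun k} (hf : swapVars k l f = f)
    (F : RatSpace k I n) : crossOp C l h (f • F) = f • crossOp C l h F := by
  rw [crossOp_smul, hf, sub_self, zero_smul, add_zero]

theorem twistOp_injective (h : l + 1 < n) :
    Function.Injective (twistOp C l h : RatSpace k I n → RatSpace k I n) := by
  refine (injective_iff_map_eq_zero _).2 fun F hF => funext fun μ => ?_
  have := congr_fun hF (μ ∘ adjSwap l h)
  simpa [twistOp, comp_adjSwap_comp_adjSwap, twistCoeff_ratVar_ne_zero] using this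

theorem crossOp_mul_seqProj (h : l + 1 < n) (ν : Fin n → I) :
    crossOp C l h * seqProj k ν = seqProj k (ν ∘ adjSwap l h) * crossOp C l h := by
  refine LinearMap.ext fun F => funext fun μ => ?_
  simp only [Module.End.mul_apply, seqProj_apply, crossOp_apply, comp_adjSwap_eq_iff]
  by_cases hμ : μ ⟨l, Nat.lt_of_succ_lt h⟩ = μ ⟨l + 1, h⟩
  · have hν : μ = ν ∘ adjSwap l h ↔ μ = ν := by
      rw [← comp_adjSwap_eq_iff, comp_adjSwap_of_eq h hμ]
    simp only [hν]
    split_ifs <;> simp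
  · simp only [diagCoeff, if_neg hμ]
    split_ifs <;> simp

theorem crossOp_comm {l' : ℕ} (h : l + 1 < n) (h' : l' + 1 < n)
    (far : l + 1 < l' ∨ l' + 1 < l) :
    crossOp C l h * crossOp C l' h' = crossOp C l' h' * crossOp C l h := by
  refine LinearMap.ext fun F => funext fun μ => ?_
  have hswap : (μ ∘ adjSwap l h) ∘ adjSwap l' h' = (μ ∘ adjSwap l' h') ∘ adjSwap l h := by
    rw [Function.comp_assoc, Function.comp_assoc, ← Equiv.Perm.coe_mul, ← Equiv.Perm.coe_mul,
      (Equiv.Perm.disjoint_swap_swap (by grind)).commute.eq]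
  simp only [Module.End.mul_apply, crossOp_apply, map_add, map_mul, map_twistCoeff, map_diagCoeff,
    Function.comp_apply]
  rw [adjSwap_apply_of_ne h (a := ⟨l', _⟩) (by grind) (by grind),
    adjSwap_apply_of_ne h (a := ⟨l' + 1, _⟩) (by grind) (by grind),
    adjSwap_apply_of_ne h' (a := ⟨l, _⟩) (by grind) (by grind),
    adjSwap_apply_of_ne h' (a := ⟨l + 1, _⟩) (by grind) (by grind),
    swapVars_ratVar_of_ne (l := l) (b := l') (by grind) (by grind),
    swapVars_ratVar_of_ne (l := l) (b := l' + 1) (by grind) (by grind),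
    swapVars_ratVar_of_ne (l := l') (b := l) (by grind) (by grind),
    swapVars_ratVar_of_ne (l := l') (b := l + 1) (by grind) (by grind), swapVars_comm far, hswap]
  ring

theorem crossOp_crossOp_apply (h : l + 1 < n) (F : RatSpace k I n) (μ : Fin n → I) :
    crossOp C l h (crossOp C l h F) μ = Qel C (μ ⟨l, Nat.lt_of_succ_lt h⟩) (μ ⟨l + 1, h⟩)
      (ratVar k l) (ratVar k (l + 1)) * F μ := by
  have hne : ratVar k l ≠ ratVar k (l + 1) := ratVar_injective.ne (by omega)
  by_cases hμ : μ ⟨l, Nat.lt_of_succ_lt h⟩ = μ ⟨l + 1, h⟩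
  · have h1 : ratVar k l - ratVar k (l + 1) ≠ 0 := sub_ne_zero.2 hne
    have h2 : ratVar k (l + 1) - ratVar k l ≠ 0 := sub_ne_zero.2 hne.symm
    simp only [crossOp_apply, comp_adjSwap_of_eq h hμ, map_add, map_mul, map_twistCoeff,
      map_diagCoeff, permVars_ratVar, Equiv.swap_apply_left, Equiv.swap_apply_right,
      swapVars_swapVars]
    simp only [twistCoeff, diagCoeff, if_pos hμ, Qel]
    field_simp
    ring
  · simp only [crossOp_apply, comp_adjSwap_comp_adjSwap, map_add, map_mul, map_twistCoeff,
      map_diagCoeff, permVars_ratVar, Function.comp_apply, Equiv.swap_apply_left,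
      Equiv.swap_apply_right, swapVars_swapVars]
    simp only [twistCoeff, diagCoeff, if_neg hμ, if_neg (Ne.symm hμ), ← halfQ_mul_halfQ C hμ]
    ring

theorem crossOp_ratVar_smul_apply (h : l + 1 < n) (m : Fin n) (F : RatSpace k I n)
    (μ : Fin n → I) :
    crossOp C l h (ratVar k m • F) μ - (ratVar k (adjSwap l h m) • crossOp C l h F) μ =
      if m = ⟨l, Nat.lt_of_succ_lt h⟩ ∧ μ ⟨l, Nat.lt_of_succ_lt h⟩ = μ ⟨l + 1, h⟩ then -F μ
      else if m = ⟨l + 1, h⟩ ∧ μ ⟨l, Nat.lt_of_succ_lt h⟩ = μ ⟨l + 1, h⟩ then F μ else 0 := by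
  have hsub : ratVar k l - ratVar k (l + 1) ≠ 0 :=
    sub_ne_zero.2 (ratVar_injective.ne (by omega))
  have hm : swapVars k l (ratVar k m) = ratVar k (adjSwap l h m) := by
    rw [permVars_ratVar]
    congr 1
    exact Fin.val_injective.swap_apply (⟨l, Nat.lt_of_succ_lt h⟩ : Fin n) ⟨l + 1, h⟩ m
  rw [crossOp_smul, hm, Pi.add_apply, add_sub_cancel_left]
  by_cases hμ : μ ⟨l, Nat.lt_of_succ_lt h⟩ = μ ⟨l + 1, h⟩
  · simp only [diagOp, diagCoeff, hμ, LinearMap.coe_mk, AddHom.coe_mk, Pi.smul_apply, smul_eq_mul,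
      if_true, and_true]
    by_cases hl : m = ⟨l, Nat.lt_of_succ_lt h⟩
    · subst hl
      simp only [if_true, Equiv.swap_apply_left]
      field_simp
    by_cases hl' : m = ⟨l + 1, h⟩
    · subst hl'
      simp only [if_neg hl, if_true, Equiv.swap_apply_right]
      field_simp
      ring
    · simp [if_neg hl, if_neg hl', Equiv.swap_apply_of_ne_of_ne hl hl']
  · simp [diagOp, diagCoeff, hμ]

theorem crossOp_braid_apply (h : l + 2 < n) (F : RatSpace k I n) (μ : Fin n → I) :
    crossOp C (l + 1) h (crossOp C l (Nat.lt_of_succ_lt h) (crossOp C (l + 1) h F)) μ -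
        crossOp C l (Nat.lt_of_succ_lt h) (crossOp C (l + 1) h
          (crossOp C l (Nat.lt_of_succ_lt h) F)) μ =
      if μ ⟨l, by omega⟩ = μ ⟨l + 2, h⟩ then
        Qdiff C (μ ⟨l, by omega⟩) (μ ⟨l + 1, by omega⟩) (ratVar k l) (ratVar k (l + 1))
          (ratVar k (l + 2)) * F μ
      else 0 := by
  have hne {a b : ℕ} (hab : a ≠ b) : ratVar k a ≠ ratVar k b := ratVar_injective.ne hab
  have hS (F : RatSpace k I n) (a b c : I) :
      crossOp C l (Nat.lt_of_succ_lt h) F (replaceThree l μ a b c) =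
        twistCoeff C (ratVar k l) (ratVar k (l + 1)) a b *
          swapVars k l (F (replaceThree l μ b a c)) +
        diagCoeff (ratVar k l) (ratVar k (l + 1)) a b * F (replaceThree l μ a b c) := by
    rw [crossOp_apply, replaceThree_comp_adjSwap h]
    simp [replaceThree]
  have hT (F : RatSpace k I n) (a b c : I) :
      crossOp C (l + 1) h F (replaceThree l μ a b c) =
        twistCoeff C (ratVar k (l + 1)) (ratVar k (l + 2)) b c *
          swapVars k (l + 1) (F (replaceThree l μ a c b)) +
        diagCoeff (ratVar k (l + 1)) (ratVar k (l + 2)) b c * F (replaceThree l μ a b c) := by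
    rw [crossOp_apply, replaceThree_comp_adjSwap_succ h]
    simp [replaceThree, show l + 1 + 1 ≠ l by omega]
  have := local_braid C (swapVars k l) (swapVars k (l + 1)) (hne (by omega : l ≠ l + 1))
    (hne (by omega : l + 1 ≠ l + 2)) (hne (by omega : l ≠ l + 2)) (by simp) (by simp)
    (swapVars_ratVar_of_ne (by omega) (by omega)) (swapVars_ratVar_of_ne (by omega) (by omega))
    (by simp) (by simp) (swapVars_swapVars l) (swapVars_swapVars (l + 1)) (swapVars_braid l)
    (fun _ _ _ _ => rfl) (fun _ _ _ _ => rfl) (fun a b c => F (replaceThree l μ a b c))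
    (μ ⟨l, by omega⟩) (μ ⟨l + 1, by omega⟩) (μ ⟨l + 2, h⟩)
  simp only [← hS, ← hT] at this
  rwa [replaceThree_self h] at this

theorem isKLRFamily_rational (n : ℕ) : IsKLRFamily C (fun ν => seqProj k ν)
    (fun a : Fin n => ratMul k I n (ratVar k a)) (fun l h => crossOp C l h) where
  ee ν ν' := by
    refine LinearMap.ext fun F => funext fun μ => ?_
    split_ifs <;> simp_all [seqProj_apply]
  esum := by
    refine LinearMap.ext fun F => funext fun μ => ?_
    simp [seqProj_apply]
  xx a b := by rw [← map_mul, mul_comm, map_mul]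
  xe a ν := by
    refine LinearMap.ext fun F => funext fun μ => ?_
    simp [seqProj_apply]
  taue l h ν := crossOp_mul_seqProj C h ν
  tautau l h l' h' far := crossOp_comm C h h' far
  tausq l h ν := by
    rw [← map_Qel]
    refine LinearMap.ext fun F => funext fun μ => ?_
    simp only [pow_two, Module.End.mul_apply, crossOp_crossOp_apply, ratMul_apply, Pi.smul_apply,
      smul_eq_mul, seqProj_apply]
    grind
  taux l h m ν := by
    refine LinearMap.ext fun F => funext fun μ => ?_
    refine (crossOp_ratVar_smul_apply C h m (seqProj k ν F) μ).trans ?_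
    rcases eq_or_ne μ ν with rfl | hμ
    · split_ifs <;> simp
    · split_ifs <;> simp [seqProj_apply, hμ]
  braid l h ν := by
    rw [← map_Qdiff]
    refine LinearMap.ext fun F => funext fun μ => ?_
    refine (crossOp_braid_apply C h (seqProj k ν F) μ).trans ?_
    rcases eq_or_ne μ ν with rfl | hμ
    · split_ifs <;> simp
    · split_ifs <;> simp [seqProj_apply, hμ]

/-- The rational representation of `R(n)`. -/
noncomputable def ratRep (n : ℕ) : Alg C n →ₐ[k] Module.End k (RatSpace k I n) :=
  (isKLRFamily_rational C n).lift

@[simp]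
theorem ratRep_Ee (ν : Fin n → I) : ratRep C n (Ee C ν) = seqProj k ν :=
  IsKLRFamily.lift_Ee _ _

@[simp]
theorem ratRep_Xx (a : Fin n) : ratRep C n (Xx C a) = ratMul k I n (ratVar k a) :=
  IsKLRFamily.lift_Xx _ _

@[simp]
theorem ratRep_Tt (l : ℕ) (h : l + 1 < n) : ratRep C n (Tt C l h) = crossOp C l h :=
  IsKLRFamily.lift_Tt _ _ _

end RationalRepresentation

/-! ### Triangularity of the coset elements -/

section Independence

variable {n : ℕ}

/-- A decomposition `T = ∑_{a ≤ b ≤ n} h_b` in which `h_b` turns the variable `x_n` into `x_b` and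
the leading term `h_a` is injective. -/
structure IsTriangularDecomp (a : ℕ) (T : Module.End k (RatSpace k I (n + 1)))
    (h : ℕ → Module.End k (RatSpace k I (n + 1))) : Prop where
  eq_zero : ∀ b < a, h b = 0
  sum_eq : ∑ b : Fin (n + 1), h b = T
  smul : ∀ b c G, h b (ratVar k n ^ c • G) = ratVar k b ^ c • h b G
  injective : Function.Injective (h a)

/-- The components of `τ_a T` if those of `T` are `h`: only the component at `a + 1` is moved
by the transposition of variables, to `a`. -/
noncomputable def crossComponents (a : ℕ) (ha : a + 1 < n + 1)
    (h : ℕ → Module.End k (RatSpace k I (n + 1))) (b : ℕ) :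
    Module.End k (RatSpace k I (n + 1)) :=
  if b = a then twistOp C a ha * h (a + 1)
  else if b = a + 1 then diagOp a ha * h (a + 1)
  else crossOp C a ha * h b

omit [Fintype I] [DecidableEq I] in
theorem isTriangularDecomp_one :
    IsTriangularDecomp n (1 : Module.End k (RatSpace k I (n + 1))) (Pi.single n 1) where
  eq_zero b hb := Pi.single_eq_of_ne hb.ne _
  sum_eq := by
    rw [Fintype.sum_eq_single (Fin.last n) fun b hb =>
      Pi.single_eq_of_ne (by simpa [Fin.ext_iff] using hb) _]
    simp
  smul b c G := by
    rcases eq_or_ne b n with rfl | hb <;> simp [*]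
  injective := by
    rw [Pi.single_eq_same]
    exact Function.injective_id

theorem IsTriangularDecomp.cross {a : ℕ} {T : Module.End k (RatSpace k I (n + 1))}
    {h : ℕ → Module.End k (RatSpace k I (n + 1))} (H : IsTriangularDecomp (a + 1) T h)
    (ha : a + 1 < n + 1) :
    IsTriangularDecomp a (crossOp C a ha * T) (crossComponents C a ha h) where
  eq_zero b hb := by
    simp [crossComponents, hb.ne, (hb.trans a.lt_succ_self).ne, H.eq_zero b (by omega)]
  sum_eq := by
    have hcomp (b : Fin (n + 1)) : crossComponents C a ha h b = crossOp C a ha * h b +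
        ((if b = ⟨a, by omega⟩ then twistOp C a ha * h (a + 1) else 0) -
          if b = ⟨a + 1, ha⟩ then twistOp C a ha * h (a + 1) else 0) := by
      unfold crossComponents
      by_cases hb : b = ⟨a, by omega⟩
      · simp [hb, H.eq_zero]
      by_cases hb' : b = ⟨a + 1, ha⟩
      · simp [hb', crossOp, add_mul]
      · simp [Fin.ext_iff.not.1 hb, Fin.ext_iff.not.1 hb', hb, hb']
    simp [hcomp, Finset.sum_add_distrib, ← Finset.mul_sum, H.sum_eq]
  smul b c G := by
    unfold crossComponents
    split_ifs with hb hb'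
    · simp [hb, H.smul, twistOp_smul]
    · simp [hb', H.smul, diagOp_smul]
    · rw [Module.End.mul_apply, H.smul, crossOp_smul_of_fixed]
      · rfl
      · rw [map_pow, swapVars_ratVar_of_ne hb hb']
  injective := by
    rw [crossComponents, if_pos rfl]
    exact (twistOp_injective C ha).comp H.injective

theorem exists_isTriangularDecomp_cosetElt {a : ℕ} (ha : a ≤ n) :
    ∃ h, IsTriangularDecomp a (ratRep C (n + 1) (cosetElt C n a)) h := by
  induction ha using Nat.decreasingInduction with
  | self => exact ⟨_, by simpa [cosetElt_of_ge] using isTriangularDecomp_one⟩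
  | of_succ a ha ih =>
    obtain ⟨h, H⟩ := ih
    rw [← Tt_mul_cosetElt C (by omega), map_mul, ratRep_Tt]
    exact ⟨_, H.cross C _⟩

omit [Fintype I] [DecidableEq I] in
theorem eq_zero_of_forall_sum_ratVar_pow_smul {G : Fin n → RatSpace k I n}
    (h : ∀ c : ℕ, ∑ b : Fin n, ratVar k b ^ c • G b = 0) (b : Fin n) : G b = 0 := by
  funext μ
  refine congr_fun (Matrix.eq_zero_of_forall_pow_sum_mul_pow_eq_zero (v := fun b => G b μ)
    (f := fun b : Fin n => ratVar k b) (ratVar_injective.comp Fin.val_injective) fun c => ?_) b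
  simpa [mul_comm] using congr_fun (h c) μ

theorem eq_zero_of_forall_sum_cosetElt {G : Fin (n + 1) → RatSpace k I (n + 1)}
    (h : ∀ c : ℕ, ∑ a : Fin (n + 1),
      ratRep C (n + 1) (cosetElt C n a) (ratVar k n ^ c • G a) = 0) (a : Fin (n + 1)) :
    G a = 0 := by
  choose t ht using fun a : Fin (n + 1) =>
    exists_isTriangularDecomp_cosetElt C (Nat.lt_succ_iff.1 a.2)
  have hcol (b : Fin (n + 1)) : ∑ a, t a b (G a) = 0 := by
    refine eq_zero_of_forall_sum_ratVar_pow_smul (G := fun b => ∑ a, t a b (G a)) (fun c => ?_) b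
    rw [← h c]
    simp only [Finset.smul_sum, ← (ht _).sum_eq, LinearMap.sum_apply, (ht _).smul]
    exact Finset.sum_comm
  induction a using Fin.strong_induction_on with
  | _ a ih =>
    refine (ht a).injective ?_
    rw [map_zero, ← hcol a, Fintype.sum_eq_single a fun b hb => ?_]
    obtain hlt | hgt := lt_or_gt_of_ne hb
    · rw [ih b hlt, map_zero]
    · rw [(ht b).eq_zero a hgt, LinearMap.zero_apply]

end Independence

/-! ### Faithfulness and independence -/

section Faithful

variable {n : ℕ}

/-- Extension of a vector by zero to the sequences whose last entry is not `j`. -/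
noncomputable def extendLast (j : I) : RatSpace k I n →ₗ[RatFun k] RatSpace k I (n + 1) where
  toFun F μ := if μ (Fin.last n) = j then F (Fin.init μ) else 0
  map_add' F G := by
    funext μ
    simp [ite_add_ite]
  map_smul' f F := by
    funext μ
    simp

omit [Fintype I] in
theorem extendLast_apply (j : I) (F : RatSpace k I n) (μ : Fin (n + 1) → I) :
    extendLast j F μ = if μ (Fin.last n) = j then F (Fin.init μ) else 0 := rfl

omit [Fintype I] in
theorem extendLast_injective (j : I) :
    Function.Injective (extendLast (k := k) j : RatSpace k I n → RatSpace k I (n + 1)) := by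
  refine fun F G h => funext fun μ => ?_
  simpa [extendLast_apply] using congr_fun h (Fin.snoc μ j)

omit [Fintype I] [DecidableEq I] in
theorem ratSpace_ext_snoc {F G : RatSpace k I (n + 1)}
    (h : ∀ (ν : Fin n → I) (i : I), F (Fin.snoc ν i) = G (Fin.snoc ν i)) : F = G :=
  funext fun μ => Fin.snoc_init_self μ ▸ h _ _

omit [Fintype I] in
theorem seqProj_snoc_extendLast (ν : Fin n → I) (i j : I) (F : RatSpace k I n) :
    seqProj k (Fin.snoc ν i) (extendLast j F) =
      if i = j then extendLast j (seqProj k ν F) else 0 := by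
  refine ratSpace_ext_snoc fun μ i' => ?_
  by_cases hij : i = j <;> by_cases hμ : μ = ν <;> by_cases hi : i' = i <;>
    simp_all [seqProj_apply, extendLast_apply, Fin.snoc_inj]

theorem crossOp_extendLast {l : ℕ} (h : l + 1 < n) (j : I) (F : RatSpace k I n) :
    crossOp C l (Nat.lt_succ_of_lt h) (extendLast j F) = extendLast j (crossOp C l h F) := by
  refine ratSpace_ext_snoc fun μ i => ?_
  simp only [crossOp_apply, ← snoc_comp_adjSwap h, extendLast_apply, Fin.snoc_last, Fin.init_snoc,
    snoc_mk h, snoc_mk (Nat.lt_of_succ_lt h)]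
  split_ifs <;> simp

theorem ratRep_appendRight_extendLast (j : I) (r : Alg C n) (F : RatSpace k I n) :
    ratRep C (n + 1) (appendRight C n r) (extendLast j F) = extendLast j (ratRep C n r F) := by
  induction r using Alg.induction generalizing F with
  | scalar c => simp [LinearMap.map_smul_of_tower]
  | e ν => simp [appendRight_Ee, seqProj_snoc_extendLast]
  | x a => simp
  | tau l h => simp [crossOp_extendLast C h]
  | mul a b ha hb => simp [ha, hb]
  | add a b ha hb => simp [ha, hb]

theorem ratRep_lastIdem_extendLast (j : I) (F : RatSpace k I n) :
    ratRep C (n + 1) (lastIdem C n j) (extendLast j F) = extendLast j F := by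
  have hone : ∑ ν : Fin n → I, seqProj k ν F = F := by
    funext μ
    simp [seqProj_apply]
  simp only [lastIdem, map_sum, LinearMap.sum_apply, ratRep_Ee, seqProj_snoc_extendLast, if_true]
  rw [← map_sum, hone]

theorem ratRep_smul_of_fixed {p : RatFun k} (hp : ∀ l, l + 1 < n → swapVars k l p = p)
    (r : Alg C n) (F : RatSpace k I n) : ratRep C n r (p • F) = p • ratRep C n r F := by
  refine LinearMap.congr_fun (commute_of_generators C (ratRep C n) (z := ratMul k I n p)
    (fun ν => ?_) (fun a => ?_) (fun l h => ?_) r).eq.symm F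
  · rw [ratRep_Ee]
    refine LinearMap.ext fun F => funext fun μ => ?_
    simp [seqProj_apply]
  · rw [ratRep_Xx]
    exact (Commute.all p _).map (ratMul k I n)
  · rw [ratRep_Tt]
    exact LinearMap.ext fun F => (crossOp_smul_of_fixed C h (hp l h) F).symm

theorem eq_sum_mul_lastIdem (z : Alg C (n + 1)) : z = ∑ j, z * lastIdem C n j := by
  rw [← Finset.mul_sum]
  simp only [lastIdem]
  rw [Finset.sum_comm, sum_snoc fun μ => Ee C μ, (isKLRFamily_generators C (n + 1)).esum, mul_one]

theorem Alg.exists_algebraMap_eq (z : Alg C 0) : ∃ c : k, algebraMap k _ c = z := by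
  induction z using Alg.induction with
  | scalar c => exact ⟨c, rfl⟩
  | e ν =>
    refine ⟨1, ?_⟩
    rw [map_one, ← (isKLRFamily_generators C 0).esum]
    exact Fintype.sum_subsingleton _ ν
  | x a => exact a.elim0
  | tau l h => omega
  | mul a b ha hb =>
    obtain ⟨⟨c, rfl⟩, d, rfl⟩ := And.intro ha hb
    exact ⟨c * d, map_mul _ _ _⟩
  | add a b ha hb =>
    obtain ⟨⟨c, rfl⟩, d, rfl⟩ := And.intro ha hb
    exact ⟨c + d, map_add _ _ _⟩

/-- A family of rational functions that are symmetric in `x_0, …, x_{n-1}` and linearly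
independent over the polynomials in these variables. Such functions can be used as coefficients
in the proof that `R(n)` acts faithfully, by induction on `n`. -/
structure IsIndependentSymmetric (n : ℕ) {ι : Type} (p : ι → RatFun k) : Prop where
  fixed : ∀ s l, l + 1 < n → swapVars k l (p s) = p s
  linearIndependent : LinearIndependent k fun q : (Fin n → ℕ) × ι =>
    (∏ i : Fin n, ratVar k i ^ q.1 i) * p q.2

theorem isIndependentSymmetric_one (n : ℕ) :
    IsIndependentSymmetric n fun _ : Unit => (1 : RatFun k) where
  fixed _ _ _ := map_one _
  linearIndependent := by
    have hvar : AlgebraicIndependent k fun i : Fin n => ratVar k i :=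
      ((MvPolynomial.algebraicIndependent_X ℕ k).map' (f := IsScalarTower.toAlgHom k _ (RatFun k))
        (IsFractionRing.injective _ _)).comp _ Fin.val_injective
    have hmono := ((MvPolynomial.basisMonomials (Fin n) k).linearIndependent.map'
      (MvPolynomial.aeval fun i : Fin n => ratVar k i).toLinearMap
      (LinearMap.ker_eq_bot.2 hvar)).comp
        (fun q : (Fin n → ℕ) × Unit => Finsupp.equivFunOnFinite.symm q.1) fun q q' h =>
          Prod.ext (Finsupp.equivFunOnFinite.symm.injective h) rfl
    simpa [Function.comp_def, MvPolynomial.aeval_monomial, Finsupp.prod_fintype] using hmono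

theorem IsIndependentSymmetric.pow_mul {ι : Type} {p : ι → RatFun k}
    (hp : IsIndependentSymmetric (n + 1) p) (N : ℕ) :
    IsIndependentSymmetric n fun q : Fin N × ι => ratVar k n ^ (q.1 : ℕ) * p q.2 where
  fixed s l hl := by
    rw [map_mul, map_pow, hp.fixed _ l (by omega), swapVars_ratVar_of_ne (by omega) (by omega)]
  linearIndependent := by
    have := hp.linearIndependent.comp
      (fun q : (Fin n → ℕ) × Fin N × ι => ((Fin.snoc q.1 q.2.1 : Fin (n + 1) → ℕ), q.2.2)) ?_
    · simpa [Function.comp_def, Fin.prod_univ_castSucc, mul_assoc] using this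
    · rintro ⟨a, b, c⟩ ⟨a', b', c'⟩ h
      simpa [Fin.ext_iff, and_assoc] using h

omit [Field k] [Fintype I] [DecidableEq I] in
theorem exists_forall_le_snd_eq_zero {α ι A : Type*} [Finite ι] [Zero A] (f : ι → α × ℕ →₀ A) :
    ∃ N, ∀ s q, N ≤ q.2 → f s q = 0 := by
  obtain ⟨N, hN⟩ := (Set.finite_iUnion fun s =>
    (f s).support.finite_toSet.image Prod.snd).bddAbove
  refine ⟨N + 1, fun s q hq => ?_⟩
  by_contra hs
  have : q.2 ≤ N := hN (Set.mem_iUnion.2 ⟨s, q, Finsupp.mem_support_iff.2 hs, rfl⟩)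
  omega

theorem ratRep_rightCombination_extendLast (j : I) {f : Fin (n + 1) × ℕ →₀ Alg C n} {N : ℕ}
    (hN : ∀ q, N ≤ q.2 → f q = 0) {p : RatFun k}
    (hp : ∀ l, l + 1 < n + 1 → swapVars k l p = p) (c : ℕ) (F : RatSpace k I n) :
    p • ratRep C (n + 1) (rightCombination (appendRightHom C n j) (rightBasis C n) f)
        (ratVar k n ^ c • extendLast j F) =
      ∑ a : Fin (n + 1), ratRep C (n + 1) (cosetElt C n a) (ratVar k n ^ c •
        extendLast j (∑ b : Fin N, (ratVar k n ^ (b : ℕ) * p) • ratRep C n (f (a, b)) F)) := by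
  have hlast (a : Fin (n + 1)) (b : Fin N) :
      ratRep C (n + 1) (rightBasis C n (a, b) * (appendRight C n (f (a, b)) * lastIdem C n j))
        (ratVar k n ^ c • extendLast j F) = ratRep C (n + 1) (cosetElt C n a)
          (ratVar k n ^ c • ratVar k n ^ (b : ℕ) • extendLast j (ratRep C n (f (a, b)) F)) := by
    have hfixed (l : ℕ) (hl : l + 1 < n) : swapVars k l (ratVar k n ^ c) = ratVar k n ^ c := by
      rw [map_pow, swapVars_ratVar_of_ne (by omega) (by omega)]
    rw [← map_smul, rightBasis, smul_comm, ← map_smul (extendLast j),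
      ← ratRep_smul_of_fixed C hfixed]
    simp only [map_mul, map_pow, Module.End.mul_apply, ratRep_lastIdem_extendLast,
      ratRep_appendRight_extendLast, ratRep_Xx]
    simp only [← map_pow, ratMul_apply, Fin.val_last]
  simp only [rightCombination_eq_sum_fin _ _ hN, appendRightHom_apply, map_sum,
    LinearMap.sum_apply, Finset.smul_sum, hlast, ← ratRep_smul_of_fixed C hp, map_smul, mul_smul]
  simp only [smul_comm p (ratVar k n ^ _)]

theorem sum_ratRep_coeff_eq_zero {ι : Type} [Fintype ι] (j : I) {N : ℕ}
    {f : ι → Fin (n + 1) × ℕ →₀ Alg C n} (hN : ∀ s q, N ≤ q.2 → f s q = 0)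
    {p : ι → RatFun k} (hp : ∀ s l, l + 1 < n + 1 → swapVars k l (p s) = p s)
    (h : ∀ F, ∑ s, p s • ratRep C (n + 1)
      (rightCombination (appendRightHom C n j) (rightBasis C n) (f s)) F = 0)
    (a : Fin (n + 1)) (F : RatSpace k I n) :
    ∑ q : Fin N × ι, (ratVar k n ^ (q.1 : ℕ) * p q.2) • ratRep C n (f q.2 (a, q.1)) F = 0 := by
  refine extendLast_injective (k := k) j ?_
  rw [map_zero]
  refine eq_zero_of_forall_sum_cosetElt C (G := fun a => extendLast j (∑ q : Fin N × ι,
    (ratVar k n ^ (q.1 : ℕ) * p q.2) • ratRep C n (f q.2 (a, q.1)) F)) (fun c => ?_) a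
  rw [← h (ratVar k n ^ c • extendLast j F)]
  simp only [ratRep_rightCombination_extendLast C j (hN _) (hp _)]
  rw [Finset.sum_comm]
  simp only [← map_sum, ← Finset.smul_sum, Fintype.sum_prod_type_right]

theorem eq_zero_of_forall_sum_smul_ratRep (n : ℕ) {ι : Type} [Fintype ι] {p : ι → RatFun k}
    (hp : IsIndependentSymmetric n p) {r : ι → Alg C n}
    (h : ∀ F, ∑ s, p s • ratRep C n (r s) F = 0) (s : ι) : r s = 0 := by
  induction n generalizing ι with
  | zero =>
    choose c hc using fun s => (r s).exists_algebraMap_eq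
    have hli : LinearIndependent k p := by
      simpa [Function.comp_def] using hp.linearIndependent.comp (fun s => (Fin.elim0, s))
        fun s s' hs => (Prod.ext_iff.1 hs).2
    have hsum : ∑ s, c s • p s = 0 := by
      simpa [← hc] using congr_fun (h fun _ => 1) Fin.elim0
    rw [← hc, Fintype.linearIndependent_iff.1 hli c hsum, map_zero]
  | succ n ih =>
    rw [eq_sum_mul_lastIdem C (r s)]
    refine Finset.sum_eq_zero fun j _ => ?_
    choose f hf using fun s => exists_rightCombination_rightBasis_eq C j (r s)
    obtain ⟨N, hN⟩ := exists_forall_le_snd_eq_zero f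
    rw [← hf, rightCombination_eq_sum_fin _ _ (hN s)]
    refine Finset.sum_eq_zero fun a _ => Finset.sum_eq_zero fun b _ => ?_
    rw [ih (hp.pow_mul N) (r := fun q => f q.2 (a, q.1)) (sum_ratRep_coeff_eq_zero C j hN hp.fixed
      (fun F => ?_) a) (b, s), map_zero, mul_zero]
    simpa [hf] using h (ratRep C (n + 1) (lastIdem C n j) F)

variable (n) in
theorem isRightBasis_rightBasis (j : I) : IsRightBasis (appendRightHom C n j) (rightBasis C n) where
  exists_eq b := by
    rw [appendRightHom_one]
    exact exists_rightCombination_rightBasis_eq C j b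
  injective := by
    refine (injective_iff_map_eq_zero _).2 fun f hf => Finsupp.ext fun q => ?_
    obtain ⟨N, hN⟩ := exists_forall_le_snd_eq_zero fun _ : Unit => f
    obtain hq | hq := le_or_gt N q.2
    · exact hN () q hq
    have hp := isIndependentSymmetric_one (k := k) (n + 1)
    exact eq_zero_of_forall_sum_smul_ratRep C n (hp.pow_mul N) (r := fun b => f (q.1, b.1))
      (sum_ratRep_coeff_eq_zero C j hN hp.fixed (by simp [hf]) q.1) (⟨q.2, hq⟩, ())

end Faithful

/-! ### Crossing the last two strands -/

section LastCrossing

variable {n : ℕ}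

/-- The crossing of the last two strands. -/
noncomputable abbrev lastCross (n : ℕ) : Alg C (n + 2) := Tt C n (Nat.lt_succ_self _)

/-- The sum of the idempotents `e(ν)` over the sequences `ν` that end in `i, j`. -/
noncomputable def lastTwoIdem (n : ℕ) (i j : I) : Alg C (n + 2) :=
  appendRight C (n + 1) (lastIdem C n i) * lastIdem C (n + 1) j

theorem lastTwoIdem_eq_sum (i j : I) : lastTwoIdem C n i j =
    ∑ ν : Fin n → I, Ee C (Fin.snoc (Fin.snoc ν i : Fin (n + 1) → I) j : Fin (n + 2) → I) := by
  rw [lastTwoIdem, lastIdem, map_sum, Finset.sum_mul]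
  simp only [appendRight_Ee_mul_lastIdem]

theorem lastCross_mul_Ee (ν : Fin n → I) (i j : I) :
    lastCross C n * Ee C (Fin.snoc (Fin.snoc ν i : Fin (n + 1) → I) j : Fin (n + 2) → I) =
      Ee C (Fin.snoc (Fin.snoc ν j : Fin (n + 1) → I) i : Fin (n + 2) → I) * lastCross C n := by
  rw [(isKLRFamily_generators C (n + 2)).taue, snoc_snoc_comp_adjSwap]

theorem lastIdem_succ_eq_sum (n : ℕ) (j : I) :
    lastIdem C (n + 1) j = ∑ ν : Fin n → I, ∑ i,
      Ee C (Fin.snoc (Fin.snoc ν i : Fin (n + 1) → I) j : Fin (n + 2) → I) :=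
  (sum_snoc fun μ : Fin (n + 1) → I => Ee C (Fin.snoc μ j : Fin (n + 2) → I)).symm

theorem appendRight_lastIdem_eq_sum (n : ℕ) (j : I) :
    appendRight C (n + 1) (lastIdem C n j) = ∑ ν : Fin n → I, ∑ i,
      Ee C (Fin.snoc (Fin.snoc ν j : Fin (n + 1) → I) i : Fin (n + 2) → I) := by
  rw [lastIdem, map_sum]
  simp only [appendRight_Ee]

theorem lastCross_mul_lastIdem (j : I) : lastCross C n * lastIdem C (n + 1) j =
    appendRight C (n + 1) (lastIdem C n j) * lastCross C n := by
  simp only [lastIdem_succ_eq_sum, appendRight_lastIdem_eq_sum, Finset.mul_sum, Finset.sum_mul,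
    lastCross_mul_Ee]

theorem lastCross_mul_appendRight_lastIdem (j : I) :
    lastCross C n * appendRight C (n + 1) (lastIdem C n j) =
      lastIdem C (n + 1) j * lastCross C n := by
  simp only [lastIdem_succ_eq_sum, appendRight_lastIdem_eq_sum, Finset.mul_sum, Finset.sum_mul,
    lastCross_mul_Ee]

theorem lastCross_mul_lastTwoIdem (i j : I) :
    lastCross C n * lastTwoIdem C n i j = lastTwoIdem C n j i * lastCross C n := by
  simp only [lastTwoIdem_eq_sum, Finset.mul_sum, Finset.sum_mul, lastCross_mul_Ee]

theorem lastTwoIdem_mul_self (i j : I) :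
    lastTwoIdem C n i j * lastTwoIdem C n i j = lastTwoIdem C n i j := by
  rw [lastTwoIdem, (lastIdem_commute_appendRight C j _).mul_mul_mul_comm, ← map_mul,
    lastIdem_mul_self, lastIdem_mul_self]

theorem lastIdem_mul_lastTwoIdem (i j : I) :
    lastIdem C (n + 1) j * lastTwoIdem C n i j = lastTwoIdem C n i j := by
  rw [lastTwoIdem, ← mul_assoc, (lastIdem_commute_appendRight C j _).eq, mul_assoc,
    lastIdem_mul_self]

theorem lastTwoIdem_commute_Xx_last (i j : I) :
    Commute (lastTwoIdem C n i j) (Xx C (Fin.last (n + 1))) :=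
  (Xx_last_commute_appendRight C _).symm.mul_left (lastIdem_commute_Xx C j _)

theorem lastCross_commute_appendRight_appendRight (r : Alg C n) :
    Commute (lastCross C n) (appendRight C (n + 1) (appendRight C n r)) := by
  have H := isKLRFamily_generators C (n + 2)
  refine commute_of_generators C ((appendRight C (n + 1)).comp (appendRight C n)) (fun ν => ?_)
    (fun a => ?_) (fun l h => ?_) r
  · simp only [AlgHom.comp_apply, appendRight_Ee, map_sum, Commute, SemiconjBy, Finset.mul_sum,
      Finset.sum_mul, lastCross_mul_Ee]
    exact Finset.sum_comm
  · simpa using H.commute_theta_xi (Nat.lt_succ_self _) (a := a.castSucc.castSucc)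
      (by simp; omega) (by simp; omega)
  · simp only [AlgHom.comp_apply, appendRight_Tt]
    exact H.tautau _ _ _ _ (by omega)

theorem lastCross_mul_Xx_last_mul_lastTwoIdem {i j : I} (hij : i ≠ j) :
    lastCross C n * Xx C (Fin.last (n + 1)) * lastTwoIdem C n i j =
      appendRight C (n + 1) (Xx C (Fin.last n)) * lastCross C n * lastTwoIdem C n i j := by
  rw [← sub_eq_zero, ← sub_mul, lastTwoIdem_eq_sum, Finset.mul_sum]
  refine Finset.sum_eq_zero fun ν _ => ?_
  have labels_ne : (Fin.snoc (Fin.snoc ν i : Fin (n + 1) → I) j : Fin (n + 2) → I)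
      (Fin.last n).castSucc ≠ (Fin.snoc (Fin.snoc ν i : Fin (n + 1) → I) j : Fin (n + 2) → I)
      (Fin.last (n + 1)) := by simpa using hij
  have swap_last : adjSwap n (Nat.lt_succ_self _) (Fin.last (n + 1)) = (Fin.last n).castSucc :=
    Equiv.swap_apply_right _ _
  have := (isKLRFamily_generators C (n + 2)).taux n (Nat.lt_succ_self _) (Fin.last (n + 1))
    (Fin.snoc (Fin.snoc ν i : Fin (n + 1) → I) j)
  rwa [if_neg fun h => labels_ne h.2, if_neg fun h => labels_ne h.2, swap_last,
    ← appendRight_Xx] at this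

theorem lastCross_mul_Xx_last_pow_mul_lastTwoIdem {i j : I} (hij : i ≠ j) (b : ℕ) :
    lastCross C n * Xx C (Fin.last (n + 1)) ^ b * lastTwoIdem C n i j =
      appendRight C (n + 1) (Xx C (Fin.last n) ^ b) * lastCross C n * lastTwoIdem C n i j := by
  induction b with
  | zero => simp
  | succ b ih =>
    have comm := (lastTwoIdem_commute_Xx_last C (n := n) i j).eq
    calc lastCross C n * Xx C (Fin.last (n + 1)) ^ (b + 1) * lastTwoIdem C n i j
        = lastCross C n * Xx C (Fin.last (n + 1)) ^ b * lastTwoIdem C n i j *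
            Xx C (Fin.last (n + 1)) := by rw [mul_assoc _ (lastTwoIdem C n i j), comm]; noncomm_ring
      _ = appendRight C (n + 1) (Xx C (Fin.last n) ^ b) *
            (lastCross C n * Xx C (Fin.last (n + 1)) * lastTwoIdem C n i j) := by
          rw [ih, mul_assoc _ (lastTwoIdem C n i j), comm]; noncomm_ring
      _ = appendRight C (n + 1) (Xx C (Fin.last n) ^ (b + 1)) * lastCross C n *
            lastTwoIdem C n i j := by
          rw [lastCross_mul_Xx_last_mul_lastTwoIdem C hij, pow_succ, map_mul]; noncomm_ring

end LastCrossing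

section CosetBasis

variable {n : ℕ}

theorem appendLeft_cosetElt (n a : ℕ) :
    appendLeft C (n + 1) (cosetElt C n a) = cosetElt C (n + 1) (a + 1) := by
  induction n with
  | zero => rw [cosetElt_of_ge C (Nat.zero_le a), map_one, cosetElt_of_ge C (by omega)]
  | succ n ih =>
    obtain h | h := Nat.lt_or_ge n a
    · rw [cosetElt_of_ge C h, map_one, cosetElt_of_ge C (by omega)]
    · rw [cosetElt_succ C h, map_mul, ← appendRight_appendLeft, ih, appendLeft_Tt,
        ← cosetElt_succ C (Nat.succ_le_succ h)]

theorem cosetElt_zero_mul_lastIdem (n : ℕ) (j : I) :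
    cosetElt C n 0 * lastIdem C n j = firstIdem C n j * cosetElt C n 0 := by
  induction n with
  | zero =>
    have snoc_eq_cons (ν : Fin 0 → I) : (Fin.snoc ν j : Fin 1 → I) = Fin.cons j ν := by
      funext a; rw [Fin.fin_one_eq_zero a]; rfl
    simp only [cosetElt_of_ge C le_rfl, one_mul, mul_one, firstIdem_eq_sum, lastIdem, snoc_eq_cons]
  | succ n ih =>
    rw [cosetElt_succ C (Nat.zero_le n), mul_assoc, lastCross_mul_lastIdem, ← mul_assoc, ← map_mul,
      ih, map_mul, appendRight_firstIdem, mul_assoc]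

theorem rightBasis_mul_lastIdem (q : Fin (n + 1) × ℕ) (j : I) :
    rightBasis C n q * lastIdem C n j =
      cosetElt C n q.1 * lastIdem C n j * Xx C (Fin.last n) ^ q.2 := by
  rw [rightBasis, mul_assoc, ← ((lastIdem_commute_Xx C j _).pow_right _).eq, mul_assoc]

theorem firstIdem_mul_rightBasis_zero_mul_lastIdem {i j : I} (hij : i ≠ j) (b : ℕ) :
    firstIdem C n i * (rightBasis C n (0, b) * lastIdem C n j) = 0 := by
  rw [rightBasis_mul_lastIdem, Fin.val_zero, cosetElt_zero_mul_lastIdem, ← mul_assoc, ← mul_assoc,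
    firstIdem_mul_firstIdem, if_neg hij, zero_mul, zero_mul]

theorem rightBasis_castSucc (a : Fin (n + 1)) (b : ℕ) :
    rightBasis C (n + 1) (a.castSucc, b) = appendRight C (n + 1) (cosetElt C n a) *
      (lastCross C n * Xx C (Fin.last (n + 1)) ^ b) := by
  rw [rightBasis, Fin.val_castSucc, cosetElt_succ C (Nat.lt_succ_iff.1 a.2), mul_assoc]

theorem appendRight_rightBasis_mul_lastCross {i j : I} (hij : i ≠ j) (a : Fin (n + 1)) (b : ℕ) :
    appendRight C (n + 1) (rightBasis C n (a, b)) * (lastCross C n * lastTwoIdem C n i j) =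
      rightBasis C (n + 1) (a.castSucc, b) * lastTwoIdem C n i j := by
  rw [rightBasis_castSucc, mul_assoc, lastCross_mul_Xx_last_pow_mul_lastTwoIdem C hij, rightBasis,
    map_mul]
  noncomm_ring

theorem lastIdem_mul_rightBasis_castSucc_mul_lastIdem (i j : I) (a : Fin (n + 1)) (b : ℕ) :
    lastIdem C (n + 1) i * (rightBasis C (n + 1) (a.castSucc, b) * lastIdem C (n + 1) j) =
      rightBasis C (n + 1) (a.castSucc, b) * lastTwoIdem C n i j := by
  have pass : lastIdem C (n + 1) i * rightBasis C (n + 1) (a.castSucc, b) =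
      rightBasis C (n + 1) (a.castSucc, b) * appendRight C (n + 1) (lastIdem C n i) := by
    rw [rightBasis_castSucc, ← mul_assoc, (lastIdem_commute_appendRight C i _).eq, mul_assoc,
      ← mul_assoc (lastIdem C _ i), ← lastCross_mul_appendRight_lastIdem]
    simp only [mul_assoc, ((Xx_last_commute_appendRight C _).pow_left b).eq]
  rw [← mul_assoc, pass, mul_assoc, lastTwoIdem]

theorem lastIdem_mul_rightBasis_last_mul_lastIdem {i j : I} (hij : i ≠ j) (b : ℕ) :
    lastIdem C n i * (rightBasis C n (Fin.last n, b) * lastIdem C n j) = 0 := by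
  rw [rightBasis_mul_lastIdem, cosetElt_of_ge C (by simp), one_mul, ← mul_assoc,
    lastIdem_mul_lastIdem, if_neg hij, zero_mul]

/-- The mirror images of the elements `rightBasis`: the basis of `R(n + 1) e(j, *)` as a right
module over `R(n)` embedded in the last `n` strands. -/
noncomputable def leftBasis (n : ℕ) (q : Fin (n + 1) × ℕ) : Alg C (n + 1) :=
  reflect C (n + 1) (rightBasis C n q)

theorem lastIdem_mul_leftBasis_zero_mul_firstIdem {i j : I} (hij : i ≠ j) (b : ℕ) :
    lastIdem C n i * (leftBasis C n (0, b) * firstIdem C n j) = 0 := by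
  have := congrArg (reflect C (n + 1)) (firstIdem_mul_rightBasis_zero_mul_lastIdem C hij b)
  rwa [map_mul, map_mul, firstIdem, reflect_reflect, map_zero] at this

theorem appendRight_leftBasis (a : Fin (n + 1)) (b : ℕ) :
    appendRight C (n + 1) (leftBasis C n (a, b)) = leftBasis C (n + 1) (a.succ, b) := by
  rw [leftBasis, appendRight_reflect, leftBasis, rightBasis, rightBasis, map_mul, map_pow,
    appendLeft_cosetElt, appendLeft_Xx, Fin.val_succ, Fin.succ_last]

theorem lastIdem_commute_leftBasis_succ (i : I) (a : Fin (n + 1)) (b : ℕ) :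
    Commute (lastIdem C (n + 1) i) (leftBasis C (n + 1) (a.succ, b)) :=
  appendRight_leftBasis C a b ▸ lastIdem_commute_appendRight C i _

end CosetBasis

/-! ### Passing to the algebras `R(β)` -/

section Projection

variable {n : ℕ} {β : I → ℕ}

theorem toB_mkAlgHom (a : FA k I n) :
    (toB C (RingQuot.mkAlgHom k (Rel C n) a) : bAlg C n β) =
      RingQuot.mkAlgHom k (URel C n β) a := by
  simp [toB]

theorem toB_surjective : Function.Surjective (toB C : Alg C n → bAlg C n β) := fun b => by
  obtain ⟨a, rfl⟩ := RingQuot.mkAlgHom_surjective k (URel C n β) b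
  exact ⟨_, toB_mkAlgHom C a⟩

theorem eIdem_eq_mkAlgHom :
    eIdem C n β = RingQuot.mkAlgHom k (Rel C n) (∑ ν ∈ seqs β n, ge k ν) := by
  rw [map_sum]; rfl

theorem toB_eIdem : (toB C (eIdem C n β) : bAlg C n β) = 1 := by
  rw [eIdem_eq_mkAlgHom, toB_mkAlgHom, RingQuot.mkAlgHom_rel k URel.unit, map_one]

omit [Fintype I] in
theorem content_comp_perm (ν : Fin n → I) (s : Equiv.Perm (Fin n)) :
    content (ν ∘ s) = content ν := by
  funext i
  exact Finset.card_equiv s fun a => by simp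

theorem mem_seqs {ν : Fin n → I} : ν ∈ seqs β n ↔ content ν = β := by
  simp [seqs]

theorem eIdem_mul_Ee (β : I → ℕ) (ν : Fin n → I) :
    eIdem C n β * Ee C ν = if content ν = β then Ee C ν else 0 := by
  simp [eIdem, Finset.sum_mul, (isKLRFamily_generators C n).ee, mem_seqs]

theorem Ee_mul_eIdem (β : I → ℕ) (ν : Fin n → I) :
    Ee C ν * eIdem C n β = if content ν = β then Ee C ν else 0 := by
  simp [eIdem, Finset.mul_sum, (isKLRFamily_generators C n).ee, mem_seqs]

theorem eIdem_mul_self : eIdem C n β * eIdem C n β = eIdem C n β := by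
  conv_lhs => enter [2]; rw [eIdem]
  rw [Finset.mul_sum, eIdem]
  exact Finset.sum_congr rfl fun ν hν => by rw [← eIdem, eIdem_mul_Ee, if_pos (mem_seqs.1 hν)]

variable (n β) in
theorem eIdem_commute (z : Alg C n) : Commute (eIdem C n β) z := by
  have H := isKLRFamily_generators C n
  refine commute_of_generators C (AlgHom.id k _) (fun ν => ?_) (fun a => ?_) (fun l h => ?_) z
  · exact (eIdem_mul_Ee C β ν).trans (Ee_mul_eIdem C β ν).symm
  · exact Commute.sum_left _ _ _ fun ν _ => (H.xe a ν).symm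
  · simp only [AlgHom.id_apply, Commute, SemiconjBy, eIdem, Finset.sum_mul, Finset.mul_sum, H.taue]
    refine (Finset.sum_equiv ((adjSwap l h).arrowCongr (Equiv.refl I)) (fun ν => ?_)
      fun ν _ => rfl).symm
    rw [mem_seqs, mem_seqs, ← content_comp_perm ν (adjSwap l h)]
    rfl

/-- `R(n)` acts on its ideal `R(n) e(β)` through `R(β)`, and `z` maps `e(β)` to `z e(β)`. -/
theorem toB_eq_zero_iff {z : Alg C n} :
    (toB C z : bAlg C n β) = 0 ↔ z * eIdem C n β = 0 := by
  refine ⟨fun hz => ?_, fun hz => ?_⟩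
  · let ideal : Submodule (Alg C n) (Alg C n) := Submodule.span _ {eIdem C n β}
    let act : Alg C n →ₐ[k] Module.End k ideal := Algebra.lsmul k k ideal
    have act_eIdem : act (eIdem C n β) = 1 := by
      ext ⟨w, hw⟩
      obtain ⟨r, rfl⟩ := Submodule.mem_span_singleton.1 hw
      change eIdem C n β * (r * eIdem C n β) = r * eIdem C n β
      rw [← mul_assoc, (eIdem_commute C n β r).eq, mul_assoc, eIdem_mul_self]
    let descended : bAlg C n β →ₐ[k] Module.End k ideal :=
      RingQuot.liftAlgHom (S := k) ⟨act.comp (RingQuot.mkAlgHom k (Rel C n)), fun x y hxy => by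
        cases hxy with
        | base h => rw [AlgHom.comp_apply, AlgHom.comp_apply, RingQuot.mkAlgHom_rel k h]
        | unit => rw [AlgHom.comp_apply, ← eIdem_eq_mkAlgHom, act_eIdem, map_one]⟩
    have descended_toB : descended (toB C z) = act z := by
      obtain ⟨a, rfl⟩ := RingQuot.mkAlgHom_surjective k (Rel C n) z
      simp [descended, toB_mkAlgHom]
    have act_z : act z ⟨eIdem C n β, Submodule.mem_span_singleton_self _⟩ = 0 := by
      rw [← descended_toB, hz, map_zero, LinearMap.zero_apply]
    exact congrArg Subtype.val act_z
  · rw [← mul_one (toB C z), ← toB_eIdem, ← map_mul, hz, map_zero]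

theorem toB_Ee_of_content_ne {ν : Fin n → I} (h : content ν ≠ β) :
    (toB C (Ee C ν) : bAlg C n β) = 0 := by
  rw [toB_eq_zero_iff, Ee_mul_eIdem, if_neg h]

theorem toB_sum_filter_seqs (p : (Fin n → I) → Prop) [DecidablePred p] :
    (toB C (∑ ν ∈ (seqs β n).filter p, Ee C ν) : bAlg C n β) =
      toB C (∑ ν with p ν, Ee C ν) := by
  rw [map_sum, map_sum]
  refine Finset.sum_subset (Finset.filter_subset_filter _ (Finset.subset_univ _)) fun ν hν hν' => ?_
  refine toB_Ee_of_content_ne C fun h => hν' ?_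
  exact Finset.mem_filter.2 ⟨mem_seqs.2 h, (Finset.mem_filter.1 hν).2⟩

theorem lastIdem_eq_sum_filter (n : ℕ) (i : I) :
    lastIdem C n i = ∑ ν : Fin (n + 1) → I with ν (Fin.last n) = i, Ee C ν := by
  rw [Finset.sum_filter, ← sum_snoc, lastIdem, Finset.sum_comm]
  simp

theorem firstIdem_eq_sum_filter (n : ℕ) (i : I) :
    firstIdem C n i = ∑ ν : Fin (n + 1) → I with ν 0 = i, Ee C ν := by
  rw [firstIdem_eq_sum, Finset.sum_filter, ← (Fin.consEquiv fun _ : Fin (n + 1) => I).sum_comp,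
    Fintype.sum_prod_type, Finset.sum_comm]
  simp [Fin.consEquiv]

theorem toB_eR (i : I) :
    (toB C (eR C n β i) : bAlg C (n + 1) (addA β i)) = toB C (lastIdem C n i) := by
  rw [eR, toB_sum_filter_seqs, lastIdem_eq_sum_filter]

theorem toB_eL (i : I) :
    (toB C (eL C n β i) : bAlg C (n + 1) (addA β i)) = toB C (firstIdem C n i) := by
  rw [eL, toB_sum_filter_seqs, firstIdem_eq_sum_filter]

theorem eDb_eq_toB_lastIdem (i : I) : eDb C (n + 1) β i = toB C (lastIdem C n i) := by
  rw [eDb, eD, toB_sum_filter_seqs, lastIdem_eq_sum_filter]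
  congr 2

end Projection

section Content

variable {n : ℕ}

omit [Fintype I] in
theorem content_snoc (ν : Fin n → I) (i : I) :
    content (Fin.snoc ν i : Fin (n + 1) → I) = addA (content ν) i := by
  funext l
  simp only [content, addA, Finset.card_filter]
  rw [Fin.sum_univ_castSucc]
  simp only [Fin.snoc_castSucc, Fin.snoc_last, eq_comm (a := i)]

omit [Fintype I] in
theorem content_cons (ν : Fin n → I) (i : I) :
    content (Fin.cons i ν : Fin (n + 1) → I) = addA (content ν) i := by
  funext l
  simp only [content, addA, Finset.card_filter]
  rw [Fin.sum_univ_succ, add_comm]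
  simp only [Fin.cons_zero, Fin.cons_succ, eq_comm (a := i)]

omit [Fintype I] in
theorem addA_left_inj {β β' : I → ℕ} {i : I} : addA β i = addA β' i ↔ β = β' := by
  simp [funext_iff, addA]

omit [Fintype I] in
theorem addA_right_comm (β : I → ℕ) (i j : I) : addA (addA β i) j = addA (addA β j) i := by
  funext l
  simp only [addA, add_right_comm]

theorem lastIdem_mul_eIdem (n : ℕ) (β : I → ℕ) (i : I) :
    lastIdem C n i * eIdem C (n + 1) (addA β i) =
      appendRight C n (eIdem C n β) * lastIdem C n i := by
  simp only [eIdem, map_sum, Finset.sum_mul, appendRight_Ee_mul_lastIdem]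
  rw [← eIdem, lastIdem, Finset.sum_mul]
  simp only [Ee_mul_eIdem, content_snoc, addA_left_inj]
  rw [← Finset.sum_filter, seqs]

theorem firstIdem_mul_eIdem (n : ℕ) (β : I → ℕ) (i : I) :
    firstIdem C n i * eIdem C (n + 1) (addA β i) =
      appendLeft C n (eIdem C n β) * firstIdem C n i := by
  simp only [eIdem, map_sum, Finset.sum_mul, appendLeft_Ee_mul_firstIdem]
  rw [← eIdem, firstIdem_eq_sum, Finset.sum_mul]
  simp only [Ee_mul_eIdem, content_cons, addA_left_inj]
  rw [← Finset.sum_filter, seqs]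

end Content

/-! ### The mirror basis and descent to `R(β)` -/

section Mirror

variable (n : ℕ) (j : I)

theorem isRightBasis_leftBasis : IsRightBasis (appendLeftHom C n j) (leftBasis C n) := by
  have mirror (f : Fin (n + 1) × ℕ →₀ Alg C n) :
      rightCombination (appendLeftHom C n j) (leftBasis C n) (f.mapRange (reflect C n) (map_zero _))
        = reflect C (n + 1) (rightCombination (appendRightHom C n j) (rightBasis C n) f) := by
    rw [rightCombination_apply, rightCombination_apply,
      Finsupp.sum_mapRange_index fun q => by rw [map_zero, mul_zero], map_finsuppSum]
    simp only [appendLeftHom_reflect, leftBasis, map_mul]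
  have mapRange_surjective : Function.Surjective fun f : Fin (n + 1) × ℕ →₀ Alg C n =>
      f.mapRange (reflect C n) (map_zero _) :=
    Finsupp.mapRange_surjective _ _ (Function.Involutive.surjective (reflect_reflect C))
  refine ⟨fun b => ?_, (injective_iff_map_eq_zero _).2 fun g hg => ?_⟩
  · obtain ⟨f, hf⟩ := (isRightBasis_rightBasis C n j).exists_eq (reflect C (n + 1) b)
    refine ⟨f.mapRange (reflect C n) (map_zero _), ?_⟩
    rw [mirror, hf, map_mul, reflect_reflect, ← appendLeftHom_reflect, map_one]
  · obtain ⟨f, rfl⟩ := mapRange_surjective g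
    have := (mirror f).symm.trans hg
    rw [map_eq_zero_iff _ (Function.Involutive.injective (reflect_reflect C)),
      map_eq_zero_iff _ (isRightBasis_rightBasis C n j).injective] at this
    subst this
    exact Finsupp.mapRange_zero

end Mirror

section Descent

variable {n m : ℕ} {β γ : I → ℕ}

/-- The homomorphism `φ : R(β) → R(γ)` is induced by the homomorphism `f : R(n) → R(m)`. -/
structure IsInducedBy (φ : bAlg C n β →ₙₐ[k] bAlg C m γ) (f : Alg C n →ₙₐ[k] Alg C m) : Prop where
  map_toB : ∀ r, φ (toB C r) = toB C (f r)
  map_one_mul_eIdem : f 1 * eIdem C m γ = f (eIdem C n β)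

variable {C} {φ : bAlg C n β →ₙₐ[k] bAlg C m γ} {f : Alg C n →ₙₐ[k] Alg C m}

theorem IsInducedBy.of_generators (hf : f 1 * eIdem C m γ = f (eIdem C n β))
    (he : ∀ ν, φ (toB C (Ee C ν)) = toB C (f (Ee C ν)))
    (hx : ∀ a, φ (toB C (Xx C a)) = toB C (f (Xx C a)))
    (ht : ∀ l h, φ (toB C (Tt C l h)) = toB C (f (Tt C l h))) : IsInducedBy C φ f := by
  refine ⟨fun r => ?_, hf⟩
  have map_one_eq : φ 1 = toB C (f 1) := by
    have h : φ (toB C (eIdem C n β)) = toB C (f (eIdem C n β)) := by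
      simp only [eIdem, map_sum, he]
    rwa [← hf, map_mul, toB_eIdem, toB_eIdem, mul_one] at h
  induction r using Alg.induction with
  | scalar c =>
    rw [Algebra.algebraMap_eq_smul_one, map_smul, map_smul, map_smul, map_smul, map_one,
      map_one_eq]
  | e ν => exact he ν
  | x a => exact hx a
  | tau l h => exact ht l h
  | mul a b ha hb => rw [map_mul, map_mul, map_mul, map_mul, ha, hb]
  | add a b ha hb => rw [map_add, map_add, map_add, map_add, ha, hb]

theorem IsUpRb.isInducedBy {i : I} (hγ : γ = addA β i) {φ : bAlg C n β →ₙₐ[k] bAlg C (n + 1) γ}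
    (hφ : IsUpRb C i φ) : IsInducedBy C φ (appendRightHom C n i) := by
  subst hγ
  obtain ⟨map_e, map_x, map_tau⟩ := hφ
  refine .of_generators ?_ (fun ν => ?_) (fun a => ?_) fun l h => ?_
  · rw [appendRightHom_one, lastIdem_mul_eIdem, appendRightHom_apply]
  · rw [map_e, appendRightHom_apply, appendRight_Ee_mul_lastIdem]
  · rw [map_x, map_mul, toB_eR, appendRightHom_apply, appendRight_Xx, map_mul]
  · rw [map_tau, map_mul, toB_eR, appendRightHom_apply, appendRight_Tt, map_mul]

theorem IsUpLb.isInducedBy {i : I} {φ : bAlg C n β →ₙₐ[k] bAlg C (n + 1) (addA β i)}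
    (hφ : IsUpLb C i φ) : IsInducedBy C φ (appendLeftHom C n i) := by
  obtain ⟨map_e, map_x, map_tau⟩ := hφ
  refine .of_generators ?_ (fun ν => ?_) (fun a => ?_) fun l h => ?_
  · rw [appendLeftHom_one, firstIdem_mul_eIdem, appendLeftHom_apply]
  · rw [map_e, appendLeftHom_apply, appendLeft_Ee_mul_firstIdem]
  · rw [map_x, map_mul, toB_eL, appendLeftHom_apply, appendLeft_Xx, map_mul]
  · rw [map_tau, map_mul, toB_eL, appendLeftHom_apply, appendLeft_Tt, map_mul]

namespace IsInducedBy

variable (h : IsInducedBy C φ f)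

include h

theorem map_one : φ 1 = toB C (f 1) := by
  rw [← h.map_toB, _root_.map_one (toB C)]

variable {Q : Type}

theorem toB_rightCombination (w : Q → Alg C m) (g : Q →₀ Alg C n) :
    rightCombination φ (fun q => toB C (w q)) (g.mapRange (toB C) (map_zero _)) =
      toB C (rightCombination f w g) := by
  rw [rightCombination_apply, rightCombination_apply,
    Finsupp.sum_mapRange_index fun q => by rw [map_zero, mul_zero], map_finsuppSum]
  simp only [map_mul, h.map_toB]

theorem exists_rightCombination_eq {w : Q → Alg C m}
    (hw : ∀ z, ∃ g, rightCombination f w g = z * f 1) (b : bAlg C m γ) :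
    ∃ g, rightCombination φ (fun q => toB C (w q)) g = b * φ 1 := by
  obtain ⟨z, rfl⟩ := toB_surjective C b
  obtain ⟨g, hg⟩ := hw z
  exact ⟨g.mapRange (toB C) (map_zero _), by
    rw [h.toB_rightCombination, hg, map_mul, h.map_one]⟩

-- A relation over `R(γ)` is lifted to `R(n)` by multiplying its coefficients by `e(β)`.
theorem isRightBasis {w : Q → Alg C m} (hw : IsRightBasis f w) :
    IsRightBasis φ fun q => toB C (w q) where
  exists_eq := h.exists_rightCombination_eq hw.exists_eq
  injective := by
    rw [injective_iff_map_eq_zero]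
    intro g₀ hg
    obtain ⟨g, rfl⟩ := Finsupp.mapRange_surjective _ (map_zero (toB C)) (toB_surjective C) g₀
    have lift_eq_zero : g.mapRange (· * eIdem C n β) (zero_mul _) = 0 := by
      apply hw.injective
      rw [h.toB_rightCombination, toB_eq_zero_iff] at hg
      rw [rightCombination_mapRange_mul, ← h.map_one_mul_eIdem, ← (eIdem_commute C m γ (f 1)).eq,
        ← mul_assoc, hg, zero_mul, map_zero]
    ext1 q
    rw [Finsupp.mapRange_apply, Finsupp.zero_apply, toB_eq_zero_iff]
    exact DFunLike.congr_fun lift_eq_zero q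

end IsInducedBy

end Descent

/-! ### Adding strands labelled `i ≠ j` -/

section AddStrands

variable {C} in
theorem IsCommutationDatum.of_isInducedBy {n m₁ m₀ m₂ : ℕ} {β β₁ β₀ β₂ : I → ℕ} {P Q : Type}
    {f₁ : Alg C n →ₙₐ[k] Alg C m₁} {f₀ : Alg C n →ₙₐ[k] Alg C m₀}
    {f₂ : Alg C m₀ →ₙₐ[k] Alg C m₂} {g : Alg C m₁ →ₙₐ[k] Alg C m₂} {e t : Alg C m₂}
    {e₀ : Alg C m₀} {v : P → Alg C m₁} {w : Q → Alg C m₂} {σ : P → Q}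
    (D : IsCommutationDatum f₁ f₀ f₂ g e e₀ t v w σ)
    {φ₁ : bAlg C n β →ₙₐ[k] bAlg C m₁ β₁} {φ₀ : bAlg C n β →ₙₐ[k] bAlg C m₀ β₀}
    {φ₂ : bAlg C m₀ β₀ →ₙₐ[k] bAlg C m₂ β₂} {ψ : bAlg C m₁ β₁ →ₙₐ[k] bAlg C m₂ β₂}
    (h₁ : IsInducedBy C φ₁ f₁) (h₀ : IsInducedBy C φ₀ f₀) (h₂ : IsInducedBy C φ₂ f₂)
    (hψ : IsInducedBy C ψ g) :
    IsCommutationDatum φ₁ φ₀ φ₂ ψ (toB C e) (toB C e₀) (toB C t) (fun p => toB C (v p))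
      (fun q => toB C (w q)) σ where
  eq_map_one := by rw [D.eq_map_one, hψ.map_one]
  eq_map_one' := by rw [D.eq_map_one', h₀.map_one]
  injective := D.injective
  exists_eq := h₁.exists_rightCombination_eq D.exists_eq
  isRightBasis := h₂.isRightBasis D.isRightBasis
  intertwines r := by
    obtain ⟨r, rfl⟩ := toB_surjective C r
    simp only [h₁.map_toB, hψ.map_toB, h₀.map_toB, h₂.map_toB, ← map_mul, D.intertwines]
  map_mul_eq p := by simp only [hψ.map_toB, h₂.map_toB, ← map_mul, D.map_mul_eq]
  mul_map_one p := by simp only [h₂.map_one, h₂.map_toB, ← map_mul, D.mul_map_one]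
  mul_map_one_eq_zero q hq := by
    simp only [h₂.map_one, ← map_mul, D.mul_map_one_eq_zero q hq, map_zero]

variable (n : ℕ) {i j : I}

theorem isCommutationDatum_appendRightHom (hij : i ≠ j) :
    IsCommutationDatum (appendRightHom C n j) (appendRightHom C n i) (appendRightHom C (n + 1) j)
      (appendRightHom C (n + 1) i) (lastIdem C (n + 1) i) (lastIdem C n i) (lastCross C n)
      (rightBasis C n) (rightBasis C (n + 1)) (Prod.map Fin.castSucc id) where
  eq_map_one := (appendRightHom_one C (n + 1) i).symm
  eq_map_one' := (appendRightHom_one C n i).symm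
  injective := (Fin.castSucc_injective _).prodMap Function.injective_id
  exists_eq := (isRightBasis_rightBasis C n j).exists_eq
  isRightBasis := isRightBasis_rightBasis C (n + 1) j
  intertwines r := by
    have twice (i j : I) : appendRightHom C (n + 1) i (appendRightHom C n j r) =
        appendRight C (n + 1) (appendRight C n r) * lastTwoIdem C n j i := by
      rw [appendRightHom_apply, appendRightHom_apply, map_mul, mul_assoc, lastTwoIdem]
    rw [twice, twice, appendRightHom_apply, ← lastTwoIdem, mul_assoc, mul_assoc,
      lastCross_mul_lastTwoIdem, ← mul_assoc (lastTwoIdem C n j i), lastTwoIdem_mul_self,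
      ← lastCross_mul_lastTwoIdem, ← mul_assoc,
      ← (lastCross_commute_appendRight_appendRight C r).eq, mul_assoc]
  map_mul_eq := fun ⟨a, b⟩ => by
    rw [appendRightHom_apply, appendRightHom_apply, ← lastTwoIdem, mul_assoc, mul_assoc,
      lastCross_mul_lastTwoIdem, ← mul_assoc (lastIdem C (n + 1) i), lastIdem_mul_lastTwoIdem,
      ← lastCross_mul_lastTwoIdem, appendRight_rightBasis_mul_lastCross C hij]
    rfl
  mul_map_one := fun ⟨a, b⟩ => by
    rw [appendRightHom_one, appendRightHom_apply]
    exact lastIdem_mul_rightBasis_castSucc_mul_lastIdem C i j a b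
  mul_map_one_eq_zero := fun ⟨a, b⟩ hq => by
    obtain rfl : a = Fin.last (n + 1) := by
      by_contra ha
      obtain ⟨a', rfl⟩ := Fin.exists_castSucc_eq.2 ha
      exact hq ⟨(a', b), rfl⟩
    rw [appendRightHom_one, lastIdem_mul_rightBasis_last_mul_lastIdem C hij]

theorem isCommutationDatum_appendLeftHom (hij : i ≠ j) :
    IsCommutationDatum (appendLeftHom C n j) (appendRightHom C n i) (appendLeftHom C (n + 1) j)
      (appendRightHom C (n + 1) i) (lastIdem C (n + 1) i) (lastIdem C n i) 1
      (leftBasis C n) (leftBasis C (n + 1)) (Prod.map Fin.succ id) where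
  eq_map_one := (appendRightHom_one C (n + 1) i).symm
  eq_map_one' := (appendRightHom_one C n i).symm
  injective := (Fin.succ_injective _).prodMap Function.injective_id
  exists_eq := (isRightBasis_leftBasis C n j).exists_eq
  isRightBasis := isRightBasis_leftBasis C (n + 1) j
  intertwines r := by
    have idem : firstIdem C (n + 1) j * lastIdem C (n + 1) i *
        (lastIdem C (n + 1) i * firstIdem C (n + 1) j) =
          lastIdem C (n + 1) i * firstIdem C (n + 1) j := by
      rw [← (lastIdem_commute_firstIdem C i j).eq,
        (lastIdem_commute_firstIdem C i j).symm.mul_mul_mul_comm, lastIdem_mul_self,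
        firstIdem_mul_firstIdem, if_pos rfl]
    rw [mul_one, one_mul, appendRightHom_apply, appendLeftHom_apply, appendLeftHom_apply,
      appendLeftHom_apply, appendRightHom_apply, map_mul, map_mul, appendRight_appendLeft,
      appendRight_firstIdem, appendLeft_lastIdem, mul_assoc, mul_assoc, ← mul_assoc (firstIdem ..),
      idem, mul_assoc]
  map_mul_eq := fun ⟨a, b⟩ => by
    rw [appendRightHom_apply, appendLeftHom_apply, appendLeft_lastIdem, mul_one,
      appendRight_leftBasis, ← mul_assoc, mul_assoc (leftBasis C _ _), lastIdem_mul_self,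
      mul_assoc]
    rfl
  mul_map_one := fun ⟨a, b⟩ => by
    rw [appendLeftHom_one, appendLeftHom_apply, appendLeft_lastIdem, ← mul_assoc, ← mul_assoc]
    exact congrArg (· * _) (lastIdem_commute_leftBasis_succ C i a b)
  mul_map_one_eq_zero := fun ⟨a, b⟩ hq => by
    obtain rfl : a = 0 := by
      by_contra ha
      obtain ⟨a', rfl⟩ := Fin.exists_succ_eq.2 ha
      exact hq ⟨(a', b), rfl⟩
    rw [appendLeftHom_one, lastIdem_mul_leftBasis_zero_mul_firstIdem C hij]

end AddStrands

end KLR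

open KLR TensorProduct in
set_option maxHeartbeats 1000000 in
/-- For `i ≠ j` and `β` whose coefficient of `α_i` is at least `1` (written
`β = γ + α_i`), there are natural isomorphisms `E_i F_j M ≅ F_j E_i M` and
`E_i F̄_j M ≅ F̄_j E_i M` of `R(β+α_j-α_i)`-modules. -/
theorem Ei_Fj_commute {k : Type} [Field k] {I : Type} [Fintype I]
    [DecidableEq I] (C : CartanDatum k I) (γ : I → ℕ) (i j : I) (hij : i ≠ j)
    (n : ℕ) (hn : ht I γ = n)
    (φγi : bAlg C n γ →ₙₐ[k] bAlg C (n + 1) (addA γ i)) (hφγi : IsUpRb C i φγi)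
    (φγjR : bAlg C n γ →ₙₐ[k] bAlg C (n + 1) (addA γ j)) (hφγjR : IsUpRb C j φγjR)
    (φγjL : bAlg C n γ →ₙₐ[k] bAlg C (n + 1) (addA γ j)) (hφγjL : IsUpLb C j φγjL)
    (φβjR : bAlg C (n + 1) (addA γ i) →ₙₐ[k] bAlg C (n + 2) (addA (addA γ i) j))
    (hφβjR : IsUpRb C j φβjR)
    (φβjL : bAlg C (n + 1) (addA γ i) →ₙₐ[k] bAlg C (n + 2) (addA (addA γ i) j))
    (hφβjL : IsUpLb C j φβjL)
    (ψ : bAlg C (n + 1) (addA γ j) →ₙₐ[k] bAlg C (n + 2) (addA (addA γ i) j))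
    (hψ : IsUpRb C i ψ) :
    -- `E_i F_j ≅ F_j E_i`
    (∃ Φ : ∀ (M : Type) [AddCommGroup M] [Module k M]
        [Module (bAlg C (n + 1) (addA γ i)) M]
        [IsScalarTower k (bAlg C (n + 1) (addA γ i)) M]
        (d1 : EData k M (eDb C (n + 1) (addA γ i) i) φγi)
        (d2 : EData k (OT k (bAlg C (n + 1) (addA γ i))
            (bAlg C (n + 2) (addA (addA γ i) j)) M φβjR)
          (eDb C (n + 2) (addA (addA γ i) j) i) ψ),
        (letI := d1.inst; letI := d1.tower; letI := d2.inst;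
          (↥(eSub k (bAlg C (n + 2) (addA (addA γ i) j))
              (OT k (bAlg C (n + 1) (addA γ i))
                (bAlg C (n + 2) (addA (addA γ i) j)) M φβjR)
              (eDb C (n + 2) (addA (addA γ i) j) i))
            ≃ₗ[bAlg C (n + 1) (addA γ j)]
            (OT k (bAlg C n γ) (bAlg C (n + 1) (addA γ j))
              ↥(eSub k (bAlg C (n + 1) (addA γ i)) M (eDb C (n + 1) (addA γ i) i))
              φγjR))),
      ∀ (M M' : Type) (_ : AddCommGroup M) (_ : Module k M)
        (_ : Module (bAlg C (n + 1) (addA γ i)) M)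
        (_ : IsScalarTower k (bAlg C (n + 1) (addA γ i)) M)
        (_ : AddCommGroup M') (_ : Module k M')
        (_ : Module (bAlg C (n + 1) (addA γ i)) M')
        (_ : IsScalarTower k (bAlg C (n + 1) (addA γ i)) M')
        (d1 : EData k M (eDb C (n + 1) (addA γ i) i) φγi)
        (d2 : EData k (OT k (bAlg C (n + 1) (addA γ i))
            (bAlg C (n + 2) (addA (addA γ i) j)) M φβjR)
          (eDb C (n + 2) (addA (addA γ i) j) i) ψ)
        (d1' : EData k M' (eDb C (n + 1) (addA γ i) i) φγi)
        (d2' : EData k (OT k (bAlg C (n + 1) (addA γ i))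
            (bAlg C (n + 2) (addA (addA γ i) j)) M' φβjR)
          (eDb C (n + 2) (addA (addA γ i) j) i) ψ),
        letI := d1.inst; letI := d1.tower; letI := d2.inst;
        letI := d1'.inst; letI := d1'.tower; letI := d2'.inst;
        ∀ (f : M →ₗ[bAlg C (n + 1) (addA γ i)] M')
          (gF : OT k (bAlg C (n + 1) (addA γ i))
              (bAlg C (n + 2) (addA (addA γ i) j)) M φβjR →ₗ[k]
            OT k (bAlg C (n + 1) (addA γ i))
              (bAlg C (n + 2) (addA (addA γ i) j)) M' φβjR),
          (∀ (b : bAlg C (n + 2) (addA (addA γ i) j)) (m : M),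
            gF (OTmk k (bAlg C (n + 1) (addA γ i))
                (bAlg C (n + 2) (addA (addA γ i) j)) M φβjR (b ⊗ₜ[k] m))
              = OTmk k (bAlg C (n + 1) (addA γ i))
                (bAlg C (n + 2) (addA (addA γ i) j)) M' φβjR (b ⊗ₜ[k] f m)) →
        ∀ (gEF : ↥(eSub k (bAlg C (n + 2) (addA (addA γ i) j))
            (OT k (bAlg C (n + 1) (addA γ i))
              (bAlg C (n + 2) (addA (addA γ i) j)) M φβjR)
            (eDb C (n + 2) (addA (addA γ i) j) i)) →ₗ[k]
            ↥(eSub k (bAlg C (n + 2) (addA (addA γ i) j))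
            (OT k (bAlg C (n + 1) (addA γ i))
              (bAlg C (n + 2) (addA (addA γ i) j)) M' φβjR)
            (eDb C (n + 2) (addA (addA γ i) j) i))),
          (∀ x, (gEF x).val = gF x.val) →
        ∀ (gE : ↥(eSub k (bAlg C (n + 1) (addA γ i)) M (eDb C (n + 1) (addA γ i) i))
            →ₗ[k]
            ↥(eSub k (bAlg C (n + 1) (addA γ i)) M' (eDb C (n + 1) (addA γ i) i))),
          (∀ x, (gE x).val = f x.val) →
        ∀ (gFE : OT k (bAlg C n γ) (bAlg C (n + 1) (addA γ j))
            ↥(eSub k (bAlg C (n + 1) (addA γ i)) M (eDb C (n + 1) (addA γ i) i))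
            φγjR →ₗ[k]
            OT k (bAlg C n γ) (bAlg C (n + 1) (addA γ j))
            ↥(eSub k (bAlg C (n + 1) (addA γ i)) M' (eDb C (n + 1) (addA γ i) i))
            φγjR),
          (∀ (b : bAlg C (n + 1) (addA γ j))
              (x : ↥(eSub k (bAlg C (n + 1) (addA γ i)) M
                (eDb C (n + 1) (addA γ i) i))),
            gFE (OTmk k (bAlg C n γ) (bAlg C (n + 1) (addA γ j))
                ↥(eSub k (bAlg C (n + 1) (addA γ i)) M (eDb C (n + 1) (addA γ i) i))
                φγjR (b ⊗ₜ[k] x))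
              = OTmk k (bAlg C n γ) (bAlg C (n + 1) (addA γ j))
                ↥(eSub k (bAlg C (n + 1) (addA γ i)) M' (eDb C (n + 1) (addA γ i) i))
                φγjR (b ⊗ₜ[k] gE x)) →
          ∀ z, gFE (Φ M d1 d2 z) = Φ M' d1' d2' (gEF z)) ∧
    -- `E_i F̄_j ≅ F̄_j E_i`
    (∃ Φ : ∀ (M : Type) [AddCommGroup M] [Module k M]
        [Module (bAlg C (n + 1) (addA γ i)) M]
        [IsScalarTower k (bAlg C (n + 1) (addA γ i)) M]
        (d1 : EData k M (eDb C (n + 1) (addA γ i) i) φγi)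
        (d2 : EData k (OT k (bAlg C (n + 1) (addA γ i))
            (bAlg C (n + 2) (addA (addA γ i) j)) M φβjL)
          (eDb C (n + 2) (addA (addA γ i) j) i) ψ),
        (letI := d1.inst; letI := d1.tower; letI := d2.inst;
          (↥(eSub k (bAlg C (n + 2) (addA (addA γ i) j))
              (OT k (bAlg C (n + 1) (addA γ i))
                (bAlg C (n + 2) (addA (addA γ i) j)) M φβjL)
              (eDb C (n + 2) (addA (addA γ i) j) i))
            ≃ₗ[bAlg C (n + 1) (addA γ j)]
            (OT k (bAlg C n γ) (bAlg C (n + 1) (addA γ j))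
              ↥(eSub k (bAlg C (n + 1) (addA γ i)) M (eDb C (n + 1) (addA γ i) i))
              φγjL))),
      ∀ (M M' : Type) (_ : AddCommGroup M) (_ : Module k M)
        (_ : Module (bAlg C (n + 1) (addA γ i)) M)
        (_ : IsScalarTower k (bAlg C (n + 1) (addA γ i)) M)
        (_ : AddCommGroup M') (_ : Module k M')
        (_ : Module (bAlg C (n + 1) (addA γ i)) M')
        (_ : IsScalarTower k (bAlg C (n + 1) (addA γ i)) M')
        (d1 : EData k M (eDb C (n + 1) (addA γ i) i) φγi)
        (d2 : EData k (OT k (bAlg C (n + 1) (addA γ i))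
            (bAlg C (n + 2) (addA (addA γ i) j)) M φβjL)
          (eDb C (n + 2) (addA (addA γ i) j) i) ψ)
        (d1' : EData k M' (eDb C (n + 1) (addA γ i) i) φγi)
        (d2' : EData k (OT k (bAlg C (n + 1) (addA γ i))
            (bAlg C (n + 2) (addA (addA γ i) j)) M' φβjL)
          (eDb C (n + 2) (addA (addA γ i) j) i) ψ),
        letI := d1.inst; letI := d1.tower; letI := d2.inst;
        letI := d1'.inst; letI := d1'.tower; letI := d2'.inst;
        ∀ (f : M →ₗ[bAlg C (n + 1) (addA γ i)] M')
          (gF : OT k (bAlg C (n + 1) (addA γ i))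
              (bAlg C (n + 2) (addA (addA γ i) j)) M φβjL →ₗ[k]
            OT k (bAlg C (n + 1) (addA γ i))
              (bAlg C (n + 2) (addA (addA γ i) j)) M' φβjL),
          (∀ (b : bAlg C (n + 2) (addA (addA γ i) j)) (m : M),
            gF (OTmk k (bAlg C (n + 1) (addA γ i))
                (bAlg C (n + 2) (addA (addA γ i) j)) M φβjL (b ⊗ₜ[k] m))
              = OTmk k (bAlg C (n + 1) (addA γ i))
                (bAlg C (n + 2) (addA (addA γ i) j)) M' φβjL (b ⊗ₜ[k] f m)) →
        ∀ (gEF : ↥(eSub k (bAlg C (n + 2) (addA (addA γ i) j))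
            (OT k (bAlg C (n + 1) (addA γ i))
              (bAlg C (n + 2) (addA (addA γ i) j)) M φβjL)
            (eDb C (n + 2) (addA (addA γ i) j) i)) →ₗ[k]
            ↥(eSub k (bAlg C (n + 2) (addA (addA γ i) j))
            (OT k (bAlg C (n + 1) (addA γ i))
              (bAlg C (n + 2) (addA (addA γ i) j)) M' φβjL)
            (eDb C (n + 2) (addA (addA γ i) j) i))),
          (∀ x, (gEF x).val = gF x.val) →
        ∀ (gE : ↥(eSub k (bAlg C (n + 1) (addA γ i)) M (eDb C (n + 1) (addA γ i) i))
            →ₗ[k]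
            ↥(eSub k (bAlg C (n + 1) (addA γ i)) M' (eDb C (n + 1) (addA γ i) i))),
          (∀ x, (gE x).val = f x.val) →
        ∀ (gFE : OT k (bAlg C n γ) (bAlg C (n + 1) (addA γ j))
            ↥(eSub k (bAlg C (n + 1) (addA γ i)) M (eDb C (n + 1) (addA γ i) i))
            φγjL →ₗ[k]
            OT k (bAlg C n γ) (bAlg C (n + 1) (addA γ j))
            ↥(eSub k (bAlg C (n + 1) (addA γ i)) M' (eDb C (n + 1) (addA γ i) i))
            φγjL),
          (∀ (b : bAlg C (n + 1) (addA γ j))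
              (x : ↥(eSub k (bAlg C (n + 1) (addA γ i)) M
                (eDb C (n + 1) (addA γ i) i))),
            gFE (OTmk k (bAlg C n γ) (bAlg C (n + 1) (addA γ j))
                ↥(eSub k (bAlg C (n + 1) (addA γ i)) M (eDb C (n + 1) (addA γ i) i))
                φγjL (b ⊗ₜ[k] x))
              = OTmk k (bAlg C n γ) (bAlg C (n + 1) (addA γ j))
                ↥(eSub k (bAlg C (n + 1) (addA γ i)) M' (eDb C (n + 1) (addA γ i) i))
                φγjL (b ⊗ₜ[k] gE x)) →
          ∀ z, gFE (Φ M d1 d2 z) = Φ M' d1' d2' (gEF z)) := by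
  rw [eDb_eq_toB_lastIdem, eDb_eq_toB_lastIdem]
  have h₀ := hφγi.isInducedBy rfl
  have hg := hψ.isInducedBy (addA_right_comm γ i j)
  exact ⟨((isCommutationDatum_appendRightHom C n hij).of_isInducedBy (hφγjR.isInducedBy rfl) h₀
      (hφβjR.isInducedBy rfl) hg).exists_natural_equiv,
    ((isCommutationDatum_appendLeftHom C n hij).of_isInducedBy hφγjL.isInducedBy h₀
      hφβjL.isInducedBy hg).exists_natural_equiv⟩
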